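/- Let d ≥ 2, 2 ≤ k ≤ d, and let E ⊂ ℝ^d be a compact set. If the Hausdorff dimension of E is greater than dk/(k+1), then the (k(k+1)/2 − 1)-dimensional Lebesgue measure of S_k(E) is positive. -/

import Mathlib

/-!
Let `s` lie between `d * k / (k + 1)` and the dimension of `E`, and let `μ` be a Frostman measure of
exponent `s` on `E`. For a matrix `A` let `ν_A` be the law of `x - A y` with `x, y` independent of
law `μ`. Averaged over a `δ`-neighbourhood of the similarities, `|μ̂(Aᵀ ξ)|²` decays like
`|ξ| ^ (-s)`, just as the energy of `μ` does. Cutting `ν_A` into dyadic frequency pieces by means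
of Gaussians, the resulting `L²` bound and the trivial sup bound for each piece sum, exactly when
`s * (k + 1) > d * k`, to a bound on the average of `‖ν_A‖ ^ (k + 1)` in `L^(k + 1)`.

Two `(d + 1)`-tuples whose similarity classes are `δ`-close are carried onto each other, up to
`O(δ)`, by all `(A, z)` in a `δ`-ball around some similarity `y ↦ A y + z`, that is, by a set of
affine maps of volume about `δ ^ (d * (d + 1))`. If the first `k + 1` vertices have law `μ` and the
remaining `d - k` are spread uniformly over small balls, the pairs matched by `(A, z)` have measure
at most a constant times `δ ^ (d * (d + 1)) * ν_A(z) ^ (k + 1)`. The similarities have codimension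
`D` in the affine maps, where `D` is the dimension of the space of similarity classes. Integrating
over their `δ`-neighbourhood shows that the law of the similarity class gives balls of radius `δ`
mass `O(δ ^ D)` on average, so it cannot live on a null set. Forgetting the last `d - k` vertices is
a linear projection, which preserves positivity of the measure.
-/

open MeasureTheory Metric Set Topology
open scoped ENNReal

noncomputable section

/-- `ℝ^d` as Euclidean space. -/
abbrev Pt (d : ℕ) := EuclideanSpace ℝ (Fin d)

/-- The index set of pairs `i < j` in `{1, …, k+1}` with `(i,j) ≠ (1,2)`;
it has `k(k+1)/2 - 1` elements. -/
abbrev PairIdx' (k : ℕ) : Type :=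
  {p : Fin (k+1) × Fin (k+1) // p.1 < p.2 ∧ p ≠ ((0 : Fin (k+1)), (1 : Fin (k+1)))}

/-- The map sending a `(k+1)`-tuple of points to the vector of its pairwise distances
normalized by the distance between the first two points (local coordinates for
similarity classes). -/
def simMap (d k : ℕ) (x : Fin (k+1) → Pt d) : PairIdx' k → ℝ :=
  fun p => dist (x p.1.1) (x p.1.2) / dist (x 0) (x 1)

/-- A `(k+1)`-tuple is nondegenerate if `x^2 - x^1, …, x^{k+1} - x^1` are linearly
independent. -/
def Nondeg (d k : ℕ) (x : Fin (k+1) → Pt d) : Prop :=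
  LinearIndependent ℝ (fun i : Fin k => x i.succ - x 0)

/-- `S_k(E)`: the set of similarity classes of nondegenerate `k`-simplices with vertices in `E`,
realized in local coordinates as a subset of `ℝ^{k(k+1)/2 - 1}`. -/
def Sconf (d k : ℕ) (E : Set (Pt d)) : Set (PairIdx' k → ℝ) :=
  simMap d k '' {x | (∀ i, x i ∈ E) ∧ Nondeg d k x}

section MassDistribution

variable {ι : Type*} (par : ι → ι)

lemma exists_mass_of_le_tsum_fiber (h : ℕ → ι → ℝ≥0∞)
    (h_fin : ∀ n p, ∑' q : {q // par q = p}, h (n + 1) q ≠ ∞)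
    (h_le : ∀ n p, h n p ≤ ∑' q : {q // par q = p}, h (n + 1) q) :
    ∃ m : ℕ → ι → ℝ≥0∞, m 0 = h 0 ∧ (∀ n q, m n q ≤ h n q) ∧
      ∀ n p, ∑' q : {q // par q = p}, m (n + 1) q = m n p := by
  let m : ℕ → ι → ℝ≥0∞ := fun n => Nat.rec (h 0)
    (fun n f q => f (par q) * h (n + 1) q / ∑' q' : {q' // par q' = par q}, h (n + 1) q') n
  have m_succ : ∀ n q, m (n + 1) q =
    m n (par q) * h (n + 1) q / ∑' q' : {q' // par q' = par q}, h (n + 1) q' := fun n q => rfl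
  have m_le : ∀ n q, m n q ≤ h n q := by
    intro n
    induction n with
    | zero => exact fun q => le_rfl
    | succ n ih =>
      intro q
      rw [m_succ]
      refine ENNReal.div_le_of_le_mul ?_
      rw [mul_comm]
      gcongr
      exact (ih _).trans (h_le _ _)
  refine ⟨m, rfl, m_le, fun n p => ?_⟩
  have m_child : ∀ q : {q // par q = p}, m (n + 1) q =
      m n p * (∑' q' : {q' // par q' = p}, h (n + 1) q')⁻¹ * h (n + 1) q := by
    rintro ⟨q, rfl⟩
    rw [m_succ, div_eq_mul_inv]
    ring
  simp_rw [m_child]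
  rw [ENNReal.tsum_mul_left]
  by_cases h0 : ∑' q' : {q' // par q' = p}, h (n + 1) q' = 0
  · have : m n p = 0 := le_antisymm ((m_le n p).trans ((h_le n p).trans h0.le)) bot_le
    simp [this]
  · rw [mul_assoc, ENNReal.inv_mul_cancel h0 (h_fin _ _), mul_one]

lemma tsum_mass_mul_iterate {m : ℕ → ι → ℝ≥0∞}
    (hm : ∀ n p, ∑' q : {q // par q = p}, m (n + 1) q = m n p) (l j : ℕ) (g : ι → ℝ≥0∞) :
    ∑' q, m (l + j) q * g (par^[j] q) = ∑' q, m l q * g q := by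
  induction j generalizing g with
  | zero => rfl
  | succ j ih =>
    rw [← ih g, ← (Equiv.sigmaFiberEquiv par).tsum_eq, ENNReal.tsum_sigma']
    congr 1
    ext p
    rw [← hm (l + j) p, ← ENNReal.tsum_mul_right]
    congr 1
    ext ⟨q, rfl⟩
    simp [Equiv.sigmaFiberEquiv, Function.iterate_succ_apply, add_assoc]

lemma exists_pointMasses_of_mass {X : Type*} [Nonempty X] [MeasurableSpace X]
    {cell : ℕ → X → ι} (h_cell : ∀ l j x, par^[j] (cell (l + j) x) = cell l x)
    (h_meas : ∀ n p, MeasurableSet {x | cell n x = p}) {m : ℕ → ι → ℝ≥0∞}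
    (h_supp : ∀ n q, q ∉ range (cell n) → m n q = 0) (h_one : ∑' q, m 0 q = 1)
    (hm : ∀ n p, ∑' q : {q // par q = p}, m (n + 1) q = m n p) (n : ℕ) :
    ∃ ν : Measure X, IsProbabilityMeasure ν ∧ ∀ l ≤ n, ∀ p, ν {x | cell l x = p} = m l p := by
  classical
  have h_pt : ∀ q, ∃ x, q ∈ range (cell n) → cell n x = q := fun q => by
    by_cases hq : q ∈ range (cell n)
    · exact ⟨hq.choose, fun _ => hq.choose_spec⟩
    · exact ⟨Classical.arbitrary X, fun h => absurd h hq⟩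
  choose pt h_pt using h_pt
  refine ⟨Measure.sum fun q => m n q • Measure.dirac (pt q), ⟨?_⟩, fun l hl p => ?_⟩
  · rw [Measure.sum_apply _ .univ]
    simpa [h_one] using tsum_mass_mul_iterate par hm 0 n fun _ => 1
  obtain ⟨j, rfl⟩ := Nat.exists_eq_add_of_le hl
  rw [Measure.sum_apply _ (h_meas l p)]
  calc ∑' q, (m (l + j) q • Measure.dirac (pt q)) {x | cell l x = p}
      = ∑' q, m (l + j) q * (if par^[j] q = p then 1 else 0) := by
        refine tsum_congr fun q => ?_
        by_cases hq : q ∈ range (cell (l + j))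
        · simp [Measure.dirac_apply' _ (h_meas l p), indicator_apply, ← h_cell l j (pt q),
            h_pt q hq]
        · simp [h_supp _ q hq]
    _ = ∑' q, m l q * (if q = p then 1 else 0) :=
        tsum_mass_mul_iterate par hm l j fun q => if q = p then 1 else 0
    _ = m l p := by simp

lemma exists_isProbabilityMeasure_le_sum_mass {X : Type*} [Nonempty X] [TopologicalSpace X]
    [CompactSpace X] [TopologicalSpace.MetrizableSpace X] [MeasurableSpace X] [BorelSpace X]
    {cell : ℕ → X → ι} (h_cell : ∀ l j x, par^[j] (cell (l + j) x) = cell l x)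
    (h_meas : ∀ n p, MeasurableSet {x | cell n x = p}) {m : ℕ → ι → ℝ≥0∞}
    (h_supp : ∀ n q, q ∉ range (cell n) → m n q = 0) (h_one : ∑' q, m 0 q = 1)
    (hm : ∀ n p, ∑' q : {q // par q = p}, m (n + 1) q = m n p) :
    ∃ ρ : Measure X, IsProbabilityMeasure ρ ∧ ∀ (U : Set X) (l : ℕ) (S : Finset ι), IsOpen U →
      U ⊆ ⋃ p ∈ S, {x | cell l x = p} → ρ U ≤ ∑ p ∈ S, m l p := by
  choose ν hν hν_cell using exists_pointMasses_of_mass par h_cell h_meas h_supp h_one hm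
  let P : ℕ → ProbabilityMeasure X := fun n => ⟨ν n, hν n⟩
  obtain ⟨ρ, -, φ, hφ, h_lim⟩ := isCompact_univ.tendsto_subseq fun n => mem_univ (P n)
  refine ⟨ρ, inferInstance, fun U l S hU hUS => ?_⟩
  refine (ProbabilityMeasure.le_liminf_measure_open_of_tendsto h_lim hU).trans
    (Filter.liminf_le_of_frequently_le' (Filter.Eventually.frequently ?_))
  filter_upwards [Filter.eventually_ge_atTop l] with n hn
  calc ν (φ n) U ≤ ν (φ n) (⋃ p ∈ S, {x | cell l x = p}) := measure_mono hUS
    _ ≤ ∑ p ∈ S, ν (φ n) {x | cell l x = p} := measure_biUnion_finset_le _ _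
    _ = ∑ p ∈ S, m l p :=
      Finset.sum_congr rfl fun p _ => hν_cell (φ n) l (hn.trans hφ.le_apply) p

end MassDistribution

section Dyadic

variable {d : ℕ}

/-- The integer coordinates of the dyadic cube of side `2⁻ⁿ` containing `x`. -/
def dyadicIndex (n : ℕ) (x : Pt d) : Fin d → ℤ := fun i => ⌊(2 : ℝ) ^ n * x i⌋

/-- The index of the dyadic cube of twice the side length containing the cube of index `q`. -/
def dyadicParent (q : Fin d → ℤ) : Fin d → ℤ := fun i => q i / 2

lemma dyadicParent_dyadicIndex (n : ℕ) (x : Pt d) :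
    dyadicParent (dyadicIndex (n + 1) x) = dyadicIndex n x := by
  ext i
  have h : (2 : ℝ) ^ n * x i = 2 ^ (n + 1) * x i / (2 : ℕ) := by
    push_cast
    ring
  rw [dyadicIndex, h, Int.floor_div_natCast]
  rfl

lemma iterate_dyadicParent_dyadicIndex (l j : ℕ) (x : Pt d) :
    dyadicParent^[j] (dyadicIndex (l + j) x) = dyadicIndex l x := by
  induction j with
  | zero => rfl
  | succ j ih => rw [Function.iterate_succ_apply, ← add_assoc, dyadicParent_dyadicIndex, ih]

lemma finite_dyadicParent_fiber (p : Fin d → ℤ) : {q | dyadicParent q = p}.Finite := by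
  refine (finite_Icc (fun i => 2 * p i) fun i => 2 * p i + 1).subset ?_
  rintro q rfl
  constructor <;> intro i <;> simp only [dyadicParent] <;> omega

lemma measurable_dyadicIndex (n : ℕ) : Measurable (dyadicIndex (d := d) n) :=
  measurable_pi_lambda _ fun _ => Int.measurable_floor.comp (by fun_prop)

lemma norm_le_mul_of_forall_abs_le {v : Pt d} {t : ℝ} (h : ∀ i, |v i| ≤ t) :
    ‖v‖ ≤ d * t := by
  calc ‖v‖ = ‖∑ i, v i • EuclideanSpace.basisFun (Fin d) ℝ i‖ := by
        exact congrArg norm ((EuclideanSpace.basisFun (Fin d) ℝ).sum_repr v).symm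
    _ ≤ ∑ i, |v i| := (norm_sum_le _ _).trans (by simp [norm_smul])
    _ ≤ ∑ _i : Fin d, t := Finset.sum_le_sum fun i _ => h i
    _ = d * t := by simp

lemma dist_le_of_dyadicIndex_eq {n : ℕ} {x y : Pt d} (h : dyadicIndex n x = dyadicIndex n y) :
    dist x y ≤ d * (2 : ℝ)⁻¹ ^ n := by
  rw [dist_eq_norm]
  refine norm_le_mul_of_forall_abs_le fun i => ?_
  have := Int.abs_sub_lt_one_of_floor_eq_floor (congrFun h i)
  rw [← mul_sub, abs_mul, abs_of_pos (by positivity)] at this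
  rw [inv_pow, ← one_div, le_div_iff₀' (by positivity)]
  exact this.le

lemma dyadicIndex_mem_Icc_of_dist_lt {n : ℕ} {x y : Pt d} (h : dist y x < (2 : ℝ)⁻¹ ^ n) :
    dyadicIndex n y ∈ Finset.Icc (dyadicIndex n x - 1) (dyadicIndex n x + 1) := by
  have h_coord : ∀ i, |(2 : ℝ) ^ n * y i - 2 ^ n * x i| < 1 := fun i => by
    rw [← mul_sub, abs_mul, abs_of_pos (by positivity)]
    calc (2 : ℝ) ^ n * |y i - x i| ≤ 2 ^ n * dist y x := by
          rw [dist_eq_norm]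
          gcongr
          exact PiLp.norm_apply_le (y - x) i
      _ < 2 ^ n * (2 : ℝ)⁻¹ ^ n := by gcongr
      _ = 1 := by rw [← mul_pow]; norm_num
  rw [Finset.mem_Icc]
  constructor <;> intro i <;> have := abs_lt.1 (h_coord i)
  · change ⌊(2 : ℝ) ^ n * x i⌋ - 1 ≤ ⌊(2 : ℝ) ^ n * y i⌋
    rw [← Int.floor_sub_one]
    exact Int.floor_mono (by linarith)
  · change ⌊(2 : ℝ) ^ n * y i⌋ ≤ ⌊(2 : ℝ) ^ n * x i⌋ + 1
    rw [← Int.floor_add_one]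
    exact Int.floor_mono (by linarith)

lemma finite_image_dyadicIndex {E : Set (Pt d)} (hE : Bornology.IsBounded E) (n : ℕ) :
    (dyadicIndex n '' E).Finite := by
  obtain ⟨R, hR⟩ := hE.subset_closedBall 0
  refine (finite_Icc (fun _ : Fin d => ⌊-(2 ^ n * R)⌋) (fun _ => ⌊2 ^ n * R⌋)).subset ?_
  rintro _ ⟨x, hx, rfl⟩
  have h_coord : ∀ i, |(2 : ℝ) ^ n * x i| ≤ 2 ^ n * R := fun i => by
    rw [abs_mul, abs_of_pos (by positivity)]
    gcongr
    exact (PiLp.norm_apply_le x i).trans (by simpa using hR hx)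
  exact ⟨fun i => Int.floor_mono (neg_le_of_abs_le (h_coord i)),
    fun i => Int.floor_mono (le_of_abs_le (h_coord i))⟩

end Dyadic

section Frostman

/-- The `s`-dimensional Hausdorff content, an outer measure with the null sets of `μH[s]` whose
values on bounded sets are finite. -/
def hausdorffContent (X : Type*) [PseudoEMetricSpace X] {s : ℝ} (hs : 0 < s) : OuterMeasure X :=
  OuterMeasure.ofFunction (fun t => ediam t ^ s) (by simp [hs])

lemma hausdorffMeasure_eq_zero_of_hausdorffContent_eq_zero {X : Type*} [EMetricSpace X]
    [MeasurableSpace X] [BorelSpace X] {s : ℝ} (hs : 0 < s) {E : Set X}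
    (hE : hausdorffContent X hs E = 0) : μH[s] E = 0 := by
  refine le_antisymm (le_of_forall_pos_le_add fun ε hε => ?_) zero_le
  rw [zero_add, Measure.hausdorffMeasure_apply]
  refine iSup₂_le fun r hr => ?_
  have hr' : 0 < min ε (r ^ s) := by
    refine lt_min hε ?_
    by_cases hrt : r = ∞
    · simp [hrt, hs]
    · exact ENNReal.rpow_pos hr hrt
  rw [hausdorffContent, OuterMeasure.ofFunction_apply] at hE
  rw [← hE, iInf_lt_iff] at hr'
  obtain ⟨t, ht⟩ := hr'
  obtain ⟨hc, ht⟩ := iInf_lt_iff.1 ht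
  refine iInf₂_le_of_le t hc (iInf_le_of_le (fun n => ?_) ?_)
  · exact (ENNReal.rpow_le_rpow_iff hs).1
      ((ENNReal.le_tsum n).trans (ht.le.trans (min_le_right _ _)))
  · refine (ENNReal.tsum_le_tsum fun n => ?_).trans (ht.le.trans (min_le_left _ _))
    exact iSup_le fun _ => le_rfl

lemma hausdorffContent_ne_zero_of_lt_dimH {X : Type*} [EMetricSpace X] {s : ℝ} (hs : 0 < s)
    {E : Set X} (h : ENNReal.ofReal s < dimH E) : hausdorffContent X hs E ≠ 0 := by
  borelize X
  intro h0
  have htop : μH[s] E = ∞ := by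
    have := hausdorffMeasure_of_lt_dimH (s := E) (d := s.toNNReal) h
    rwa [Real.coe_toNNReal s hs.le] at this
  simp [hausdorffMeasure_eq_zero_of_hausdorffContent_eq_zero hs h0] at htop

lemma hausdorffContent_inter_dyadicCube_le {d : ℕ} {s : ℝ} (hs : 0 < s) (E : Set (Pt d)) (n : ℕ)
    (q : Fin d → ℤ) : hausdorffContent (Pt d) hs (E ∩ {x | dyadicIndex n x = q}) ≤
      ENNReal.ofReal ((d * (2 : ℝ)⁻¹ ^ n) ^ s) := by
  refine (OuterMeasure.ofFunction_le _).trans ?_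
  rw [← ENNReal.ofReal_rpow_of_nonneg (by positivity) hs.le]
  refine ENNReal.rpow_le_rpow (ediam_le fun x hx y hy => ?_) hs.le
  rw [edist_dist]
  exact ENNReal.ofReal_le_ofReal (dist_le_of_dyadicIndex_eq (hx.2.trans hy.2.symm))

lemma exists_dyadicMass {d : ℕ} {s : ℝ} (hs : 0 < s) {E : Set (Pt d)}
    (hE : Bornology.IsBounded E) (h : ENNReal.ofReal s < dimH E) :
    ∃ (c : ℝ) (m : ℕ → (Fin d → ℤ) → ℝ≥0∞), 0 ≤ c ∧ ∑' q, m 0 q = 1 ∧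
      (∀ n p, ∑' q : {q // dyadicParent q = p}, m (n + 1) q = m n p) ∧
      (∀ n q, q ∉ dyadicIndex n '' E → m n q = 0) ∧
      ∀ n q, m n q ≤ ENNReal.ofReal (c * ((2 : ℝ)⁻¹ ^ n) ^ s) := by
  set H := hausdorffContent (Pt d) hs
  let cube : ℕ → (Fin d → ℤ) → Set (Pt d) := fun n q => E ∩ {x | dyadicIndex n x = q}
  have cube_le := hausdorffContent_inter_dyadicCube_le hs E
  have cube_empty : ∀ n q, q ∉ dyadicIndex n '' E → H (cube n q) = 0 := fun n q hq => by
    rw [show cube n q = ∅ from eq_empty_of_forall_notMem fun x hx => hq ⟨x, hx⟩, measure_empty]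
  set M := ∑' q, H (cube 0 q) with hM
  have M_ne_top : M ≠ ∞ := by
    rw [hM, tsum_eq_sum (s := (finite_image_dyadicIndex hE 0).toFinset)
      fun q hq => cube_empty 0 q (by simpa only [Finite.mem_toFinset] using hq)]
    exact (ENNReal.sum_lt_top.2 fun q _ => (cube_le 0 q).trans_lt ENNReal.ofReal_lt_top).ne
  have M_ne_zero : M ≠ 0 := fun h0 => hausdorffContent_ne_zero_of_lt_dimH hs h <| by
    refine le_antisymm ((measure_mono fun x hx => ?_).trans
      ((measure_iUnion_le (cube 0)).trans h0.le)) zero_le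
    exact mem_iUnion.2 ⟨_, hx, rfl⟩
  have M_inv_ne_top : M⁻¹ ≠ ∞ := ENNReal.inv_ne_top.2 M_ne_zero
  obtain ⟨m, m_zero, m_le, hm⟩ := exists_mass_of_le_tsum_fiber dyadicParent
    (fun n q => M⁻¹ * H (cube n q)) (fun n p => by
      have : Fintype {q // dyadicParent q = p} := (finite_dyadicParent_fiber p).fintype
      rw [tsum_fintype]
      exact (ENNReal.sum_lt_top.2 fun q _ => ENNReal.mul_lt_top M_inv_ne_top.lt_top
        ((cube_le (n + 1) q.1).trans_lt ENNReal.ofReal_lt_top)).ne) (fun n p => by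
      rw [ENNReal.tsum_mul_left]
      gcongr
      refine (measure_mono fun x hx => ?_).trans (measure_iUnion_le _)
      exact mem_iUnion.2 ⟨⟨dyadicIndex (n + 1) x, by rw [dyadicParent_dyadicIndex]; exact hx.2⟩,
        hx.1, rfl⟩)
  refine ⟨M⁻¹.toReal * d ^ s, m, by positivity, ?_, hm, fun n q hq => ?_, fun n q => ?_⟩
  · rw [m_zero, ENNReal.tsum_mul_left, ENNReal.inv_mul_cancel M_ne_zero M_ne_top]
  · exact le_antisymm ((m_le n q).trans (by simp [cube_empty n q hq])) zero_le
  · refine (m_le n q).trans ((mul_le_mul_right (cube_le n q) _).trans_eq ?_)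
    rw [mul_assoc, ← Real.mul_rpow (by positivity) (by positivity),
      ENNReal.ofReal_mul ENNReal.toReal_nonneg, ENNReal.ofReal_toReal M_inv_ne_top]

/-- The Frostman condition: balls of radius `r` have measure at most `C * r ^ s`. -/
def IsFrostman {X : Type*} [PseudoMetricSpace X] [MeasurableSpace X] (μ : Measure X) (s C : ℝ) :
    Prop :=
  ∀ (x : X) (r : ℝ), 0 < r → μ (ball x r) ≤ ENNReal.ofReal (C * r ^ s)

lemma isFrostman_of_le_one {X : Type*} [PseudoMetricSpace X] [MeasurableSpace X]
    {μ : Measure X} [IsProbabilityMeasure μ] {s C : ℝ} (hs : 0 ≤ s) (hC : 1 ≤ C)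
    (h : ∀ (x : X) (r : ℝ), 0 < r → r ≤ 1 → μ (ball x r) ≤ ENNReal.ofReal (C * r ^ s)) :
    IsFrostman μ s C := by
  intro x r hr
  rcases le_or_gt r 1 with hr1 | hr1
  · exact h x r hr hr1
  · refine prob_le_one.trans (ENNReal.one_le_ofReal.2 ?_)
    exact one_le_mul_of_one_le_of_one_le hC (Real.one_le_rpow hr1.le hs)

lemma exists_isProbabilityMeasure_le_sum_dyadicIndex {d : ℕ} {E : Set (Pt d)} (hE : IsCompact E)
    (hE₀ : E.Nonempty) {m : ℕ → (Fin d → ℤ) → ℝ≥0∞} (m_one : ∑' q, m 0 q = 1)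
    (hm : ∀ n p, ∑' q : {q // dyadicParent q = p}, m (n + 1) q = m n p)
    (m_supp : ∀ n q, q ∉ dyadicIndex n '' E → m n q = 0) :
    ∃ μ : Measure (Pt d), IsProbabilityMeasure μ ∧ μ Eᶜ = 0 ∧ ∀ (U : Set (Pt d)) (l : ℕ)
      (S : Finset (Fin d → ℤ)), IsOpen U → (∀ x ∈ U, dyadicIndex l x ∈ S) →
        μ U ≤ ∑ p ∈ S, m l p := by
  have : CompactSpace E := isCompact_iff_compactSpace.1 hE
  have : Nonempty E := hE₀.to_subtype
  obtain ⟨ρ, hρ, ρ_le⟩ := exists_isProbabilityMeasure_le_sum_mass dyadicParent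
    (cell := fun n (x : E) => dyadicIndex n (x : Pt d))
    (fun l j x => iterate_dyadicParent_dyadicIndex l j (x : Pt d))
    (fun n p => (measurable_dyadicIndex n).comp measurable_subtype_coe (measurableSet_singleton p))
    (fun n q hq => m_supp n q fun ⟨x, hx, hxq⟩ => hq ⟨⟨x, hx⟩, hxq⟩) m_one hm
  refine ⟨ρ.map Subtype.val, Measure.isProbabilityMeasure_map measurable_subtype_coe.aemeasurable,
    ?_, fun U l S hU hUS => ?_⟩
  · rw [Measure.map_apply measurable_subtype_coe hE.measurableSet.compl]
    simp
  · rw [Measure.map_apply measurable_subtype_coe hU.measurableSet]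
    exact ρ_le _ l S (hU.preimage continuous_subtype_val) fun y hy =>
      mem_iUnion₂.2 ⟨_, hUS y hy, rfl⟩

lemma card_Icc_sub_one_add_one {d : ℕ} (p : Fin d → ℤ) :
    (Finset.Icc (p - 1) (p + 1)).card = 3 ^ d := by
  have h : ∀ i, (p i + 1 + 1 - (p i - 1)).toNat = 3 := fun i => by omega
  simp only [Pi.card_Icc, Int.card_Icc, Pi.add_apply, Pi.sub_apply, Pi.one_apply, h,
    Finset.prod_const, Finset.card_univ, Fintype.card_fin]

theorem exists_isFrostman {d : ℕ} {E : Set (Pt d)} (hE : IsCompact E) {s : ℝ} (hs : 0 < s)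
    (h : ENNReal.ofReal s < dimH E) :
    ∃ (μ : Measure (Pt d)) (C : ℝ), IsProbabilityMeasure μ ∧ μ Eᶜ = 0 ∧ 0 < C ∧
      IsFrostman μ s C := by
  obtain ⟨c, m, hc, m_one, hm, m_supp, m_le⟩ := exists_dyadicMass hs hE.isBounded h
  have hE₀ : E.Nonempty := by
    rw [nonempty_iff_ne_empty]
    rintro rfl
    simp at h
  obtain ⟨μ, hμ, hμE, μ_le⟩ :=
    exists_isProbabilityMeasure_le_sum_dyadicIndex hE hE₀ m_one hm m_supp
  refine ⟨μ, 3 ^ d * c * 2 ^ s + 1, hμ, hμE, by positivity,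
    isFrostman_of_le_one hs.le (le_add_of_nonneg_left (by positivity)) fun x r hr hr1 => ?_⟩
  obtain ⟨l, hl, hl'⟩ := exists_nat_pow_near_of_lt_one hr hr1 (y := (2 : ℝ)⁻¹) (by norm_num)
    (by norm_num)
  have h_side : ((2 : ℝ)⁻¹ ^ l) ^ s ≤ 2 ^ s * r ^ s := by
    rw [← Real.mul_rpow (by norm_num) hr.le]
    gcongr
    rw [pow_succ] at hl
    linarith
  calc μ (ball x r) ≤ ∑ p ∈ Finset.Icc (dyadicIndex l x - 1) (dyadicIndex l x + 1), m l p :=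
        μ_le _ l _ isOpen_ball fun y hy =>
          dyadicIndex_mem_Icc_of_dist_lt ((mem_ball.1 hy).trans_le hl')
    _ ≤ ∑ _p ∈ Finset.Icc (dyadicIndex l x - 1) (dyadicIndex l x + 1),
          ENNReal.ofReal (c * ((2 : ℝ)⁻¹ ^ l) ^ s) := Finset.sum_le_sum fun _ _ => m_le l _
    _ = ENNReal.ofReal (3 ^ d * (c * ((2 : ℝ)⁻¹ ^ l) ^ s)) := by
        rw [Finset.sum_const, card_Icc_sub_one_add_one, ← ENNReal.ofReal_nsmul, nsmul_eq_mul,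
          Nat.cast_pow, Nat.cast_ofNat]
    _ ≤ ENNReal.ofReal ((3 ^ d * c * 2 ^ s + 1) * r ^ s) := by
        refine ENNReal.ofReal_le_ofReal ?_
        calc 3 ^ d * (c * ((2 : ℝ)⁻¹ ^ l) ^ s) ≤ 3 ^ d * (c * (2 ^ s * r ^ s)) := by gcongr
          _ ≤ (3 ^ d * c * 2 ^ s + 1) * r ^ s := by linarith [Real.rpow_nonneg hr.le s]

end Frostman

lemma ofReal_exp_neg_eq_lintegral {t : ℝ} (ht : 0 ≤ t) :
    ENNReal.ofReal (Real.exp (-t)) =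
      ∫⁻ l in Ioi 0, (Iio l).indicator (fun _ => ENNReal.ofReal (Real.exp (-l))) t := by
  have h : ∀ l, (Iio l).indicator (fun _ => ENNReal.ofReal (Real.exp (-l))) t =
      (Ioi t).indicator (fun l => ENNReal.ofReal (Real.exp (-l))) l := fun l => by
    simp only [indicator, mem_Iio, mem_Ioi]
  simp_rw [h]
  rw [setLIntegral_indicator measurableSet_Ioi, Ioi_inter_Ioi, max_eq_left ht,
    ← ofReal_integral_eq_lintegral_ofReal (integrableOn_exp_neg_Ioi t)
      (.of_forall fun _ => (Real.exp_pos _).le), integral_exp_neg_Ioi]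

lemma IsFrostman.lintegral_exp_le {X : Type*} [PseudoMetricSpace X] [MeasurableSpace X]
    [OpensMeasurableSpace X] {μ : Measure X} [SFinite μ] {s C : ℝ} (hs : 0 < s) (hC : 0 ≤ C)
    (hμ : IsFrostman μ s C) {a : ℝ} (ha : 0 < a) (x : X) :
    ∫⁻ u, ENNReal.ofReal (Real.exp (-(dist u x ^ 2 / (4 * a)))) ∂μ ≤
      ENNReal.ofReal (C * 2 ^ s * Real.Gamma (s / 2 + 1) * a ^ (s / 2)) := by
  have h_level : ∀ l, 0 < l → {u | dist u x ^ 2 / (4 * a) < l} = ball x (2 * √(a * l)) := by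
    intro l _
    ext u
    rw [mem_ofPred_eq, mem_ball, div_lt_iff₀ (by positivity), show l * (4 * a) = 2 ^ 2 * (a * l) by
      ring, ← Real.lt_sqrt dist_nonneg, Real.sqrt_mul (by positivity),
      Real.sqrt_sq (by positivity)]
  have h_pow : ∀ l, 0 < l → Real.exp (-l) * (C * (2 * √(a * l)) ^ s) =
      C * 2 ^ s * a ^ (s / 2) * (Real.exp (-l) * l ^ (s / 2 + 1 - 1)) := by
    intro l hl
    rw [Real.mul_rpow (by positivity) (by positivity), Real.sqrt_eq_rpow,
      ← Real.rpow_mul (by positivity), Real.mul_rpow (by positivity) (by positivity)]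
    ring_nf
  calc ∫⁻ u, ENNReal.ofReal (Real.exp (-(dist u x ^ 2 / (4 * a)))) ∂μ
      = ∫⁻ l in Ioi 0, ∫⁻ u, {u | dist u x ^ 2 / (4 * a) < l}.indicator
          (fun _ => ENNReal.ofReal (Real.exp (-l))) u ∂μ := by
        rw [lintegral_lintegral_swap]
        · exact lintegral_congr fun u => ofReal_exp_neg_eq_lintegral (by positivity)
        · refine (Measurable.indicator (s := {p : ℝ × X | dist p.2 x ^ 2 / (4 * a) < p.1})
            (f := fun p => ENNReal.ofReal (Real.exp (-p.1))) (by fun_prop)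
            (measurableSet_lt (by fun_prop) (by fun_prop))).aemeasurable
    _ ≤ ∫⁻ l in Ioi 0, ENNReal.ofReal
          (C * 2 ^ s * a ^ (s / 2) * (Real.exp (-l) * l ^ (s / 2 + 1 - 1))) := by
        refine setLIntegral_mono' measurableSet_Ioi fun l (hl : 0 < l) => ?_
        rw [h_level l hl, lintegral_indicator_const measurableSet_ball, ← h_pow l hl,
          ENNReal.ofReal_mul (Real.exp_pos _).le]
        gcongr
        exact hμ x _ (by positivity)
    _ = ENNReal.ofReal (C * 2 ^ s * Real.Gamma (s / 2 + 1) * a ^ (s / 2)) := by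
        rw [← ofReal_integral_eq_lintegral_ofReal
          ((Real.GammaIntegral_convergent (by positivity)).const_mul _), integral_const_mul,
          ← Real.Gamma_eq_integral (by positivity), mul_right_comm]
        filter_upwards [ae_restrict_mem measurableSet_Ioi] with l (hl : 0 < l)
        positivity

section GaussianKernel

variable {V : Type*} [NormedAddCommGroup V] [InnerProductSpace ℝ V]

/-- The Gaussian on the Euclidean space `V`, normalised so that it is the (unnormalised) Fourier
transform of `ξ ↦ exp (-a * ‖ξ‖ ^ 2)`; its integral is therefore `(2 * π) ^ finrank ℝ V`. -/
def gaussKernel (a : ℝ) (x : V) : ℝ :=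
  (Real.pi / a) ^ (Module.finrank ℝ V / 2 : ℝ) * Real.exp (-(‖x‖ ^ 2 / (4 * a)))

lemma gaussKernel_nonneg {a : ℝ} (ha : 0 < a) (x : V) : 0 ≤ gaussKernel a x := by
  unfold gaussKernel
  positivity

@[fun_prop]
lemma continuous_gaussKernel (a : ℝ) : Continuous (gaussKernel a : V → ℝ) := by
  unfold gaussKernel
  fun_prop

lemma gaussKernel_le {a : ℝ} (ha : 0 < a) (x : V) :
    gaussKernel a x ≤ (Real.pi / a) ^ (Module.finrank ℝ V / 2 : ℝ) :=
  mul_le_of_le_one_right (by positivity) (Real.exp_le_one_iff.2 (neg_nonpos.2 (by positivity)))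

lemma gaussKernel_smul {a r : ℝ} (ha : 0 < a) (hr : 0 < r) (x : V) :
    gaussKernel a (r • x) = (r ^ Module.finrank ℝ V)⁻¹ * gaussKernel (a / r ^ 2) x := by
  have h_exp : (r * ‖x‖) ^ 2 / (4 * a) = ‖x‖ ^ 2 / (4 * (a / r ^ 2)) := by field_simp
  have h_const : (Real.pi / (a / r ^ 2)) ^ (Module.finrank ℝ V / 2 : ℝ) =
      r ^ Module.finrank ℝ V * (Real.pi / a) ^ (Module.finrank ℝ V / 2 : ℝ) := by
    rw [show Real.pi / (a / r ^ 2) = r ^ 2 * (Real.pi / a) by field_simp,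
      Real.mul_rpow (by positivity) (by positivity), ← Real.rpow_natCast_mul hr.le,
      ← Real.rpow_natCast]
    congr 2
    push_cast
    ring
  unfold gaussKernel
  rw [norm_smul, Real.norm_of_nonneg hr.le, h_exp, h_const]
  field_simp

lemma gaussKernel_mul_gaussKernel {a b : ℝ} (ha : 0 < a) (hb : 0 < b) (x y : V) :
    gaussKernel a x * gaussKernel b y = gaussKernel (a + b) (x - y) *
      gaussKernel (a * b / (a + b)) ((b / (a + b)) • x + (a / (a + b)) • y) := by
  have h_exp : ‖x‖ ^ 2 / (4 * a) + ‖y‖ ^ 2 / (4 * b) = ‖x - y‖ ^ 2 / (4 * (a + b)) +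
      ‖(b / (a + b)) • x + (a / (a + b)) • y‖ ^ 2 / (4 * (a * b / (a + b))) := by
    rw [norm_sub_sq_real, norm_add_sq_real, norm_smul, norm_smul, inner_smul_left,
      inner_smul_right, Real.norm_of_nonneg (by positivity), Real.norm_of_nonneg (by positivity),
      conj_trivial]
    field_simp
    ring
  have h_const : Real.pi / a * (Real.pi / b) =
      Real.pi / (a + b) * (Real.pi / (a * b / (a + b))) := by field_simp
  unfold gaussKernel
  rw [mul_mul_mul_comm, ← Real.exp_add, ← Real.mul_rpow (by positivity) (by positivity),
    mul_mul_mul_comm, ← Real.exp_add, ← Real.mul_rpow (by positivity) (by positivity), ← neg_add,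
    ← neg_add, h_exp, h_const]

lemma integrable_gaussKernel_comp [MeasurableSpace V] [OpensMeasurableSpace V] {X : Type*}
    [MeasurableSpace X] {ν : Measure X} [IsFiniteMeasure ν] {a : ℝ} (ha : 0 < a) {g : X → V}
    (hg : Measurable g) : Integrable (fun w => gaussKernel a (g w)) ν :=
  .of_bound ((continuous_gaussKernel a).measurable.comp hg).aestronglyMeasurable _
    (.of_forall fun _ => (Real.norm_of_nonneg (gaussKernel_nonneg ha _)).trans_le
      (gaussKernel_le ha _))

variable [MeasurableSpace V]

/-- The density of the convolution of (the reflection of) a measure `ν` with a Gaussian. -/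
def gaussSmoothing (ν : Measure V) (a : ℝ) (z : V) : ℝ := ∫ w, gaussKernel a (w - z) ∂ν

lemma gaussSmoothing_mul_gaussSmoothing (ν : Measure V) [SFinite ν] (a b : ℝ) (z : V) :
    gaussSmoothing ν a z * gaussSmoothing ν b z =
      ∫ p : V × V, gaussKernel a (p.1 - z) * gaussKernel b (p.2 - z) ∂(ν.prod ν) :=
  (integral_prod_mul (fun w => gaussKernel a (w - z)) fun w => gaussKernel b (w - z)).symm

lemma integral_cexp_inner_sub (ν : Measure V) [SFinite ν] (ξ : V) :
    ∫ p : V × V, Complex.exp (inner ℝ (p.1 - p.2) ξ * Complex.I) ∂(ν.prod ν) =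
      (‖charFun ν ξ‖ ^ 2 : ℝ) := by
  have h_exp : ∀ p : V × V, Complex.exp (inner ℝ (p.1 - p.2) ξ * Complex.I) =
      Complex.exp (inner ℝ p.1 ξ * Complex.I) * Complex.exp (inner ℝ p.2 (-ξ) * Complex.I) := by
    intro p
    rw [← Complex.exp_add, inner_sub_left, inner_neg_right]
    push_cast
    ring_nf
  simp_rw [h_exp]
  rw [integral_prod_mul (fun x : V => Complex.exp (inner ℝ x ξ * Complex.I))
      (fun x : V => Complex.exp (inner ℝ x (-ξ) * Complex.I)),
    ← charFun_apply, ← charFun_apply, charFun_neg, Complex.mul_conj, Complex.normSq_eq_norm_sq]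

variable [FiniteDimensional ℝ V] [BorelSpace V]

lemma integral_exp_neg_mul_sq_norm_mul_cexp_inner {a : ℝ} (ha : 0 < a) (x : V) :
    ∫ ξ : V, (Real.exp (-(a * ‖ξ‖ ^ 2)) : ℂ) * Complex.exp (inner ℝ x ξ * Complex.I) =
      gaussKernel a x := by
  have h := GaussianFourier.integral_cexp_neg_mul_sq_norm_add (V := V) (b := a) (by simpa using ha)
    Complex.I x
  have h_exp : ∀ ξ : V, (Real.exp (-(a * ‖ξ‖ ^ 2)) : ℂ) * Complex.exp (inner ℝ x ξ * Complex.I) =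
      Complex.exp (-a * ‖ξ‖ ^ 2 + Complex.I * inner ℝ x ξ) := fun ξ => by
    rw [Complex.ofReal_exp, ← Complex.exp_add]
    push_cast
    ring_nf
  simp_rw [h_exp, h, gaussKernel]
  push_cast [Complex.ofReal_cpow (show 0 ≤ Real.pi / a by positivity)]
  rw [Complex.I_sq]
  ring_nf

lemma integrable_exp_neg_mul_sq_norm {a : ℝ} (ha : 0 < a) :
    Integrable fun v : V => Real.exp (-(a * ‖v‖ ^ 2)) := by
  have h := GaussianFourier.integral_rexp_neg_mul_sq_norm (V := V) ha
  simp_rw [neg_mul] at h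
  exact .of_integral_ne_zero (h ▸ by positivity)

lemma integrable_gaussKernel {a : ℝ} (ha : 0 < a) : Integrable (gaussKernel a : V → ℝ) := by
  refine ((integrable_exp_neg_mul_sq_norm (a := 1 / (4 * a)) (by positivity)).const_mul
    ((Real.pi / a) ^ (Module.finrank ℝ V / 2 : ℝ))).congr (.of_forall fun v => ?_)
  simp only [gaussKernel, one_div_mul_eq_div]

lemma integral_gaussKernel {a : ℝ} (ha : 0 < a) :
    ∫ x : V, gaussKernel a x = (2 * Real.pi) ^ Module.finrank ℝ V := by
  have h := GaussianFourier.integral_rexp_neg_mul_sq_norm (V := V) (b := 1 / (4 * a))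
    (by positivity)
  simp_rw [neg_mul, one_div_mul_eq_div] at h
  simp_rw [gaussKernel]
  rw [integral_const_mul, h, ← Real.mul_rpow (by positivity) (by positivity),
    show Real.pi / a * (Real.pi / (1 / (4 * a))) = (2 * Real.pi) ^ 2 by field_simp; ring,
    ← Real.rpow_natCast_mul (by positivity), ← Real.rpow_natCast]
  congr 1
  push_cast
  ring

lemma integrable_gaussKernel_mul_gaussKernel {a b : ℝ} (ha : 0 < a) (hb : 0 < b) (x y : V) :
    Integrable fun z => gaussKernel a (x - z) * gaussKernel b (y - z) := by
  refine ((integrable_gaussKernel hb).comp_sub_left y).bdd_mul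
    (c := (Real.pi / a) ^ (Module.finrank ℝ V / 2 : ℝ)) (by fun_prop) (.of_forall fun z => ?_)
  exact (Real.norm_of_nonneg (gaussKernel_nonneg ha _)).trans_le (gaussKernel_le ha _)

lemma integral_gaussKernel_mul_gaussKernel {a b : ℝ} (ha : 0 < a) (hb : 0 < b) (x y : V) :
    ∫ z, gaussKernel a (x - z) * gaussKernel b (y - z) =
      (2 * Real.pi) ^ Module.finrank ℝ V * gaussKernel (a + b) (x - y) := by
  have h_center : ∀ z, (b / (a + b)) • (x - z) + (a / (a + b)) • (y - z) =
      (b / (a + b)) • x + (a / (a + b)) • y - z := fun z => by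
    have h_one : b / (a + b) + a / (a + b) = 1 := by field_simp; ring
    calc _ = (b / (a + b)) • x + (a / (a + b)) • y - (b / (a + b) + a / (a + b)) • z := by module
      _ = _ := by rw [h_one, one_smul]
  simp_rw [gaussKernel_mul_gaussKernel ha hb, sub_sub_sub_cancel_right, h_center]
  rw [integral_const_mul, integral_sub_left_eq_self (gaussKernel _),
    integral_gaussKernel (by positivity), mul_comm]

lemma integrable_exp_neg_mul_sq_norm_mul_norm_charFun {a : ℝ} (ha : 0 < a) (ν : Measure V)
    [IsProbabilityMeasure ν] :
    Integrable fun ξ : V => Real.exp (-(a * ‖ξ‖ ^ 2)) * ‖charFun ν ξ‖ ^ 2 := by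
  refine (integrable_exp_neg_mul_sq_norm ha).mul_bdd (c := 1)
    (measurable_charFun.norm.pow_const 2).aestronglyMeasurable (.of_forall fun ξ => ?_)
  rw [Real.norm_of_nonneg (by positivity)]
  exact pow_le_one₀ (norm_nonneg _) (norm_charFun_le_one ξ)

lemma integral_gaussKernel_sub {a : ℝ} (ha : 0 < a) (ν : Measure V) [IsProbabilityMeasure ν] :
    ∫ p : V × V, gaussKernel a (p.1 - p.2) ∂(ν.prod ν) =
      ∫ ξ, Real.exp (-(a * ‖ξ‖ ^ 2)) * ‖charFun ν ξ‖ ^ 2 := by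
  have h_int : Integrable (Function.uncurry fun (p : V × V) (ξ : V) =>
      (Real.exp (-(a * ‖ξ‖ ^ 2)) : ℂ) * Complex.exp (inner ℝ (p.1 - p.2) ξ * Complex.I))
      ((ν.prod ν).prod volume) := by
    refine ((integrable_const (μ := ν.prod ν) (1 : ℝ)).mul_prod
      (integrable_exp_neg_mul_sq_norm (V := V) ha)).mono'
      (Continuous.aestronglyMeasurable (by unfold Function.uncurry; fun_prop))
      (.of_forall fun q => ?_)
    simp only [Function.uncurry]
    rw [norm_mul, Complex.norm_exp_ofReal_mul_I, mul_one, one_mul, Complex.norm_real,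
      Real.norm_of_nonneg (Real.exp_pos _).le]
  apply Complex.ofReal_injective
  rw [← integral_complex_ofReal, ← integral_complex_ofReal]
  simp_rw [← integral_exp_neg_mul_sq_norm_mul_cexp_inner ha]
  rw [integral_integral_swap h_int]
  simp_rw [integral_const_mul, integral_cexp_inner_sub, Complex.ofReal_mul]

lemma integrable_gaussKernel_mul_gaussKernel_prod {a b : ℝ} (ha : 0 < a) (hb : 0 < b)
    (ν : Measure V) [IsProbabilityMeasure ν] :
    Integrable (Function.uncurry fun (p : V × V) (z : V) =>
      gaussKernel a (p.1 - z) * gaussKernel b (p.2 - z)) ((ν.prod ν).prod volume) := by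
  rw [integrable_prod_iff (Continuous.aestronglyMeasurable (by unfold Function.uncurry; fun_prop))]
  refine ⟨.of_forall fun p => integrable_gaussKernel_mul_gaussKernel ha hb p.1 p.2, ?_⟩
  have h_norm : ∀ p : V × V, ∫ z, ‖gaussKernel a (p.1 - z) * gaussKernel b (p.2 - z)‖ =
      (2 * Real.pi) ^ Module.finrank ℝ V * gaussKernel (a + b) (p.1 - p.2) := fun p => by
    rw [← integral_gaussKernel_mul_gaussKernel ha hb]
    exact integral_congr_ae (.of_forall fun z => Real.norm_of_nonneg
      (mul_nonneg (gaussKernel_nonneg ha _) (gaussKernel_nonneg hb _)))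
  simp_rw [Function.uncurry_apply_pair, h_norm]
  exact (integrable_gaussKernel_comp (by positivity) (by fun_prop)).const_mul _

lemma integrable_gaussSmoothing_mul {a b : ℝ} (ha : 0 < a) (hb : 0 < b) (ν : Measure V)
    [IsProbabilityMeasure ν] :
    Integrable fun z => gaussSmoothing ν a z * gaussSmoothing ν b z := by
  simp_rw [gaussSmoothing_mul_gaussSmoothing]
  exact (integrable_gaussKernel_mul_gaussKernel_prod ha hb ν).integral_prod_right

lemma integral_gaussSmoothing_mul {a b : ℝ} (ha : 0 < a) (hb : 0 < b) (ν : Measure V)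
    [IsProbabilityMeasure ν] :
    ∫ z, gaussSmoothing ν a z * gaussSmoothing ν b z = (2 * Real.pi) ^ Module.finrank ℝ V *
      ∫ ξ, Real.exp (-((a + b) * ‖ξ‖ ^ 2)) * ‖charFun ν ξ‖ ^ 2 := by
  simp_rw [gaussSmoothing_mul_gaussSmoothing]
  rw [← integral_integral_swap (integrable_gaussKernel_mul_gaussKernel_prod ha hb ν)]
  simp_rw [integral_gaussKernel_mul_gaussKernel ha hb]
  rw [integral_const_mul, integral_gaussKernel_sub (by positivity)]

end GaussianKernel

section GaussianMixture

lemma linearCombination_sq {X ι : Type*} (f : ι → X → ℝ) (c : ι →₀ ℝ) :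
    Finsupp.linearCombination ℝ f c ^ 2 =
      ∑ i ∈ c.support, ∑ j ∈ c.support, fun x => c i * c j * (f i x * f j x) := by
  ext x
  simp only [Finsupp.linearCombination_apply, Finsupp.sum, Pi.pow_apply, Finset.sum_apply,
    Pi.smul_apply, smul_eq_mul, sq, Finset.sum_mul_sum]
  exact Finset.sum_congr rfl fun i _ => Finset.sum_congr rfl fun j _ => by ring

variable {X Y : Type*} [MeasurableSpace X] [MeasurableSpace Y] {μ : Measure X} {ν : Measure Y}

lemma integrable_linearCombination_sq {ι : Type*} {f : ι → X → ℝ} {c : ι →₀ ℝ}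
    (hf : ∀ i ∈ c.support, ∀ j ∈ c.support, Integrable (fun x => f i x * f j x) μ) :
    Integrable (Finsupp.linearCombination ℝ f c ^ 2) μ := by
  rw [linearCombination_sq]
  exact integrable_finsetSum' _ fun i hi => integrable_finsetSum' _ fun j hj =>
    (hf i hi j hj).const_mul _

lemma integral_linearCombination_sq {ι : Type*} {f : ι → X → ℝ} {c : ι →₀ ℝ}
    (hf : ∀ i ∈ c.support, ∀ j ∈ c.support, Integrable (fun x => f i x * f j x) μ) :
    ∫ x, (Finsupp.linearCombination ℝ f c ^ 2) x ∂μ =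
      ∑ i ∈ c.support, ∑ j ∈ c.support, c i * c j * ∫ x, f i x * f j x ∂μ := by
  simp_rw [linearCombination_sq, Finset.sum_apply]
  rw [integral_finsetSum _ fun i hi => integrable_finsetSum _ fun j hj =>
    (hf i hi j hj).const_mul _]
  refine Finset.sum_congr rfl fun i hi => ?_
  rw [integral_finsetSum _ fun j hj => (hf i hi j hj).const_mul _]
  simp_rw [integral_const_mul]

lemma lintegral_linearCombination_sq_eq {ι : Type*} {f : ι → X → ℝ} {g : ι → Y → ℝ} {c : ι →₀ ℝ}
    {K : ℝ} (hK : 0 ≤ K)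
    (hf : ∀ i ∈ c.support, ∀ j ∈ c.support, Integrable (fun x => f i x * f j x) μ)
    (hg : ∀ i ∈ c.support, ∀ j ∈ c.support, Integrable (fun y => g i y * g j y) ν)
    (hfg : ∀ i ∈ c.support, ∀ j ∈ c.support,
      ∫ x, f i x * f j x ∂μ = K * ∫ y, g i y * g j y ∂ν) :
    ∫⁻ x, ENNReal.ofReal ((Finsupp.linearCombination ℝ f c ^ 2) x) ∂μ =
      ENNReal.ofReal K * ∫⁻ y, ENNReal.ofReal ((Finsupp.linearCombination ℝ g c ^ 2) y) ∂ν := by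
  rw [← ofReal_integral_eq_lintegral_ofReal (integrable_linearCombination_sq hf)
      (.of_forall fun x => sq_nonneg _),
    ← ofReal_integral_eq_lintegral_ofReal (integrable_linearCombination_sq hg)
      (.of_forall fun y => sq_nonneg _), ← ENNReal.ofReal_mul hK,
    integral_linearCombination_sq hf, integral_linearCombination_sq hg]
  simp_rw [Finset.mul_sum]
  congr 1
  refine Finset.sum_congr rfl fun i hi => Finset.sum_congr rfl fun j hj => ?_
  rw [hfg i hi j hj]
  ring

/-- The Laplace transform of the finitely supported signed measure on `ℝ` with weights `c`: as
a function of `‖ξ‖ ^ 2` it is the Fourier multiplier of the mixture of Gaussian kernels with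
weights `c`. -/
def laplaceSum (c : ℝ →₀ ℝ) (x : ℝ) : ℝ := c.sum fun a w => w * Real.exp (-(a * x))

variable {V : Type*} [NormedAddCommGroup V] [InnerProductSpace ℝ V] [FiniteDimensional ℝ V]
  [MeasurableSpace V] [BorelSpace V]

-- Plancherel's identity, obtained from the Gaussian energies without Fourier inversion.
lemma lintegral_linearCombination_gaussSmoothing_sq (ν : Measure V) [IsProbabilityMeasure ν]
    {c : ℝ →₀ ℝ} (hc : ∀ a ∈ c.support, 0 < a) :
    ∫⁻ z, ENNReal.ofReal (Finsupp.linearCombination ℝ (gaussSmoothing ν) c z ^ 2) =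
      ENNReal.ofReal ((2 * Real.pi) ^ Module.finrank ℝ V) *
        ∫⁻ ξ, ENNReal.ofReal (laplaceSum c (‖ξ‖ ^ 2) ^ 2 * ‖charFun ν ξ‖ ^ 2) := by
  set g : ℝ → V → ℝ := fun a ξ => Real.exp (-(a * ‖ξ‖ ^ 2)) * ‖charFun ν ξ‖ with g_def
  have h_mul : ∀ a b ξ, g a ξ * g b ξ =
      Real.exp (-((a + b) * ‖ξ‖ ^ 2)) * ‖charFun ν ξ‖ ^ 2 := fun a b ξ => by
    rw [g_def, mul_mul_mul_comm, ← Real.exp_add, ← sq]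
    ring_nf
  have h_symbol : ∀ ξ, laplaceSum c (‖ξ‖ ^ 2) ^ 2 * ‖charFun ν ξ‖ ^ 2 =
      (Finsupp.linearCombination ℝ g c ^ 2) ξ := fun ξ => by
    simp only [laplaceSum, Finsupp.linearCombination_apply, Finsupp.sum, Pi.pow_apply,
      Finset.sum_apply, Pi.smul_apply, smul_eq_mul, g_def, ← mul_assoc, ← Finset.sum_mul, mul_pow]
  simp_rw [h_symbol]
  refine lintegral_linearCombination_sq_eq (by positivity)
    (fun a ha b hb => integrable_gaussSmoothing_mul (hc a ha) (hc b hb) ν)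
    (fun a ha b hb => ?_) (fun a ha b hb => ?_)
  · simp_rw [h_mul]
    exact integrable_exp_neg_mul_sq_norm_mul_norm_charFun (add_pos (hc a ha) (hc b hb)) ν
  · simp_rw [h_mul]
    exact integral_gaussSmoothing_mul (hc a ha) (hc b hb) ν

end GaussianMixture

section GaussianPotential

variable {V : Type*} [NormedAddCommGroup V] [InnerProductSpace ℝ V] [MeasurableSpace V]

/-- The potentials of `μ` with respect to Gaussians of width `√a` are `O(a ^ ((s - d) / 2))`,
`d = finrank ℝ V`: the smooth version of the Frostman condition of exponent `s`. -/
def HasGaussianPotential (μ : Measure V) (s C : ℝ) : Prop :=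
  ∀ ⦃a : ℝ⦄, 0 < a → ∀ x, ∫⁻ u, ENNReal.ofReal (gaussKernel a (x - u)) ∂μ ≤
    ENNReal.ofReal (C * a ^ ((s - Module.finrank ℝ V) / 2))

lemma IsFrostman.hasGaussianPotential [OpensMeasurableSpace V] {μ : Measure V} [SFinite μ]
    {s C : ℝ} (hs : 0 < s) (hC : 0 ≤ C) (hμ : IsFrostman μ s C) :
    HasGaussianPotential μ s (Real.pi ^ (Module.finrank ℝ V / 2 : ℝ) *
      (C * 2 ^ s * Real.Gamma (s / 2 + 1))) := by
  intro a ha x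
  simp_rw [gaussKernel, ← dist_eq_norm, dist_comm x,
    ENNReal.ofReal_mul (show 0 ≤ (Real.pi / a) ^ (Module.finrank ℝ V / 2 : ℝ) by positivity)]
  rw [lintegral_const_mul' _ _ ENNReal.ofReal_ne_top]
  calc _ ≤ ENNReal.ofReal ((Real.pi / a) ^ (Module.finrank ℝ V / 2 : ℝ)) *
        ENNReal.ofReal (C * 2 ^ s * Real.Gamma (s / 2 + 1) * a ^ (s / 2)) := by
        gcongr
        exact hμ.lintegral_exp_le hs hC ha x
    _ = _ := by
        rw [← ENNReal.ofReal_mul (by positivity), Real.div_rpow (by positivity) (by positivity),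
          sub_div, Real.rpow_sub ha]
        congr 1
        field_simp

lemma HasGaussianPotential.lintegral_gaussKernel_sub_smul_le {μ : Measure V}
    [IsProbabilityMeasure μ] {s C : ℝ} (hC : 0 ≤ C) (hμ : HasGaussianPotential μ s C) {r : ℝ}
    (hr : 0 < r) (x : V) :
    ∫⁻ u, ENNReal.ofReal (gaussKernel 1 (x - r • u)) ∂μ ≤
      ENNReal.ofReal ((Real.pi ^ (Module.finrank ℝ V / 2 : ℝ) + C) * min 1 (r ^ (-s))) := by
  have h_const : ∫⁻ u, ENNReal.ofReal (gaussKernel 1 (x - r • u)) ∂μ ≤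
      ENNReal.ofReal (Real.pi ^ (Module.finrank ℝ V / 2 : ℝ)) := by
    refine (lintegral_mono fun u =>
      ENNReal.ofReal_le_ofReal (gaussKernel_le one_pos _)).trans_eq ?_
    rw [lintegral_const, measure_univ, mul_one, div_one]
  have h_decay : ∫⁻ u, ENNReal.ofReal (gaussKernel 1 (x - r • u)) ∂μ ≤
      ENNReal.ofReal (C * r ^ (-s)) := by
    have h_scale : ∀ u, x - r • u = r • (r⁻¹ • x - u) := fun u => by
      rw [smul_sub, smul_inv_smul₀ hr.ne']
    have h_pow : (r ^ Module.finrank ℝ V)⁻¹ *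
        (C * (1 / r ^ 2) ^ ((s - Module.finrank ℝ V) / 2)) = C * r ^ (-s) := by
      rw [one_div, ← Real.rpow_natCast r 2, ← Real.rpow_neg hr.le, ← Real.rpow_mul hr.le,
        ← Real.rpow_natCast, ← Real.rpow_neg hr.le, mul_left_comm, ← Real.rpow_add hr]
      congr 2
      push_cast
      ring
    simp_rw [h_scale, gaussKernel_smul one_pos hr,
      ENNReal.ofReal_mul (show 0 ≤ (r ^ Module.finrank ℝ V)⁻¹ by positivity)]
    rw [lintegral_const_mul' _ _ ENNReal.ofReal_ne_top, ← h_pow,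
      ENNReal.ofReal_mul (show 0 ≤ (r ^ Module.finrank ℝ V)⁻¹ by positivity)]
    gcongr
    exact hμ (by positivity) _
  rw [mul_min_of_nonneg _ _ (by positivity), mul_one, ENNReal.ofReal_min]
  refine le_min (h_const.trans ?_) (h_decay.trans ?_)
  · gcongr
    exact le_add_of_nonneg_right hC
  · gcongr
    exact le_add_of_nonneg_left (by positivity)

variable [FiniteDimensional ℝ V] [BorelSpace V]

lemma lintegral_exp_mul_norm_charFun_le {a : ℝ} {B : ℝ≥0∞} (ha : 0 < a) {ν : Measure V}
    [IsProbabilityMeasure ν] (h : ∀ x, ∫⁻ w, ENNReal.ofReal (gaussKernel a (x - w)) ∂ν ≤ B) :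
    ∫⁻ ξ, ENNReal.ofReal (Real.exp (-(a * ‖ξ‖ ^ 2)) * ‖charFun ν ξ‖ ^ 2) ≤ B := by
  rw [← ofReal_integral_eq_lintegral_ofReal (integrable_exp_neg_mul_sq_norm_mul_norm_charFun ha ν)
      (.of_forall fun ξ => by positivity), ← integral_gaussKernel_sub ha,
    ofReal_integral_eq_lintegral_ofReal (integrable_gaussKernel_comp ha (by fun_prop))
      (.of_forall fun p => gaussKernel_nonneg ha _),
    lintegral_prod _ (Continuous.measurable (by fun_prop)).ennreal_ofReal.aemeasurable]
  refine (lintegral_mono h).trans_eq ?_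
  rw [lintegral_const, measure_univ, mul_one]

lemma HasGaussianPotential.lintegral_norm_charFun_smul_le {μ : Measure V} [IsProbabilityMeasure μ]
    {s C : ℝ} (hC : 0 ≤ C) (hμ : HasGaussianPotential μ s C) {r : ℝ} (hr : 0 < r) :
    ∫⁻ η, ENNReal.ofReal (Real.exp (-‖η‖ ^ 2) * ‖charFun μ (r • η)‖ ^ 2) ≤
      ENNReal.ofReal ((Real.pi ^ (Module.finrank ℝ V / 2 : ℝ) + C) * min 1 (r ^ (-s))) := by
  have : IsProbabilityMeasure (μ.map (r • ·)) :=
    Measure.isProbabilityMeasure_map (by fun_prop)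
  suffices h : ∀ x, ∫⁻ w, ENNReal.ofReal (gaussKernel 1 (x - w)) ∂μ.map (r • ·) ≤
      ENNReal.ofReal ((Real.pi ^ (Module.finrank ℝ V / 2 : ℝ) + C) * min 1 (r ^ (-s))) by
    simpa only [one_mul, charFun_map_smul] using lintegral_exp_mul_norm_charFun_le one_pos h
  intro x
  rw [lintegral_map (Continuous.measurable (by fun_prop)).ennreal_ofReal (by fun_prop)]
  exact hμ.lintegral_gaussKernel_sub_smul_le hC hr x

end GaussianPotential

lemma lintegral_pi_prod {n : ℕ} {X : Fin n → Type*} [∀ i, MeasurableSpace (X i)]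
    (μ : ∀ i, Measure (X i)) [∀ i, SigmaFinite (μ i)] {f : ∀ i, X i → ℝ≥0∞}
    (hf : ∀ i, Measurable (f i)) :
    ∫⁻ x, ∏ i, f i (x i) ∂Measure.pi μ = ∏ i, ∫⁻ x, f i x ∂μ i := by
  induction n with
  | zero => simp
  | succ n ih =>
    rw [← (measurePreserving_piFinSuccAbove μ 0).symm.lintegral_comp_emb
      (MeasurableEquiv.measurableEmbedding _), Fin.prod_univ_succ,
      ← ih (fun i => μ (Fin.succ i)) fun i => hf (Fin.succ i)]
    simp_rw [Fin.prod_univ_succ]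
    exact lintegral_prod_mul (μ := μ 0) (ν := .pi fun i => μ (Fin.succ i)) (hf 0).aemeasurable
      (Finset.measurable_prod _ fun i _ =>
        (hf (Fin.succ i)).comp (measurable_pi_apply i)).aemeasurable

lemma lintegral_pi_ball_indicator {d : ℕ} [NeZero d] {V : Type*} [NormedAddCommGroup V]
    [MeasureSpace V] [OpensMeasurableSpace V] [SigmaFinite (volume : Measure V)] (R : ℝ)
    {f : V → ℝ≥0∞} (hf : Measurable f) :
    ∫⁻ c : Fin d → V, (univ.pi fun _ => closedBall 0 R).indicator (fun c => f (c 0)) c =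
      volume (closedBall (0 : V) R) ^ (d - 1) * ∫⁻ y in closedBall 0 R, f y := by
  have h_prod : ∀ c : Fin d → V, (univ.pi fun _ => closedBall 0 R).indicator (fun c => f (c 0)) c =
      ∏ i, (closedBall 0 R).indicator (fun y => if i = 0 then f y else 1) (c i) := by
    intro c
    by_cases hc : c ∈ univ.pi fun _ => closedBall 0 R
    · rw [indicator_of_mem hc, Finset.prod_congr rfl fun i _ => indicator_of_mem (hc i trivial) _,
        Finset.prod_ite_eq' Finset.univ, if_pos (Finset.mem_univ _)]
    · rw [indicator_of_notMem hc]
      obtain ⟨i, hi⟩ : ∃ i, c i ∉ closedBall 0 R := by simpa [mem_univ_pi] using hc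
      exact (Finset.prod_eq_zero (Finset.mem_univ i) (indicator_of_notMem hi _)).symm
  have h_ite : ∀ i : Fin d, Measurable fun y : V => if i = 0 then f y else 1 := fun i => by
    split_ifs <;> fun_prop
  simp_rw [h_prod]
  rw [volume_pi, lintegral_pi_prod _ fun i => (h_ite i).indicator measurableSet_closedBall,
    ← Finset.prod_erase_mul _ _ (Finset.mem_univ (0 : Fin d)), Finset.prod_congr rfl
      (g := fun _ => volume (closedBall (0 : V) R)), Finset.prod_const,
    Finset.card_erase_of_mem (Finset.mem_univ _), Finset.card_univ, Fintype.card_fin,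
    lintegral_indicator measurableSet_closedBall]
  · simp only [if_true]
  · intro i hi
    simp only [Finset.ne_of_mem_erase hi, if_false, lintegral_indicator measurableSet_closedBall,
      setLIntegral_one]

lemma measure_mul_le_mul_lintegral {X Y : Type*} [MeasurableSpace X] [MeasurableSpace Y]
    {μ : Measure X} {ν : Measure Y} [SFinite μ] [SFinite ν] {K : Set X} (hK : MeasurableSet K)
    {G : Set (X × Y)} (hG : MeasurableSet G) {f : Y → ℝ≥0∞} (hf : Measurable f) {I a b : ℝ≥0∞}
    (h_section : ∀ x ∈ K, I ≤ a * ∫⁻ y in {y | (x, y) ∈ G}, f y ∂ν)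
    (h_slice : ∀ y, μ {x ∈ K | (x, y) ∈ G} ≤ b) :
    μ K * I ≤ a * (b * ∫⁻ y, f y ∂ν) := by
  have h_meas : Measurable (G.indicator fun p => f p.2) := (hf.comp measurable_snd).indicator hG
  have h_left : ∀ x, MeasurableSet {y | (x, y) ∈ G} := fun _ => measurable_prodMk_left hG
  have h_right : ∀ y, MeasurableSet {x | (x, y) ∈ G} := fun _ => measurable_prodMk_right hG
  calc μ K * I = ∫⁻ _ in K, I ∂μ := by rw [setLIntegral_const, mul_comm]
    _ ≤ ∫⁻ x in K, a * ∫⁻ y, G.indicator (fun p => f p.2) (x, y) ∂ν ∂μ := by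
        refine setLIntegral_mono' hK fun x hx => (h_section x hx).trans_eq ?_
        rw [← lintegral_indicator (h_left x)]
        rfl
    _ = a * ∫⁻ y, ∫⁻ x in K, G.indicator (fun p => f p.2) (x, y) ∂μ ∂ν := by
        rw [lintegral_const_mul _ h_meas.lintegral_prod_right',
          lintegral_lintegral_swap (f := fun x y => G.indicator (fun p => f p.2) (x, y))
            h_meas.aemeasurable]
    _ ≤ a * ∫⁻ y, b * f y ∂ν := by
        gcongr with y
        calc ∫⁻ x in K, G.indicator (fun p => f p.2) (x, y) ∂μ
            = ∫⁻ x in K, {x | (x, y) ∈ G}.indicator (fun _ => f y) x ∂μ := rfl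
          _ = f y * μ {x ∈ K | (x, y) ∈ G} := by
              rw [lintegral_indicator_const (h_right y), Measure.restrict_apply (h_right y),
                inter_comm]
              rfl
          _ ≤ b * f y := by
              rw [mul_comm]
              gcongr
              exact h_slice y
    _ = a * (b * ∫⁻ y, f y ∂ν) := by rw [lintegral_const_mul _ hf]

lemma lintegral_le_inv_mul_of_le_comp {E : Type*} [NormedAddCommGroup E] [NormedSpace ℝ E]
    [FiniteDimensional ℝ E] [MeasurableSpace E] [BorelSpace E] (μ : Measure E)
    [μ.IsAddHaarMeasure] {T : E →ₗ[ℝ] E} {m : ℝ} (hm : 0 < m) (hT : m ≤ |LinearMap.det T|)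
    {f g : E → ℝ≥0∞} (hg : Measurable g) (hfg : ∀ x, f x ≤ g (T x)) :
    ∫⁻ x, f x ∂μ ≤ ENNReal.ofReal m⁻¹ * ∫⁻ x, g x ∂μ := by
  have h_det : LinearMap.det T ≠ 0 := abs_pos.1 (hm.trans_le hT)
  calc ∫⁻ x, f x ∂μ ≤ ∫⁻ x, g (T x) ∂μ := lintegral_mono hfg
    _ = ENNReal.ofReal |(LinearMap.det T)⁻¹| * ∫⁻ x, g x ∂μ := by
        rw [← lintegral_map hg (LinearMap.continuous_of_finiteDimensional T).measurable,
          Measure.map_linearMap_addHaar_eq_smul_addHaar μ h_det, lintegral_smul_measure,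
          smul_eq_mul]
    _ ≤ ENNReal.ofReal m⁻¹ * ∫⁻ x, g x ∂μ := by
        rw [abs_inv]
        gcongr

section RowCombination

variable {ι V : Type*} [Fintype ι]

/-- The linear map induced on families of vectors by a square matrix `M`, that is, left
multiplication by `M` of the matrix whose rows are the members of the family. -/
def rowMap [AddCommGroup V] [Module ℝ V] (M : Matrix ι ι ℝ) : (ι → V) →ₗ[ℝ] (ι → V) :=
  LinearMap.pi fun i => ∑ j, M i j • LinearMap.proj j

lemma rowMap_apply [AddCommGroup V] [Module ℝ V] (M : Matrix ι ι ℝ) (A : ι → V) (i : ι) :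
    rowMap M A i = ∑ j, M i j • A j := by
  simp only [rowMap, LinearMap.pi_apply, LinearMap.sum_apply, LinearMap.smul_apply,
    LinearMap.proj_apply]

lemma det_rowMap [DecidableEq ι] [AddCommGroup V] [Module ℝ V] [FiniteDimensional ℝ V]
    (M : Matrix ι ι ℝ) :
    LinearMap.det (rowMap M : (ι → V) →ₗ[ℝ] (ι → V)) = M.det ^ Module.finrank ℝ V := by
  let b := Module.finBasis ℝ V
  let e : (ι → V) ≃ₗ[ℝ] (Fin (Module.finrank ℝ V) → ι → ℝ) :=
    (LinearEquiv.piCongrRight fun _ => b.equivFun).trans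
      { Equiv.piComm fun _ _ => ℝ with
        map_add' := fun _ _ => rfl
        map_smul' := fun _ _ => rfl }
  have h_conj : e.toLinearMap ∘ₗ rowMap M ∘ₗ e.symm.toLinearMap =
      LinearMap.pi fun i => (Matrix.toLin' M).comp (LinearMap.proj i) := by
    refine LinearMap.ext fun B => ?_
    obtain ⟨A, rfl⟩ := e.surjective B
    ext j i
    simp only [LinearMap.comp_apply, LinearEquiv.coe_coe, LinearEquiv.symm_apply_apply]
    change b.equivFun (rowMap M A i) j = ∑ l, M i l * b.equivFun (A l) j
    simp only [rowMap_apply, map_sum, map_smul, Finset.sum_apply, Pi.smul_apply, smul_eq_mul]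
  rw [← LinearMap.det_conj _ e, h_conj, LinearMap.det_pi]
  simp only [LinearMap.det_toLin', Finset.prod_const, Finset.card_univ, Fintype.card_fin]

/-- The transpose of the matrix with rows `A i`, applied to `ξ`. -/
def rowCombination [AddCommGroup V] [Module ℝ V] (A : ι → V) (ξ : EuclideanSpace ℝ ι) : V :=
  ∑ i, ξ i • A i

lemma rowCombination_smul [AddCommGroup V] [Module ℝ V] (A : ι → V) (r : ℝ)
    (ξ : EuclideanSpace ℝ ι) : rowCombination A (r • ξ) = r • rowCombination A ξ := by
  simp only [rowCombination, PiLp.smul_apply, Finset.smul_sum, smul_smul, smul_eq_mul]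

variable [NormedAddCommGroup V] [InnerProductSpace ℝ V]

lemma continuous_rowCombination :
    Continuous fun p : (ι → V) × EuclideanSpace ℝ ι => rowCombination p.1 p.2 := by
  unfold rowCombination
  fun_prop

lemma inner_rowCombination (A : ι → V) (ζ ξ : EuclideanSpace ℝ ι) :
    inner ℝ (rowCombination A ζ) (rowCombination A ξ) =
      ∑ i, ∑ j, ζ i * ξ j * inner ℝ (A i) (A j) := by
  simp_rw [rowCombination, sum_inner, inner_sum, real_inner_smul_left, real_inner_smul_right,
    mul_assoc]

/-- The matrices with rows `A i` that are `δ`-close to a multiple of an isometry, the squares of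
the admissible scaling factors lying in `[ρ₀, ρ₁]`. -/
def nearConformal (ι V : Type*) [NormedAddCommGroup V] [InnerProductSpace ℝ V] (ρ₀ ρ₁ δ : ℝ) :
    Set (ι → V) :=
  {A | (∀ i j, i ≠ j → |inner ℝ (A i) (A j)| ≤ δ) ∧ (∀ i j, |‖A i‖ ^ 2 - ‖A j‖ ^ 2| ≤ δ) ∧
    ∀ i, ‖A i‖ ^ 2 ∈ Icc ρ₀ ρ₁}

lemma isClosed_nearConformal {ι : Type*} (ρ₀ ρ₁ δ : ℝ) :
    IsClosed (nearConformal ι V ρ₀ ρ₁ δ) := by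
  unfold nearConformal
  simp only [ofPred_and, ofPred_forall, mem_Icc]
  refine .inter ?_ (.inter ?_ ?_)
  · exact isClosed_iInter fun i => isClosed_iInter fun j => isClosed_iInter fun _ =>
      isClosed_le (by fun_prop) (by fun_prop)
  · exact isClosed_iInter fun i => isClosed_iInter fun j =>
      isClosed_le (by fun_prop) (by fun_prop)
  · exact isClosed_iInter fun i => (isClosed_le (by fun_prop) (by fun_prop)).inter
      (isClosed_le (by fun_prop) (by fun_prop))

lemma abs_inner_rowCombination_sub_le {ρ₀ ρ₁ δ : ℝ} {A : ι → V}
    (hA : A ∈ nearConformal ι V ρ₀ ρ₁ δ) (i₀ : ι) (ζ ξ : EuclideanSpace ℝ ι) :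
    |inner ℝ (rowCombination A ζ) (rowCombination A ξ) - ‖A i₀‖ ^ 2 * inner ℝ ζ ξ| ≤
      Fintype.card ι ^ 2 * δ * (‖ζ‖ * ‖ξ‖) := by
  classical
  have h_entry : ∀ i j, |inner ℝ (A i) (A j) - if i = j then ‖A i₀‖ ^ 2 else 0| ≤ δ := by
    intro i j
    split_ifs with h
    · rw [h, real_inner_self_eq_norm_sq]
      exact hA.2.1 j i₀
    · rw [sub_zero]
      exact hA.1 i j h
  have h_expand : inner ℝ (rowCombination A ζ) (rowCombination A ξ) - ‖A i₀‖ ^ 2 * inner ℝ ζ ξ =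
      ∑ i, ∑ j, ζ i * ξ j * (inner ℝ (A i) (A j) - if i = j then ‖A i₀‖ ^ 2 else 0) := by
    simp only [inner_rowCombination, mul_sub, Finset.sum_sub_distrib, mul_ite, mul_zero,
      Finset.sum_ite_eq, Finset.mem_univ, if_true, PiLp.inner_apply, Finset.mul_sum,
      RCLike.inner_apply, conj_trivial]
    congr 1
    exact Finset.sum_congr rfl fun i _ => by ring
  calc |inner ℝ (rowCombination A ζ) (rowCombination A ξ) - ‖A i₀‖ ^ 2 * inner ℝ ζ ξ|
      ≤ ∑ _i : ι, ∑ _j : ι, ‖ζ‖ * ‖ξ‖ * δ := by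
        rw [h_expand]
        refine (Finset.abs_sum_le_sum_abs _ _).trans (Finset.sum_le_sum fun i _ =>
          (Finset.abs_sum_le_sum_abs _ _).trans (Finset.sum_le_sum fun j _ => ?_))
        rw [abs_mul, abs_mul]
        gcongr
        exacts [PiLp.norm_apply_le ζ i, PiLp.norm_apply_le ξ j, h_entry i j]
    _ = Fintype.card ι ^ 2 * δ * (‖ζ‖ * ‖ξ‖) := by
        simp only [Finset.sum_const, Finset.card_univ, nsmul_eq_mul]
        ring

end RowCombination

lemma abs_matrix_mul_apply_le {ι : Type*} [Fintype ι] {M N : Matrix ι ι ℝ} {a b : ℝ}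
    (hM : ∀ i j, |M i j| ≤ a) (hN : ∀ i j, |N i j| ≤ b) (i j : ι) :
    |(M * N) i j| ≤ Fintype.card ι * (a * b) := by
  calc |(M * N) i j| ≤ ∑ l, |M i l * N l j| := Finset.abs_sum_le_sum_abs _ _
    _ ≤ ∑ _l : ι, a * b := by
        refine Finset.sum_le_sum fun l _ => ?_
        rw [abs_mul]
        exact mul_le_mul (hM i l) (hN l j) (abs_nonneg _) ((abs_nonneg _).trans (hM i l))
    _ = Fintype.card ι * (a * b) := by
        rw [Finset.sum_const, Finset.card_univ, nsmul_eq_mul]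

section Shear

variable {d : ℕ}

/-- The lower triangular matrix whose entries on and below the diagonal, except for the top left
one, are the coordinates of `X`; its other entries vanish. -/
def lowerFill (X : PairIdx' d → ℝ) : Matrix (Fin d) (Fin d) ℝ := Matrix.of fun i j =>
  if h : j.castSucc < i.succ ∧ (j.castSucc, i.succ) ≠ ((0 : Fin (d + 1)), (1 : Fin (d + 1))) then
    X ⟨(j.castSucc, i.succ), h⟩
  else 0

lemma abs_lowerFill_apply_le (X : PairIdx' d → ℝ) (i j : Fin d) : |lowerFill X i j| ≤ ‖X‖ := by
  unfold lowerFill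
  rw [Matrix.of_apply]
  split_ifs
  · exact norm_le_pi_norm X _
  · rw [abs_zero]
    exact norm_nonneg X

lemma lowerFill_apply_of_lt (X : PairIdx' d → ℝ) {i j : Fin d} (h : i < j) :
    lowerFill X i j = 0 :=
  dif_neg fun h' => h.not_ge (Fin.castSucc_lt_succ_iff.1 h'.1)

lemma lowerFill_zero_apply [NeZero d] (X : PairIdx' d → ℝ) (j : Fin d) : lowerFill X 0 j = 0 := by
  refine dif_neg fun ⟨h_lt, h_ne⟩ => h_ne ?_
  obtain rfl : j = 0 := nonpos_iff_eq_zero.1 (Fin.castSucc_lt_succ_iff.1 h_lt)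
  rw [Fin.castSucc_zero', Fin.succ_zero_eq_one']

lemma lowerFill_sub (X Y : PairIdx' d → ℝ) : lowerFill (X - Y) = lowerFill X - lowerFill Y := by
  ext i j
  simp only [lowerFill, Matrix.of_apply, Matrix.sub_apply]
  split_ifs
  · rfl
  · rw [sub_zero]

lemma continuous_lowerFill : Continuous (lowerFill : (PairIdx' d → ℝ) → _) := by
  refine continuous_matrix fun i j => ?_
  unfold lowerFill
  simp only [Matrix.of_apply]
  split_ifs <;> fun_prop

lemma exists_lowerFill_apply_eq (p : PairIdx' d) :
    ∃ i j, ∀ X : PairIdx' d → ℝ, lowerFill X i j = X p := by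
  obtain ⟨⟨a, b⟩, h⟩ := p
  obtain ⟨i, rfl⟩ := Fin.exists_succ_eq.2 ((Fin.zero_le a).trans_lt h.1).ne'
  obtain ⟨j, rfl⟩ := Fin.exists_castSucc_eq.2 (h.1.trans_le (Fin.le_last _)).ne
  exact ⟨i, j, fun X => dif_pos h⟩

/-- The perturbation of the identity by `lowerFill X`. Its rows are the vertices, relative to the
first one, of a simplex close to the standard one. -/
def shear (X : PairIdx' d → ℝ) : Matrix (Fin d) (Fin d) ℝ := 1 + lowerFill X

lemma shear_zero_apply [NeZero d] (X : PairIdx' d → ℝ) (j : Fin d) :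
    shear X 0 j = (1 : Matrix (Fin d) (Fin d) ℝ) 0 j := by
  rw [shear, Matrix.add_apply, lowerFill_zero_apply, add_zero]

lemma abs_shear_apply_le {X : PairIdx' d → ℝ} (hX : ‖X‖ ≤ 1) (i j : Fin d) : |shear X i j| ≤ 2 := by
  have h_one : |(1 : Matrix (Fin d) (Fin d) ℝ) i j| ≤ 1 := by
    rw [Matrix.one_apply]
    split_ifs <;> simp
  rw [shear, Matrix.add_apply]
  linarith [abs_add_le ((1 : Matrix (Fin d) (Fin d) ℝ) i j) (lowerFill X i j),
    abs_lowerFill_apply_le X i j]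

lemma pow_le_abs_det_shear {X : PairIdx' d → ℝ} (hX : ‖X‖ ≤ 1 / 2) :
    (1 / 2) ^ d ≤ |(shear X).det| := by
  have h_lower : (shear X).IsLowerTriangular := fun i j (h : i < j) => by
    rw [shear, Matrix.add_apply, lowerFill_apply_of_lt X h, Matrix.one_apply_ne h.ne, add_zero]
  rw [Matrix.det_of_isLowerTriangular _ h_lower, Finset.abs_prod]
  calc (1 / 2 : ℝ) ^ d = ∏ _i : Fin d, (1 / 2 : ℝ) := by simp
    _ ≤ ∏ i, |shear X i i| := by
        refine Finset.prod_le_prod (fun _ _ => by norm_num) fun i _ => le_abs.2 (.inl ?_)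
        rw [shear, Matrix.add_apply, Matrix.one_apply_eq]
        linarith [abs_le.1 ((abs_lowerFill_apply_le X i i).trans hX)]

/-- The Gram matrix of the rows of `shear X`. -/
def shearGram (X : PairIdx' d → ℝ) : Matrix (Fin d) (Fin d) ℝ := shear X * (shear X).transpose

lemma continuous_shearGram : Continuous (shearGram : (PairIdx' d → ℝ) → _) := by
  have h_shear : Continuous (shear : (PairIdx' d → ℝ) → _) :=
    continuous_const.add continuous_lowerFill
  exact h_shear.matrix_mul h_shear.matrix_transpose

lemma shearGram_sub (X Y : PairIdx' d → ℝ) :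
    shearGram X - shearGram Y = lowerFill (X - Y) + (lowerFill (X - Y)).transpose +
      (lowerFill (X - Y) * (lowerFill X).transpose +
        lowerFill Y * (lowerFill (X - Y)).transpose) := by
  simp only [shearGram, shear, lowerFill_sub, Matrix.transpose_add, Matrix.transpose_sub,
    Matrix.transpose_one]
  noncomm_ring

lemma abs_lowerFill_apply_le_add_transpose (X : PairIdx' d → ℝ) {i j : Fin d} (hij : j ≤ i) :
    |lowerFill X i j| ≤ |lowerFill X i j + lowerFill X j i| := by
  obtain rfl | hlt := hij.eq_or_lt
  · rw [← two_mul, abs_mul, abs_two]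
    linarith [abs_nonneg (lowerFill X j j)]
  · rw [lowerFill_apply_of_lt X hlt, add_zero]

-- `X ↦ shearGram X` is a small perturbation of the map `X ↦ lowerFill X + (lowerFill X)ᵀ`, which
-- is expanding.
lemma norm_sub_le_of_shearGram [NeZero d] {κ S : ℝ} (hκ : 8 * d * κ ≤ 1) {X Y : PairIdx' d → ℝ}
    (hX : ‖X‖ ≤ κ) (hY : ‖Y‖ ≤ κ) (hS : ∀ i j, |shearGram X i j - shearGram Y i j| ≤ S) :
    ‖X - Y‖ ≤ 2 * S := by
  have hS₀ : 0 ≤ S := (abs_nonneg _).trans (hS 0 0)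
  have hκ₀ : 0 ≤ κ := (norm_nonneg X).trans hX
  have h_quadratic : ∀ i j, |(lowerFill (X - Y) * (lowerFill X).transpose +
      lowerFill Y * (lowerFill (X - Y)).transpose) i j| ≤ 2 * d * κ * ‖X - Y‖ := by
    intro i j
    have h_left := abs_matrix_mul_apply_le (abs_lowerFill_apply_le (X - Y))
      (N := (lowerFill X).transpose) (fun i j => (abs_lowerFill_apply_le X j i).trans hX) i j
    have h_right := abs_matrix_mul_apply_le
      (fun i j => (abs_lowerFill_apply_le Y i j).trans hY)
      (N := (lowerFill (X - Y)).transpose) (fun i j => abs_lowerFill_apply_le (X - Y) j i) i j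
    rw [Fintype.card_fin] at h_left h_right
    rw [Matrix.add_apply]
    exact (abs_add_le _ _).trans (by linarith)
  have h_entry : ∀ i j, |lowerFill (X - Y) i j| ≤ S + 2 * d * κ * ‖X - Y‖ := by
    intro i j
    obtain hij | hij := lt_or_ge i j
    · rw [lowerFill_apply_of_lt _ hij, abs_zero]
      positivity
    · have h_sum := congrFun₂ (shearGram_sub X Y) i j
      rw [Matrix.sub_apply, Matrix.add_apply, Matrix.add_apply, Matrix.transpose_apply,
        ← sub_eq_iff_eq_add] at h_sum
      refine (abs_lowerFill_apply_le_add_transpose _ hij).trans ?_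
      rw [← h_sum]
      exact (abs_sub _ _).trans (add_le_add (hS i j) (h_quadratic i j))
  have h_norm : ‖X - Y‖ ≤ S + 2 * d * κ * ‖X - Y‖ := by
    refine (pi_norm_le_iff_of_nonneg (by positivity)).2 fun p => ?_
    obtain ⟨i, j, h⟩ := exists_lowerFill_apply_eq p
    rw [← h (X - Y), Real.norm_eq_abs]
    exact h_entry i j
  nlinarith [norm_nonneg (X - Y)]

end Shear

section OrthonormalBasis

variable {ι : Type*} [Fintype ι]

lemma exists_orthonormalBasis_apply_eq (i : ι) {ξ : EuclideanSpace ℝ ι} (hξ : ‖ξ‖ = 1) :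
    ∃ b : OrthonormalBasis ι ℝ (EuclideanSpace ℝ ι), b i = ξ := by
  have h_unit : Orthonormal ℝ (({i} : Set ι).domRestrict fun _ => ξ) :=
    ⟨fun _ => hξ, fun j l hjl => (hjl (Subsingleton.elim j l)).elim⟩
  obtain ⟨b, hb⟩ := h_unit.exists_orthonormalBasis_extension_of_card_eq finrank_euclideanSpace
  exact ⟨b, hb i rfl⟩

lemma abs_det_orthonormalBasis [DecidableEq ι] (b : OrthonormalBasis ι ℝ (EuclideanSpace ℝ ι)) :
    |(Matrix.of fun i j => b i j).det| = 1 := by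
  have h_transpose : (Matrix.of fun i j => b i j).transpose =
      (EuclideanSpace.basisFun ι ℝ).toBasis.toMatrix b := by
    ext i j
    simp [Module.Basis.toMatrix_apply]
  rw [← Matrix.det_transpose, h_transpose, ← Module.Basis.det_apply]
  obtain h | h := (EuclideanSpace.basisFun ι ℝ).det_to_matrix_orthonormalBasis_real b <;>
    simp [h]

end OrthonormalBasis

section NearGram

variable {d : ℕ} {V : Type*} [NormedAddCommGroup V] [InnerProductSpace ℝ V]

/-- The pairs of a parameter `X` and a family of `d` vectors whose Gram matrix is `η`-close to a
multiple of `shearGram X`, the first vector having squared norm at least `ρ`. -/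
def nearGram [NeZero d] (V : Type*) [NormedAddCommGroup V] [InnerProductSpace ℝ V] (ρ η : ℝ) :
    Set ((PairIdx' d → ℝ) × (Fin d → V)) :=
  {p | (∀ i j, |inner ℝ (p.2 i) (p.2 j) - ‖p.2 0‖ ^ 2 * shearGram p.1 i j| ≤ η) ∧
    ρ ≤ ‖p.2 0‖ ^ 2}

lemma isClosed_nearGram [NeZero d] (ρ η : ℝ) : IsClosed (nearGram (d := d) V ρ η) := by
  unfold nearGram
  simp only [ofPred_and, ofPred_forall]
  refine .inter (isClosed_iInter fun i => isClosed_iInter fun j => ?_)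
    (isClosed_le (by fun_prop) (by fun_prop))
  have h_gram := continuous_shearGram.matrix_elem (X := PairIdx' d → ℝ) i j
  exact isClosed_le (by fun_prop) (by fun_prop)

lemma volume_nearGram_section_le [NeZero d] {κ ρ η : ℝ} (hκ : 8 * d * κ ≤ 1) (hρ : 0 < ρ)
    (c : Fin d → V) :
    volume {X ∈ closedBall (0 : PairIdx' d → ℝ) κ | (X, c) ∈ nearGram V ρ η} ≤
      ENNReal.ofReal (8 * η / ρ) ^ Fintype.card (PairIdx' d) := by
  obtain h_empty | ⟨Y, hYκ, hY⟩ :=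
    {X ∈ closedBall (0 : PairIdx' d → ℝ) κ | (X, c) ∈ nearGram V ρ η}.eq_empty_or_nonempty
  · rw [h_empty, measure_empty]
    exact zero_le
  have hη : 0 ≤ η := (abs_nonneg _).trans (hY.1 0 0)
  have h_gram : ∀ X, (X, c) ∈ nearGram V ρ η → ∀ i j,
      |shearGram X i j - shearGram Y i j| ≤ 2 * η / ρ := by
    intro X hX i j
    have h_scaled : ‖c 0‖ ^ 2 * |shearGram X i j - shearGram Y i j| ≤ 2 * η := by
      rw [← abs_of_nonneg (sq_nonneg ‖c 0‖), ← abs_mul]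
      have hXij := abs_le.1 (hX.1 i j)
      have hYij := abs_le.1 (hY.1 i j)
      exact abs_le.2 ⟨by linarith, by linarith⟩
    rw [le_div_iff₀' hρ]
    exact (mul_le_mul_of_nonneg_right hX.2 (abs_nonneg _)).trans h_scaled
  have h_subset : {X ∈ closedBall (0 : PairIdx' d → ℝ) κ | (X, c) ∈ nearGram V ρ η} ⊆
      closedBall Y (4 * η / ρ) := by
    rintro X ⟨hXκ, hX⟩
    rw [mem_closedBall_zero_iff] at hXκ hYκ
    rw [mem_closedBall, dist_eq_norm]
    exact (norm_sub_le_of_shearGram hκ hXκ hYκ (h_gram X hX)).trans_eq (by ring)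
  refine (measure_mono h_subset).trans_eq ?_
  rw [Real.volume_pi_closedBall _ (by positivity), ENNReal.ofReal_pow (by positivity)]
  congr 2
  ring

/-- The matrix whose rows are the images of the rows of `shear X` under the isometry sending the
standard basis to `b`. -/
def shearedBasis (b : OrthonormalBasis (Fin d) ℝ (Pt d)) (X : PairIdx' d → ℝ) :
    Matrix (Fin d) (Fin d) ℝ :=
  shear X * Matrix.of fun i j => b i j

variable (b : OrthonormalBasis (Fin d) ℝ (Pt d))

lemma toLp_shearedBasis (X : PairIdx' d → ℝ) (i : Fin d) :
    WithLp.toLp 2 (shearedBasis b X i) = ∑ j, shear X i j • b j := by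
  ext l
  simp [shearedBasis, Matrix.mul_apply]

lemma toLp_shearedBasis_zero [NeZero d] (X : PairIdx' d → ℝ) :
    WithLp.toLp 2 (shearedBasis b X 0) = b 0 := by
  simp [toLp_shearedBasis, shear_zero_apply, Matrix.one_apply]

lemma inner_shearedBasis (X : PairIdx' d → ℝ) (i j : Fin d) :
    inner ℝ (WithLp.toLp 2 (shearedBasis b X i)) (WithLp.toLp 2 (shearedBasis b X j)) =
      shearGram X i j := by
  simp only [toLp_shearedBasis, b.orthonormal.inner_sum, shearGram, Matrix.mul_apply,
    Matrix.transpose_apply, conj_trivial]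

lemma norm_shearedBasis_le {X : PairIdx' d → ℝ} (hX : ‖X‖ ≤ 1) (i : Fin d) :
    ‖WithLp.toLp 2 (shearedBasis b X i)‖ ≤ 2 * d := by
  rw [toLp_shearedBasis]
  calc ‖∑ j, shear X i j • b j‖ ≤ ∑ _j : Fin d, (2 : ℝ) := by
        refine (norm_sum_le _ _).trans (Finset.sum_le_sum fun j _ => ?_)
        rw [norm_smul, b.norm_eq_one, mul_one]
        exact abs_shear_apply_le hX i j
    _ = 2 * d := by
        rw [Finset.sum_const, Finset.card_univ, Fintype.card_fin, nsmul_eq_mul, mul_comm]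

lemma pow_le_abs_det_shearedBasis {X : PairIdx' d → ℝ} (hX : ‖X‖ ≤ 1 / 2) :
    (1 / 2) ^ d ≤ |(shearedBasis b X).det| := by
  rw [shearedBasis, Matrix.det_mul, abs_mul, abs_det_orthonormalBasis, mul_one]
  exact pow_le_abs_det_shear hX

lemma rowMap_shearedBasis_apply (X : PairIdx' d → ℝ) (A : Fin d → V) (i : Fin d) :
    rowMap (shearedBasis b X) A i = rowCombination A (WithLp.toLp 2 (shearedBasis b X i)) := by
  rw [rowMap_apply, rowCombination]

lemma rowMap_shearedBasis_zero [NeZero d] (X : PairIdx' d → ℝ) (A : Fin d → V) :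
    rowMap (shearedBasis b X) A 0 = rowCombination A (b 0) := by
  rw [rowMap_shearedBasis_apply, toLp_shearedBasis_zero]

variable {b} {ρ₀ ρ₁ δ : ℝ} {A : Fin d → V} {X : PairIdx' d → ℝ}

lemma rowMap_shearedBasis_mem_nearGram [NeZero d]
    (hδ : 2 * (d ^ 2 * δ) ≤ ρ₀)
    (hA : A ∈ nearConformal (Fin d) V ρ₀ ρ₁ δ) (hX : ‖X‖ ≤ 1) :
    (X, rowMap (shearedBasis b X) A) ∈ nearGram V (ρ₀ / 2) (8 * d ^ 4 * δ) := by
  set w : Fin d → Pt d := fun i => WithLp.toLp 2 (shearedBasis b X i)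
  have hδ₀ : 0 ≤ δ := (abs_nonneg _).trans (hA.2.1 0 0)
  have h_inner : ∀ i j, |inner ℝ (rowCombination A (w i)) (rowCombination A (w j)) -
      ‖A 0‖ ^ 2 * shearGram X i j| ≤ d ^ 2 * δ * (‖w i‖ * ‖w j‖) := by
    intro i j
    simpa only [w, inner_shearedBasis, Fintype.card_fin] using
      abs_inner_rowCombination_sub_le hA 0 (w i) (w j)
  have h_norm : ∀ i j, ‖w i‖ * ‖w j‖ ≤ 2 * d * (2 * d) := fun i j => by
    gcongr <;> exact norm_shearedBasis_le b hX _
  have h_gram : ∀ i j, |shearGram X i j| ≤ 2 * d * (2 * d) := fun i j => by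
    rw [← inner_shearedBasis b]
    exact (abs_real_inner_le_norm _ _).trans (h_norm i j)
  have h_scale : |‖rowCombination A (w 0)‖ ^ 2 - ‖A 0‖ ^ 2| ≤ d ^ 2 * δ := by
    have h := abs_inner_rowCombination_sub_le hA 0 (b 0) (b 0)
    rw [real_inner_self_eq_norm_sq, real_inner_self_eq_norm_sq, b.norm_eq_one,
      Fintype.card_fin] at h
    simpa only [w, toLp_shearedBasis_zero, one_pow, mul_one] using h
  simp only [nearGram, mem_ofPred_eq, rowMap_shearedBasis_apply]
  refine ⟨fun i j => ?_, by linarith [abs_le.1 h_scale, hA.2.2 0 |>.1]⟩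
  calc |inner ℝ (rowCombination A (w i)) (rowCombination A (w j)) -
        ‖rowCombination A (w 0)‖ ^ 2 * shearGram X i j|
      = |(inner ℝ (rowCombination A (w i)) (rowCombination A (w j)) -
          ‖A 0‖ ^ 2 * shearGram X i j) -
          (‖rowCombination A (w 0)‖ ^ 2 - ‖A 0‖ ^ 2) * shearGram X i j| := by ring_nf
    _ ≤ d ^ 2 * δ * (2 * d * (2 * d)) + d ^ 2 * δ * (2 * d * (2 * d)) := by
        refine (abs_sub _ _).trans (add_le_add ((h_inner i j).trans ?_) ?_)
        · exact mul_le_mul_of_nonneg_left (h_norm i j) (by positivity)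
        · rw [abs_mul]
          exact mul_le_mul h_scale (h_gram i j) (abs_nonneg _) (by positivity)
    _ = 8 * d ^ 4 * δ := by ring

lemma norm_rowMap_shearedBasis_le (hA : A ∈ nearConformal (Fin d) V ρ₀ ρ₁ δ) (hX : ‖X‖ ≤ 1)
    (i : Fin d) : ‖rowMap (shearedBasis b X) A i‖ ≤ d * (2 * d * (1 + ρ₁)) := by
  have h_row : ∀ j, ‖A j‖ ≤ 1 + ρ₁ := fun j => by
    nlinarith [(hA.2.2 j).2, sq_nonneg (‖A j‖ - 1), norm_nonneg (A j)]
  rw [rowMap_shearedBasis_apply, rowCombination]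
  calc ‖∑ j, shearedBasis b X i j • A j‖ ≤ ∑ _j : Fin d, 2 * d * (1 + ρ₁) := by
        refine (norm_sum_le _ _).trans (Finset.sum_le_sum fun j _ => ?_)
        rw [norm_smul]
        have h_entry := (PiLp.norm_apply_le (WithLp.toLp 2 (shearedBasis b X i)) j).trans
          (norm_shearedBasis_le b hX i)
        exact mul_le_mul h_entry (h_row j) (norm_nonneg _) (by positivity)
    _ = d * (2 * d * (1 + ρ₁)) := by
        rw [Finset.sum_const, Finset.card_univ, Fintype.card_fin, nsmul_eq_mul]

variable [FiniteDimensional ℝ V] [MeasurableSpace V] [BorelSpace V] {f : V → ℝ≥0∞}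

lemma setLIntegral_nearConformal_le_nearGram [NeZero d] (hf : Measurable f)
    (hδ : 2 * (d ^ 2 * δ) ≤ ρ₀) (hX : ‖X‖ ≤ 1 / 2) :
    ∫⁻ A in nearConformal (Fin d) V ρ₀ ρ₁ δ, f (rowCombination A (b 0)) ≤
      ENNReal.ofReal (((1 / 2) ^ d) ^ Module.finrank ℝ V)⁻¹ *
        ∫⁻ c in {c | (X, c) ∈ nearGram V (ρ₀ / 2) (8 * d ^ 4 * δ)},
          (univ.pi fun _ => closedBall 0 (d * (2 * d * (1 + ρ₁)))).indicator
            (fun c => f (c 0)) c := by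
  have h_ball : MeasurableSet
      (univ.pi fun _ : Fin d => closedBall (0 : V) (d * (2 * d * (1 + ρ₁)))) :=
    .univ_pi fun _ => measurableSet_closedBall
  have h_gram : MeasurableSet {c | (X, c) ∈ nearGram V (ρ₀ / 2) (8 * d ^ 4 * δ)} :=
    measurable_prodMk_left (isClosed_nearGram _ _).measurableSet
  have h_det : ((1 / 2) ^ d) ^ Module.finrank ℝ V ≤
      |LinearMap.det (rowMap (shearedBasis b X) : (Fin d → V) →ₗ[ℝ] (Fin d → V))| := by
    rw [det_rowMap, abs_pow]
    gcongr
    exact pow_le_abs_det_shearedBasis b hX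
  rw [← lintegral_indicator h_gram,
    ← lintegral_indicator (isClosed_nearConformal _ _ _).measurableSet]
  refine lintegral_le_inv_mul_of_le_comp volume (by positivity) h_det
    (((hf.comp (measurable_pi_apply 0)).indicator h_ball).indicator h_gram) fun A => ?_
  by_cases hA : A ∈ nearConformal (Fin d) V ρ₀ ρ₁ δ
  · have hX₁ : ‖X‖ ≤ 1 := by linarith
    rw [indicator_of_mem hA, indicator_of_mem, indicator_of_mem, rowMap_shearedBasis_zero]
    · exact fun i _ => mem_closedBall_zero_iff.2 (norm_rowMap_shearedBasis_le hA hX₁ i)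
    · exact rowMap_shearedBasis_mem_nearGram hδ hA hX₁
  · rw [indicator_of_notMem hA]
    exact zero_le

lemma exists_setLIntegral_nearConformal_le [NeZero d] (V : Type*) [NormedAddCommGroup V]
    [InnerProductSpace ℝ V] [FiniteDimensional ℝ V] [MeasurableSpace V] [BorelSpace V]
    (hρ₀ : 0 < ρ₀) (ρ₁ : ℝ) :
    ∃ C : ℝ≥0∞, ∃ R : ℝ, C ≠ ∞ ∧ ∀ ⦃δ : ℝ⦄, 2 * (d ^ 2 * δ) ≤ ρ₀ → ∀ ⦃ξ : Pt d⦄, ‖ξ‖ = 1 →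
      ∀ ⦃f : V → ℝ≥0∞⦄, Measurable f →
        ∫⁻ A in nearConformal (Fin d) V ρ₀ ρ₁ δ, f (rowCombination A ξ) ≤
          C * ENNReal.ofReal δ ^ Fintype.card (PairIdx' d) * ∫⁻ η in closedBall 0 R, f η := by
  set D := Fintype.card (PairIdx' d)
  set R : ℝ := d * (2 * d * (1 + ρ₁))
  set κ : ℝ := 1 / (8 * d)
  have hd : (1 : ℝ) ≤ d := by exact_mod_cast NeZero.one_le
  have hκ₀ : 0 < κ := by positivity
  have hκ : κ ≤ 1 / 2 := one_div_le_one_div_of_le (by norm_num) (by linarith)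
  have hκd : 8 * d * κ ≤ 1 := (mul_one_div_cancel (by positivity)).le
  set K := closedBall (0 : PairIdx' d → ℝ) κ
  set a := ENNReal.ofReal (((1 / 2) ^ d) ^ Module.finrank ℝ V)⁻¹
  set W := volume (closedBall (0 : V) R)
  have hK : volume K ≠ 0 := (measure_closedBall_pos _ _ hκ₀).ne'
  refine ⟨(volume K)⁻¹ * (a * ENNReal.ofReal (128 * d ^ 4 / ρ₀) ^ D * W ^ (d - 1)), R, ?_,
    fun δ hδ ξ hξ f hf => ?_⟩
  · have hW : W ≠ ∞ := measure_closedBall_lt_top.ne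
    finiteness
  obtain ⟨b, rfl⟩ := exists_orthonormalBasis_apply_eq (0 : Fin d) hξ
  have hf₀ : Measurable fun c : Fin d → V => f (c 0) := by fun_prop
  have h_fubini := measure_mul_le_mul_lintegral (μ := volume) (ν := volume)
    (measurableSet_closedBall (x := (0 : PairIdx' d → ℝ)) (ε := κ))
    (isClosed_nearGram (ρ₀ / 2) (8 * d ^ 4 * δ)).measurableSet
    (hf₀.indicator (.univ_pi fun _ : Fin d => measurableSet_closedBall (ε := R)))
    (fun X hX => setLIntegral_nearConformal_le_nearGram (b := b) (ρ₁ := ρ₁) hf hδ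
      ((mem_closedBall_zero_iff.1 hX).trans hκ))
    (volume_nearGram_section_le hκd (half_pos hρ₀))
  rw [lintegral_pi_ball_indicator R hf,
    ENNReal.mul_le_iff_le_inv hK measure_closedBall_lt_top.ne] at h_fubini
  have h_slice : 8 * (8 * d ^ 4 * δ) / (ρ₀ / 2) = 128 * d ^ 4 / ρ₀ * δ := by
    field_simp
    ring
  refine h_fubini.trans_eq ?_
  rw [h_slice, ENNReal.ofReal_mul (by positivity), mul_pow]
  ring

end NearGram

section LittlewoodPaley

/-- The total variation of the finitely supported signed measure on `ℝ` with weights `c`. -/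
def totalMass (c : ℝ →₀ ℝ) : ℝ := c.sum fun _ w => |w|

lemma totalMass_eq_sum {c : ℝ →₀ ℝ} {s : Finset ℝ} (hs : c.support ⊆ s) :
    totalMass c = ∑ a ∈ s, |c a| :=
  Finsupp.sum_of_support_subset c hs _ fun _ _ => abs_zero

lemma totalMass_add_le (c c' : ℝ →₀ ℝ) : totalMass (c + c') ≤ totalMass c + totalMass c' := by
  rw [totalMass_eq_sum Finsupp.support_add, totalMass_eq_sum Finset.subset_union_left,
    totalMass_eq_sum (c := c') Finset.subset_union_right, ← Finset.sum_add_distrib]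
  exact Finset.sum_le_sum fun a _ => abs_add_le _ _

lemma totalMass_neg (c : ℝ →₀ ℝ) : totalMass (-c) = totalMass c := by
  simp only [totalMass, Finsupp.sum, Finsupp.support_neg, Finsupp.neg_apply, abs_neg]

lemma totalMass_single (a w : ℝ) : totalMass (.single a w) = |w| :=
  Finsupp.sum_single_index abs_zero

lemma totalMass_sum_le {ι : Type*} (s : Finset ι) (c : ι → ℝ →₀ ℝ) :
    totalMass (∑ i ∈ s, c i) ≤ ∑ i ∈ s, totalMass (c i) :=
  Finset.le_sum_of_subadditive _ (Finsupp.sum_zero_index (h := fun _ w => |w|)).le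
    totalMass_add_le _ _

lemma abs_linearCombination_apply_le {X : Type*} {f : ℝ → X → ℝ} {c : ℝ →₀ ℝ} {x : X} {B : ℝ}
    (h : ∀ a ∈ c.support, |f a x| ≤ B) :
    |Finsupp.linearCombination ℝ f c x| ≤ totalMass c * B := by
  rw [Finsupp.linearCombination_apply, Finsupp.sum, Finset.sum_apply, totalMass, Finsupp.sum,
    Finset.sum_mul]
  refine (Finset.abs_sum_le_sum_abs _ _).trans (Finset.sum_le_sum fun a ha => ?_)
  rw [Pi.smul_apply, smul_eq_mul, abs_mul]
  gcongr
  exact h a ha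

lemma laplaceSum_eq_linearCombination (c : ℝ →₀ ℝ) (x : ℝ) :
    laplaceSum c x = Finsupp.linearCombination ℝ (fun a => Real.exp (-(a * x))) c := rfl

lemma laplaceSum_sub (c c' : ℝ →₀ ℝ) (x : ℝ) :
    laplaceSum (c - c') x = laplaceSum c x - laplaceSum c' x := by
  simp only [laplaceSum_eq_linearCombination, map_sub]

lemma laplaceSum_single (a w x : ℝ) :
    laplaceSum (.single a w) x = w * Real.exp (-(a * x)) := by
  rw [laplaceSum_eq_linearCombination, Finsupp.linearCombination_single, smul_eq_mul]

/-- The weights of the mixture of Gaussians whose multiplier is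
`exp (-t * x) * (1 - (1 - exp (-h * x)) ^ m)`: a smoothing at scale `h` of the Gaussian with
parameter `t`, agreeing with it to order `m` at low frequencies `x`. -/
def binomialWeights (m : ℕ) (t h : ℝ) : ℝ →₀ ℝ :=
  ∑ i ∈ Finset.range m, .single (t + (i + 1) * h) ((-1) ^ i * m.choose (i + 1))

lemma sum_choose_succ_mul_pow (m : ℕ) (y : ℝ) :
    ∑ i ∈ Finset.range m, m.choose (i + 1) * y ^ (i + 1) = (1 + y) ^ m - 1 := by
  rw [add_comm, add_pow, Finset.sum_range_succ']
  simp only [one_pow, mul_one, pow_zero, Nat.choose_zero_right, Nat.cast_one, add_sub_cancel_right,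
    mul_comm]

lemma laplaceSum_binomialWeights (m : ℕ) (t h x : ℝ) :
    laplaceSum (binomialWeights m t h) x =
      Real.exp (-(t * x)) * (1 - (1 - Real.exp (-(h * x))) ^ m) := by
  have h_binom := sum_choose_succ_mul_pow m (-Real.exp (-(h * x)))
  rw [← sub_eq_add_neg] at h_binom
  rw [← neg_sub _ (1 : ℝ), ← h_binom, laplaceSum_eq_linearCombination, binomialWeights, map_sum,
    ← Finset.sum_neg_distrib, Finset.mul_sum]
  refine Finset.sum_congr rfl fun i _ => ?_
  rw [Finsupp.linearCombination_single, smul_eq_mul, neg_pow (Real.exp _), ← Real.exp_nat_mul,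
    show -((t + (i + 1) * h) * x) = -(t * x) + ((i + 1 : ℕ) : ℝ) * -(h * x) by push_cast; ring,
    Real.exp_add]
  ring

lemma totalMass_binomialWeights_le (m : ℕ) (t h : ℝ) : totalMass (binomialWeights m t h) ≤ 2 ^ m :=
  calc totalMass (binomialWeights m t h)
      ≤ ∑ i ∈ Finset.range m, (m.choose (i + 1) : ℝ) * 1 ^ (i + 1) := by
        refine (totalMass_sum_le _ _).trans_eq (Finset.sum_congr rfl fun i _ => ?_)
        rw [totalMass_single, abs_mul, abs_neg_one_pow, Nat.abs_cast, one_mul, one_pow, mul_one]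
    _ ≤ 2 ^ m := by
        rw [sum_choose_succ_mul_pow, one_add_one_eq_two]
        linarith

lemma le_of_mem_support_binomialWeights {m : ℕ} {t h a : ℝ} (hh : 0 ≤ h)
    (ha : a ∈ (binomialWeights m t h).support) : t + h ≤ a := by
  obtain ⟨i, -, hi⟩ := Finset.mem_biUnion.1 (Finsupp.support_finsetSum ha)
  rw [Finset.mem_singleton.1 (Finsupp.support_single_subset hi)]
  nlinarith [mul_nonneg (Nat.cast_nonneg (α := ℝ) i) hh]

lemma binomialWeights_zero {m : ℕ} (hm : m ≠ 0) (t : ℝ) :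
    binomialWeights m t 0 = .single t 1 := by
  have h_one := sum_choose_succ_mul_pow m (-1)
  rw [add_neg_cancel, zero_pow hm] at h_one
  simp only [binomialWeights, mul_zero, add_zero, ← Finsupp.single_finsetSum]
  congr 1
  calc ∑ i ∈ Finset.range m, (-1 : ℝ) ^ i * m.choose (i + 1)
      = -∑ i ∈ Finset.range m, m.choose (i + 1) * (-1 : ℝ) ^ (i + 1) := by
        rw [← Finset.sum_neg_distrib]
        exact Finset.sum_congr rfl fun i _ => by ring
    _ = 1 := by rw [h_one, zero_sub, neg_neg]

lemma abs_laplaceSum_binomialWeights_le {m : ℕ} {t h x : ℝ} (hhx : 0 ≤ h * x) :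
    |laplaceSum (binomialWeights m t h) x| ≤ 2 ^ m * Real.exp (-((t + h) * x)) := by
  rw [laplaceSum_binomialWeights, add_mul, neg_add, Real.exp_add]
  have hE0 := Real.exp_pos (-(h * x))
  have hE1 : Real.exp (-(h * x)) ≤ 1 := Real.exp_le_one_iff.2 (by linarith)
  set E := Real.exp (-(h * x))
  have h_pow : (1 - E) ^ m ≤ 1 := pow_le_one₀ (by linarith) (by linarith)
  have h_bernoulli := one_add_mul_le_pow (a := -E) (by linarith) m
  rw [← sub_eq_add_neg] at h_bernoulli
  have h_two : (m : ℝ) ≤ 2 ^ m := by exact_mod_cast Nat.lt_two_pow_self.le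
  rw [abs_of_nonneg (mul_nonneg (Real.exp_pos _).le (by linarith)), mul_left_comm]
  gcongr
  nlinarith [mul_le_mul_of_nonneg_right h_two hE0.le]

lemma abs_laplaceSum_binomialWeights_sub_le {m : ℕ} {t h x : ℝ} (htx : 0 ≤ t * x)
    (hhx : 0 ≤ h * x) :
    |laplaceSum (binomialWeights m t h - binomialWeights m t (2 * h)) x| ≤
      2 ^ m * (h * x) ^ m * Real.exp (-(h * x)) := by
  rw [laplaceSum_sub, laplaceSum_binomialWeights, laplaceSum_binomialWeights,
    show -(2 * h * x) = (2 : ℕ) * -(h * x) by push_cast; ring, Real.exp_nat_mul]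
  have ht1 : Real.exp (-(t * x)) ≤ 1 := Real.exp_le_one_iff.2 (by linarith)
  have hE0 := Real.exp_pos (-(h * x))
  have hE1 : Real.exp (-(h * x)) ≤ 1 := Real.exp_le_one_iff.2 (by linarith)
  have h_lin : 1 - Real.exp (-(h * x)) ≤ h * x := by linarith [Real.add_one_le_exp (-(h * x))]
  set E := Real.exp (-(h * x))
  have h_factor : Real.exp (-(t * x)) * (1 - (1 - E) ^ m) -
      Real.exp (-(t * x)) * (1 - (1 - E ^ 2) ^ m) =
      Real.exp (-(t * x)) * ((1 - E) ^ m * ((1 + E) ^ m - 1)) := by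
    rw [show 1 - E ^ 2 = (1 - E) * (1 + E) by ring, mul_pow]
    ring
  have h_one_le : 1 ≤ (1 + E) ^ m := one_le_pow₀ (by linarith)
  have h_convex : (1 + E) ^ m - 1 ≤ 2 ^ m * E := by
    calc (1 + E) ^ m - 1 ≤ ∑ i ∈ Finset.range m, (m.choose (i + 1) * 1 ^ (i + 1)) * E := by
          rw [← sum_choose_succ_mul_pow]
          refine Finset.sum_le_sum fun i _ => ?_
          rw [one_pow, mul_one]
          gcongr
          exact pow_le_of_le_one hE0.le hE1 i.succ_ne_zero
      _ ≤ 2 ^ m * E := by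
          rw [← Finset.sum_mul, sum_choose_succ_mul_pow, one_add_one_eq_two]
          gcongr
          linarith
  have h_nonneg : 0 ≤ (1 - E) ^ m := pow_nonneg (by linarith) _
  rw [h_factor, abs_of_nonneg (mul_nonneg (Real.exp_pos _).le
    (mul_nonneg h_nonneg (by linarith)))]
  calc _ ≤ 1 * ((h * x) ^ m * (2 ^ m * E)) := by gcongr
    _ = _ := by ring

lemma abs_laplaceSum_single_sub_binomialWeights_le {m : ℕ} {t x : ℝ} (htx : 0 ≤ t * x) :
    |laplaceSum (.single t 1 - binomialWeights m t (2 * t)) x| ≤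
      2 ^ m * (t * x) ^ m * Real.exp (-(t * x)) := by
  rw [laplaceSum_sub, laplaceSum_binomialWeights, laplaceSum_single, one_mul, ← mul_pow]
  have hE1 : Real.exp (-(2 * t * x)) ≤ 1 := Real.exp_le_one_iff.2 (by linarith)
  have h_lin : 1 - Real.exp (-(2 * t * x)) ≤ 2 * (t * x) := by
    linarith [Real.add_one_le_exp (-(2 * t * x))]
  have h_nonneg : 0 ≤ (1 - Real.exp (-(2 * t * x))) ^ m := pow_nonneg (by linarith) _
  rw [← mul_one_sub, sub_sub_cancel, mul_comm,
    abs_of_nonneg (mul_nonneg h_nonneg (Real.exp_pos _).le)]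
  gcongr

lemma rpow_le_rpow_self_mul_exp {p y : ℝ} (hp : 0 < p) (hy : 0 ≤ y) :
    y ^ p ≤ p ^ p * Real.exp y :=
  calc y ^ p ≤ (p * Real.exp (y / p)) ^ p := by
        gcongr
        have := Real.add_one_le_exp (y / p)
        rw [← div_le_iff₀' hp]
        linarith
    _ = p ^ p * Real.exp y := by
        rw [Real.mul_rpow hp.le (Real.exp_pos _).le, ← Real.exp_mul, div_mul_cancel₀ _ hp.ne']

/-- The mixture of Gaussians with weights `c` is a Littlewood–Paley piece at scale `τ` (frequency
`‖ξ‖ ^ 2 ∼ τ⁻¹`): its multiplier is small both at high frequencies and, relative to the decay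
`‖ξ‖ ^ (-s)`, at low frequencies. -/
structure IsLittlewoodPaleyPiece (s K τ : ℝ) (c : ℝ →₀ ℝ) : Prop where
  le_of_mem_support : ∀ a ∈ c.support, τ ≤ a
  totalMass_le : totalMass c ≤ K
  laplaceSum_sq_mul_le : ∀ x, 0 < x →
    laplaceSum c x ^ 2 * min 1 (x ^ (-(s / 2))) ≤ K * τ ^ (s / 2) * Real.exp (-(τ * x))

lemma sq_mul_min_one_rpow_le {m : ℕ} {s τ x q : ℝ} (hm : s / 2 < 2 * m) (hτ : 0 < τ)
    (hx : 0 < x) (hq : |q| ≤ 2 ^ m * (τ * x) ^ m * Real.exp (-(τ * x))) :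
    q ^ 2 * min 1 (x ^ (-(s / 2))) ≤
      4 ^ m * (2 * m - s / 2) ^ (2 * m - s / 2) * τ ^ (s / 2) * Real.exp (-(τ * x)) := by
  have h_min : min 1 (x ^ (-(s / 2))) ≤ τ ^ (s / 2) * (τ * x) ^ (-(s / 2)) := by
    refine (min_le_right _ _).trans_eq ?_
    rw [Real.mul_rpow hτ.le hx.le, ← mul_assoc, ← Real.rpow_add hτ, add_neg_cancel,
      Real.rpow_zero, one_mul]
  have hy : 0 < τ * x := by positivity
  set y := τ * x
  have h_rpow : (y ^ m) ^ 2 * y ^ (-(s / 2)) = y ^ (2 * m - s / 2) := by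
    rw [← pow_mul, ← Real.rpow_natCast, ← Real.rpow_add hy]
    push_cast
    ring_nf
  calc q ^ 2 * min 1 (x ^ (-(s / 2)))
      ≤ (2 ^ m * y ^ m * Real.exp (-y)) ^ 2 * (τ ^ (s / 2) * y ^ (-(s / 2))) := by
        rw [← sq_abs]
        gcongr
    _ = 4 ^ m * y ^ (2 * m - s / 2) * Real.exp (-y) * τ ^ (s / 2) * Real.exp (-y) := by
        rw [← h_rpow, show (4 : ℝ) ^ m = (2 ^ m) ^ 2 by rw [← pow_mul, mul_comm, pow_mul]; norm_num]
        ring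
    _ ≤ 4 ^ m * ((2 * m - s / 2) ^ (2 * m - s / 2) * Real.exp y) * Real.exp (-y) * τ ^ (s / 2) *
          Real.exp (-y) := by
        gcongr
        exact rpow_le_rpow_self_mul_exp (by linarith) hy.le
    _ = _ := by
        rw [Real.exp_neg]
        field_simp

lemma isLittlewoodPaleyPiece_one {m : ℕ} {s t h K : ℝ} (hh : 0 ≤ h) (hth : 1 ≤ t + h)
    (hK : 4 ^ m ≤ K) : IsLittlewoodPaleyPiece s K 1 (binomialWeights m t h) where
  le_of_mem_support _ ha := hth.trans (le_of_mem_support_binomialWeights hh ha)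
  totalMass_le := (totalMass_binomialWeights_le m t h).trans
    (le_trans (by gcongr; norm_num) hK)
  laplaceSum_sq_mul_le x hx := by
    have h_exp : Real.exp (-((t + h) * x)) ≤ Real.exp (-(1 * x)) := by gcongr
    have h_le_one : Real.exp (-(1 * x)) ≤ 1 := Real.exp_le_one_iff.2 (by linarith)
    calc laplaceSum (binomialWeights m t h) x ^ 2 * min 1 (x ^ (-(s / 2)))
        ≤ (2 ^ m * Real.exp (-(1 * x))) ^ 2 * 1 := by
          rw [← sq_abs]
          gcongr
          · exact (abs_laplaceSum_binomialWeights_le (by positivity)).trans (by gcongr)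
          · exact min_le_left _ _
      _ = 4 ^ m * Real.exp (-(1 * x)) * Real.exp (-(1 * x)) := by
          rw [show (4 : ℝ) ^ m = (2 ^ m) ^ 2 by rw [← pow_mul, mul_comm, pow_mul]; norm_num]
          ring
      _ ≤ K * 1 * Real.exp (-(1 * x)) := by
          gcongr
          exact le_trans (by positivity) hK
      _ = _ := by rw [Real.one_rpow]

/-- A constant for which the pieces of order `m` are Littlewood–Paley pieces. -/
def littlewoodPaleyConst (m : ℕ) (s : ℝ) : ℝ :=
  4 ^ m * max 1 ((2 * m - s / 2) ^ (2 * m - s / 2))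

lemma four_pow_le_littlewoodPaleyConst (m : ℕ) (s : ℝ) : 4 ^ m ≤ littlewoodPaleyConst m s :=
  le_mul_of_one_le_right (by positivity) (le_max_left _ _)

lemma isLittlewoodPaleyPiece_sub {m : ℕ} {s τ : ℝ} {c c' : ℝ →₀ ℝ} (hm : m ≠ 0)
    (hsm : s / 2 < 2 * m) (hτ : 0 < τ) (hc : ∀ a ∈ c.support, τ ≤ a)
    (hc' : ∀ a ∈ c'.support, τ ≤ a) (h_mass : totalMass c ≤ 2 ^ m) (h_mass' : totalMass c' ≤ 2 ^ m)
    (h : ∀ x, 0 < x → |laplaceSum (c - c') x| ≤ 2 ^ m * (τ * x) ^ m * Real.exp (-(τ * x))) :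
    IsLittlewoodPaleyPiece s (littlewoodPaleyConst m s) τ (c - c') where
  le_of_mem_support a ha := (Finset.mem_union.1 (Finsupp.support_sub ha)).elim (hc a) (hc' a)
  totalMass_le := by
    have h_add := totalMass_add_le c (-c')
    rw [totalMass_neg, ← sub_eq_add_neg] at h_add
    have h_two : (2 : ℝ) ≤ 2 ^ m := le_self_pow₀ one_le_two hm
    have h_four : (4 : ℝ) ^ m = 2 ^ m * 2 ^ m := by rw [← mul_pow]; norm_num
    nlinarith [four_pow_le_littlewoodPaleyConst m s]
  laplaceSum_sq_mul_le x hx := (sq_mul_min_one_rpow_le hsm hτ hx (h x hx)).trans (by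
    unfold littlewoodPaleyConst
    gcongr
    exact le_max_right _ _)

lemma isLittlewoodPaleyPiece_binomialWeights_sub {m : ℕ} {s t h : ℝ} (hm : m ≠ 0)
    (hsm : s / 2 < 2 * m) (ht : 0 ≤ t) (hh : 0 < h) :
    IsLittlewoodPaleyPiece s (littlewoodPaleyConst m s) h
      (binomialWeights m t h - binomialWeights m t (2 * h)) := by
  refine isLittlewoodPaleyPiece_sub hm hsm hh (fun a ha => ?_) (fun a ha => ?_)
    (totalMass_binomialWeights_le _ _ _) (totalMass_binomialWeights_le _ _ _)
    fun x hx => abs_laplaceSum_binomialWeights_sub_le (by positivity) (by positivity)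
  · linarith [le_of_mem_support_binomialWeights hh.le ha]
  · linarith [le_of_mem_support_binomialWeights (by positivity) ha]

lemma isLittlewoodPaleyPiece_single_sub_binomialWeights {m : ℕ} {s t : ℝ} (hm : m ≠ 0)
    (hsm : s / 2 < 2 * m) (ht : 0 < t) :
    IsLittlewoodPaleyPiece s (littlewoodPaleyConst m s) t
      (.single t 1 - binomialWeights m t (2 * t)) := by
  refine isLittlewoodPaleyPiece_sub hm hsm ht (fun a ha => ?_) (fun a ha => ?_) ?_
    (totalMass_binomialWeights_le _ _ _)
    fun x hx => abs_laplaceSum_single_sub_binomialWeights_le (by positivity)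
  · exact (Finset.mem_singleton.1 (Finsupp.support_single_subset ha)).ge
  · linarith [le_of_mem_support_binomialWeights (by positivity) ha]
  · rw [totalMass_single, abs_one]
    exact one_le_pow₀ one_le_two

lemma exists_littlewoodPaley_decomposition {s : ℝ} (hs : 0 < s) :
    ∃ K, ∀ J : ℕ, ∃ c : ℕ → ℝ →₀ ℝ,
      (∀ j ≤ J, IsLittlewoodPaleyPiece s K ((1 / 2) ^ j) (c j)) ∧
      ∑ j ∈ Finset.range (J + 1), c j = .single ((1 / 2) ^ J) 1 := by
  obtain ⟨m, hsm⟩ := exists_nat_gt s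
  have hm : m ≠ 0 := Nat.cast_ne_zero.1 (hs.trans hsm).ne'
  refine ⟨littlewoodPaleyConst m s, fun J => ?_⟩
  have ht : (0 : ℝ) < (1 / 2) ^ J := by positivity
  set t : ℝ := (1 / 2) ^ J with t_def
  set b : ℕ → ℝ →₀ ℝ := fun j => if j < J then binomialWeights m t ((1 / 2) ^ j) else
    .single t 1 with b_def
  refine ⟨Nat.rec (b 0) fun i _ => b (i + 1) - b i, fun j hj => ?_, ?_⟩
  · rcases j with _ | i
    · have h_const := four_pow_le_littlewoodPaleyConst m s
      rcases J.eq_zero_or_pos with rfl | hJ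
      · simpa [b_def, ← binomialWeights_zero hm t] using
          isLittlewoodPaleyPiece_one le_rfl (by simp [t_def]) h_const
      · simpa [b_def, hJ] using isLittlewoodPaleyPiece_one zero_le_one (by linarith) h_const
    have h_bi : b i = binomialWeights m t (2 * (1 / 2) ^ (i + 1)) := by
      rw [show (2 : ℝ) * (1 / 2) ^ (i + 1) = (1 / 2) ^ i by rw [pow_succ]; ring]
      exact if_pos (Nat.lt_of_succ_le hj)
    change IsLittlewoodPaleyPiece s _ _ (b (i + 1) - b i)
    rcases hj.lt_or_eq with hj | hj
    · rw [h_bi, show b (i + 1) = binomialWeights m t ((1 / 2) ^ (i + 1)) from if_pos hj]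
      exact isLittlewoodPaleyPiece_binomialWeights_sub hm (by linarith) ht.le (by positivity)
    · rw [h_bi, show b (i + 1) = .single t 1 from if_neg hj.not_lt, hj, ← t_def]
      exact isLittlewoodPaleyPiece_single_sub_binomialWeights hm (by linarith) ht
  · rw [Finset.sum_range_succ']
    change ∑ i ∈ Finset.range J, (b (i + 1) - b i) + b 0 = _
    rw [Finset.sum_range_sub, sub_add_cancel]
    exact if_neg (lt_irrefl J)

end LittlewoodPaley

section DifferenceLaw

lemma gaussKernel_neg {V : Type*} [NormedAddCommGroup V] [InnerProductSpace ℝ V] (a : ℝ) (x : V) :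
    gaussKernel a (-x) = gaussKernel a x := by
  rw [gaussKernel, gaussKernel, norm_neg]

lemma HasGaussianPotential.abs_gaussSmoothing_le {V : Type*} [NormedAddCommGroup V]
    [InnerProductSpace ℝ V] [MeasurableSpace V] [OpensMeasurableSpace V] {μ : Measure V}
    {s C : ℝ} (hC : 0 ≤ C) (hμ : HasGaussianPotential μ s C) {a : ℝ} (ha : 0 < a) (z : V) :
    |gaussSmoothing μ a z| ≤ C * a ^ ((s - Module.finrank ℝ V) / 2) := by
  have h_nonneg : ∀ w, 0 ≤ gaussKernel a (w - z) := fun w => gaussKernel_nonneg ha _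
  have h_cont : Continuous fun w => gaussKernel a (w - z) := by fun_prop
  rw [gaussSmoothing, abs_of_nonneg (integral_nonneg h_nonneg),
    integral_eq_lintegral_of_nonneg_ae (.of_forall h_nonneg)
      h_cont.measurable.aestronglyMeasurable]
  refine ENNReal.toReal_le_of_le_ofReal (by positivity) ?_
  simp_rw [← gaussKernel_neg a (_ - z), neg_sub]
  exact hμ ha z

variable {ι V : Type*} [NormedAddCommGroup V] [InnerProductSpace ℝ V]

/-- The action on a vector of the linear map whose matrix has rows `A i`; it is the transpose of
`rowCombination A`. -/
def rowAction (A : ι → V) (v : V) : EuclideanSpace ℝ ι := WithLp.toLp 2 fun i => inner ℝ (A i) v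

@[fun_prop]
lemma continuous_rowAction : Continuous fun p : (ι → V) × V => rowAction p.1 p.2 :=
  (PiLp.continuous_toLp 2 _).comp (by fun_prop)

lemma inner_rowAction [Fintype ι] (A : ι → V) (v : V) (ξ : EuclideanSpace ℝ ι) :
    inner ℝ (rowAction A v) ξ = inner ℝ v (rowCombination A ξ) := by
  simp only [rowAction, rowCombination, PiLp.inner_apply, inner_sum, real_inner_smul_right,
    RCLike.inner_apply, conj_trivial, real_inner_comm v]

variable [MeasurableSpace V]

/-- The law of `x - A v` for independent `x` of law `μ` and `v` of law `ν`, where `A` is the matrix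
with rows `A i`. -/
def differenceLaw (μ : Measure (EuclideanSpace ℝ ι)) (ν : Measure V) (A : ι → V) :
    Measure (EuclideanSpace ℝ ι) :=
  (μ.prod ν).map fun p => p.1 - rowAction A p.2

variable [BorelSpace V] (μ : Measure (EuclideanSpace ℝ ι)) (ν : Measure V)

lemma measurable_sub_rowAction [Finite ι] (A : ι → V) :
    Measurable fun p : EuclideanSpace ℝ ι × V => p.1 - rowAction A p.2 := by
  cases nonempty_fintype ι
  have h_cont : Continuous (rowAction A) := by fun_prop
  exact measurable_fst.sub (h_cont.measurable.comp measurable_snd)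

instance [Finite ι] [IsProbabilityMeasure μ] [IsProbabilityMeasure ν] (A : ι → V) :
    IsProbabilityMeasure (differenceLaw μ ν A) :=
  Measure.isProbabilityMeasure_map (measurable_sub_rowAction A).aemeasurable

lemma integral_differenceLaw [Finite ι] {E : Type*} [NormedAddCommGroup E] [NormedSpace ℝ E]
    (A : ι → V) {f : EuclideanSpace ℝ ι → E} (hf : Continuous f) :
    ∫ w, f w ∂differenceLaw μ ν A = ∫ p, f (p.1 - rowAction A p.2) ∂μ.prod ν :=
  integral_map (measurable_sub_rowAction A).aemeasurable hf.aestronglyMeasurable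

variable [Fintype ι]

lemma norm_charFun_differenceLaw [SFinite μ] [SFinite ν] (A : ι → V) (ξ : EuclideanSpace ℝ ι) :
    ‖charFun (differenceLaw μ ν A) ξ‖ = ‖charFun μ ξ‖ * ‖charFun ν (rowCombination A ξ)‖ := by
  have h_exp : ∀ p : EuclideanSpace ℝ ι × V,
      Complex.exp (inner ℝ (p.1 - rowAction A p.2) ξ * Complex.I) =
        Complex.exp (inner ℝ p.1 ξ * Complex.I) *
          Complex.exp (inner ℝ p.2 (-rowCombination A ξ) * Complex.I) := fun p => by
    rw [← Complex.exp_add, inner_sub_left, inner_rowAction, inner_neg_right]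
    push_cast
    ring_nf
  rw [charFun_apply, integral_differenceLaw μ ν A (by fun_prop)]
  simp_rw [h_exp]
  rw [integral_prod_mul (fun x => Complex.exp (inner ℝ x ξ * Complex.I))
      (fun v => Complex.exp (inner ℝ v (-rowCombination A ξ) * Complex.I)),
    ← charFun_apply, ← charFun_apply, charFun_neg, norm_mul, RCLike.norm_conj]

variable {μ} in
lemma HasGaussianPotential.differenceLaw [SFinite μ] [IsProbabilityMeasure ν] {s C : ℝ}
    (hμ : HasGaussianPotential μ s C) (A : ι → V) :
    HasGaussianPotential (differenceLaw μ ν A) s C := by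
  intro a ha x
  have h_meas : Measurable fun p : EuclideanSpace ℝ ι × V =>
      ENNReal.ofReal (gaussKernel a (x - (p.1 - rowAction A p.2))) :=
    (Continuous.measurable (f := fun w => gaussKernel a (x - w)) (by fun_prop)).comp
      (measurable_sub_rowAction A) |>.ennreal_ofReal
  rw [_root_.differenceLaw, lintegral_map (Continuous.measurable (by fun_prop)).ennreal_ofReal
    (measurable_sub_rowAction A), lintegral_prod_symm _ h_meas.aemeasurable]
  simp_rw [sub_sub_eq_add_sub]
  refine (lintegral_mono fun v => hμ ha (x + rowAction A v)).trans_eq ?_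
  rw [lintegral_const, measure_univ, mul_one]

variable [FiniteDimensional ℝ V]

lemma measurable_gaussSmoothing_differenceLaw [SFinite μ] [SFinite ν] (a : ℝ) :
    Measurable fun q : (ι → V) × EuclideanSpace ℝ ι =>
      gaussSmoothing (differenceLaw μ ν q.1) a q.2 := by
  have h_cont : Continuous fun q : ((ι → V) × EuclideanSpace ℝ ι) × (EuclideanSpace ℝ ι × V) =>
      gaussKernel a (q.2.1 - rowAction q.1.1 q.2.2 - q.1.2) := by fun_prop
  simp_rw [gaussSmoothing]
  have h_eq := fun q : (ι → V) × EuclideanSpace ℝ ι => integral_differenceLaw μ ν q.1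
    (f := fun w => gaussKernel a (w - q.2)) (by fun_prop)
  simp_rw [h_eq]
  exact h_cont.stronglyMeasurable.integral_prod_right.measurable

lemma measurable_linearCombination_gaussSmoothing_differenceLaw [SFinite μ] [SFinite ν]
    (c : ℝ →₀ ℝ) :
    Measurable fun q : (ι → V) × EuclideanSpace ℝ ι =>
      Finsupp.linearCombination ℝ (gaussSmoothing (differenceLaw μ ν q.1)) c q.2 := by
  simp_rw [Finsupp.linearCombination_apply, Finsupp.sum, Finset.sum_apply, Pi.smul_apply]
  exact Finset.measurable_sum _ fun a _ =>
    (measurable_gaussSmoothing_differenceLaw μ ν a).const_smul (c a)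

end DifferenceLaw

section Minkowski

variable {X : Type*} [MeasurableSpace X] {μ : Measure X}

lemma lintegral_enorm_sum_pow_le {E : Type*} [NormedAddCommGroup E] {p : ℕ} (hp : p ≠ 0)
    {n : ℕ} {F : ℕ → X → E} (hF : ∀ j, j < n → AEStronglyMeasurable (F j) μ) {B r : ℝ≥0∞}
    (h : ∀ j, j < n → ∫⁻ x, ‖F j x‖ₑ ^ p ∂μ ≤ B * (r ^ j) ^ p) :
    ∫⁻ x, ‖∑ j ∈ Finset.range n, F j x‖ₑ ^ p ∂μ ≤ B * (1 - r)⁻¹ ^ p := by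
  have hp₁ : (1 : ℝ) ≤ p := Nat.one_le_cast.2 (Nat.one_le_iff_ne_zero.2 hp)
  have hp₀ : (0 : ℝ) < p := by positivity
  have h_norm : ∀ f : X → E, ∫⁻ x, ‖f x‖ₑ ^ p ∂μ = eLpNorm' f p μ ^ p := fun f => by
    simp_rw [← ENNReal.rpow_natCast, ← lintegral_rpow_enorm_eq_rpow_eLpNorm' hp₀]
  have h_pow : ∀ a : ℝ≥0∞, B * a ^ p = (B ^ (p : ℝ)⁻¹ * a) ^ p := fun a => by
    rw [mul_pow, ← ENNReal.rpow_natCast (B ^ _), ENNReal.rpow_inv_rpow hp₀.ne']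
  have h_term : ∀ j ∈ Finset.range n, eLpNorm' (F j) p μ ≤ B ^ (p : ℝ)⁻¹ * r ^ j := fun j hj => by
    rw [← ENNReal.pow_le_pow_left_iff hp, ← h_norm, ← h_pow]
    exact h j (Finset.mem_range.1 hj)
  simp_rw [← Finset.sum_apply]
  rw [h_norm, h_pow]
  gcongr
  calc eLpNorm' (∑ j ∈ Finset.range n, F j) p μ
      ≤ ∑ j ∈ Finset.range n, B ^ (p : ℝ)⁻¹ * r ^ j :=
        (eLpNorm'_sum_le (fun j hj => hF j (Finset.mem_range.1 hj)) hp₁).trans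
          (Finset.sum_le_sum h_term)
    _ ≤ B ^ (p : ℝ)⁻¹ * (1 - r)⁻¹ := by
        rw [← Finset.mul_sum, ← ENNReal.tsum_geometric]
        gcongr
        exact ENNReal.sum_le_tsum _

end Minkowski

section AveragedEstimates

variable {d : ℕ} {V : Type*} [NormedAddCommGroup V] [InnerProductSpace ℝ V]
  [FiniteDimensional ℝ V] [MeasurableSpace V] [BorelSpace V]
  {μ : Measure (Pt d)} {ν : Measure V} [IsProbabilityMeasure ν]
  {s C ρ₀ : ℝ}

lemma HasGaussianPotential.setLIntegral_closedBall_norm_charFun_smul_le (hC : 0 ≤ C)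
    (hν : HasGaussianPotential ν s C) {r : ℝ} (hr : 0 < r) (R : ℝ) :
    ∫⁻ η in closedBall 0 R, ENNReal.ofReal (‖charFun ν (r • η)‖ ^ 2) ≤
      ENNReal.ofReal (Real.exp (R ^ 2) * (Real.pi ^ (Module.finrank ℝ V / 2 : ℝ) + C)) *
        ENNReal.ofReal (min 1 (r ^ (-s))) :=
  calc ∫⁻ η in closedBall 0 R, ENNReal.ofReal (‖charFun ν (r • η)‖ ^ 2)
      ≤ ∫⁻ η in closedBall 0 R, ENNReal.ofReal (Real.exp (R ^ 2)) *
          ENNReal.ofReal (Real.exp (-‖η‖ ^ 2) * ‖charFun ν (r • η)‖ ^ 2) := by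
        refine setLIntegral_mono' measurableSet_closedBall fun η hη => ?_
        have hηR := mem_closedBall_zero_iff.1 hη
        rw [← ENNReal.ofReal_mul (Real.exp_pos _).le, ← mul_assoc, ← Real.exp_add]
        refine ENNReal.ofReal_le_ofReal (le_mul_of_one_le_left (by positivity)
          (Real.one_le_exp ?_))
        nlinarith [norm_nonneg η]
    _ ≤ ENNReal.ofReal (Real.exp (R ^ 2)) * ∫⁻ η,
          ENNReal.ofReal (Real.exp (-‖η‖ ^ 2) * ‖charFun ν (r • η)‖ ^ 2) := by
        rw [lintegral_const_mul' _ _ ENNReal.ofReal_ne_top]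
        gcongr
        exact Measure.restrict_le_self
    _ ≤ _ := by
        rw [← ENNReal.ofReal_mul (by positivity), mul_assoc (Real.exp _),
          ENNReal.ofReal_mul (Real.exp_pos _).le]
        gcongr
        exact hν.lintegral_norm_charFun_smul_le hC hr

lemma HasGaussianPotential.exists_setLIntegral_norm_charFun_rowCombination_le [NeZero d]
    (hC : 0 ≤ C) (hν : HasGaussianPotential ν s C) (hρ₀ : 0 < ρ₀) (ρ₁ : ℝ) :
    ∃ C' : ℝ≥0∞, C' ≠ ∞ ∧ ∀ ⦃δ : ℝ⦄, 2 * (d ^ 2 * δ) ≤ ρ₀ → ∀ ⦃ξ : Pt d⦄, ξ ≠ 0 →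
      ∫⁻ A in nearConformal (Fin d) V ρ₀ ρ₁ δ,
          ENNReal.ofReal (‖charFun ν (rowCombination A ξ)‖ ^ 2) ≤
        C' * ENNReal.ofReal δ ^ Fintype.card (PairIdx' d) *
          ENNReal.ofReal (min 1 (‖ξ‖ ^ (-s))) := by
  obtain ⟨C₁, R, hC₁, h⟩ := exists_setLIntegral_nearConformal_le (d := d) V hρ₀ ρ₁
  set C₂ := Real.exp (R ^ 2) * (Real.pi ^ (Module.finrank ℝ V / 2 : ℝ) + C)
  refine ⟨C₁ * ENNReal.ofReal C₂, by finiteness, fun δ hδ ξ hξ => ?_⟩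
  have hξ' : 0 < ‖ξ‖ := norm_pos_iff.2 hξ
  have h_unit : ‖‖ξ‖⁻¹ • ξ‖ = 1 := by
    rw [norm_smul, norm_inv, norm_norm, inv_mul_cancel₀ hξ'.ne']
  have h_scale : ∀ A : Fin d → V, rowCombination A ξ = ‖ξ‖ • rowCombination A (‖ξ‖⁻¹ • ξ) :=
    fun A => by rw [← rowCombination_smul, smul_inv_smul₀ hξ'.ne']
  have h_meas : Measurable fun η => ENNReal.ofReal (‖charFun ν (‖ξ‖ • η)‖ ^ 2) := by fun_prop
  simp_rw [h_scale]
  calc _ ≤ _ := h hδ h_unit h_meas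
    _ ≤ C₁ * ENNReal.ofReal δ ^ Fintype.card (PairIdx' d) *
        (ENNReal.ofReal C₂ * ENNReal.ofReal (min 1 (‖ξ‖ ^ (-s)))) := by
      gcongr
      exact hν.setLIntegral_closedBall_norm_charFun_smul_le hC hξ' R
    _ = _ := by ring

variable {K τ : ℝ} {c : ℝ →₀ ℝ}

lemma IsLittlewoodPaleyPiece.abs_linearCombination_gaussSmoothing_le (hC : 0 ≤ C) (hsd : s ≤ d)
    (hτ : 0 < τ) (hc : IsLittlewoodPaleyPiece s K τ c) (hμ : HasGaussianPotential μ s C)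
    (z : Pt d) :
    |Finsupp.linearCombination ℝ (gaussSmoothing μ) c z| ≤ K * (C * τ ^ ((s - d) / 2)) := by
  refine (abs_linearCombination_apply_le (B := C * τ ^ ((s - d) / 2)) fun a ha => ?_).trans
    (mul_le_mul_of_nonneg_right hc.totalMass_le (by positivity))
  have hτa := hc.le_of_mem_support a ha
  refine (hμ.abs_gaussSmoothing_le hC (hτ.trans_le hτa) z).trans ?_
  rw [finrank_euclideanSpace_fin]
  exact mul_le_mul_of_nonneg_left
    (Real.rpow_le_rpow_of_nonpos hτ hτa (by linarith)) hC

variable [IsProbabilityMeasure μ]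

lemma IsLittlewoodPaleyPiece.nonneg (hc : IsLittlewoodPaleyPiece s K τ c) : 0 ≤ K :=
  (Finset.sum_nonneg fun _ _ => abs_nonneg _).trans hc.totalMass_le

lemma IsLittlewoodPaleyPiece.lintegral_laplaceSum_mul_norm_charFun_le [NeZero d] (hτ : 0 < τ)
    (hc : IsLittlewoodPaleyPiece s K τ c) (hμ : HasGaussianPotential μ s C) :
    ∫⁻ ξ, ENNReal.ofReal (laplaceSum c (‖ξ‖ ^ 2) ^ 2 * ‖charFun μ ξ‖ ^ 2) *
        ENNReal.ofReal (min 1 (‖ξ‖ ^ (-s))) ≤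
      ENNReal.ofReal (K * C * τ ^ (s - d / 2)) := by
  have hK := hc.nonneg
  calc ∫⁻ ξ, ENNReal.ofReal (laplaceSum c (‖ξ‖ ^ 2) ^ 2 * ‖charFun μ ξ‖ ^ 2) *
        ENNReal.ofReal (min 1 (‖ξ‖ ^ (-s)))
      ≤ ∫⁻ ξ, ENNReal.ofReal (K * τ ^ (s / 2)) *
          ENNReal.ofReal (Real.exp (-(τ * ‖ξ‖ ^ 2)) * ‖charFun μ ξ‖ ^ 2) := by
        refine lintegral_mono_ae ?_
        filter_upwards [Measure.ae_ne volume (0 : Pt d)] with ξ hξ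
        have hξ' : 0 < ‖ξ‖ := norm_pos_iff.2 hξ
        have h_piece := hc.laplaceSum_sq_mul_le (‖ξ‖ ^ 2) (by positivity)
        rw [← Real.rpow_natCast_mul hξ'.le, show ((2 : ℕ) : ℝ) * -(s / 2) = -s by
          push_cast; ring] at h_piece
        rw [← ENNReal.ofReal_mul (by positivity), ← ENNReal.ofReal_mul (by positivity),
          mul_right_comm, ← mul_assoc]
        gcongr
    _ ≤ ENNReal.ofReal (K * τ ^ (s / 2)) *
          ENNReal.ofReal (C * τ ^ ((s - Module.finrank ℝ (Pt d)) / 2)) := by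
        rw [lintegral_const_mul' _ _ ENNReal.ofReal_ne_top]
        gcongr
        exact lintegral_exp_mul_norm_charFun_le hτ (hμ hτ)
    _ = _ := by
        rw [← ENNReal.ofReal_mul (by positivity), finrank_euclideanSpace_fin, mul_mul_mul_comm,
          ← Real.rpow_add hτ]
        ring_nf

lemma IsLittlewoodPaleyPiece.lintegral_sq_le [NeZero d] (hτ : 0 < τ)
    (hc : IsLittlewoodPaleyPiece s K τ c) (hμ : HasGaussianPotential μ s C) {S : Set (Fin d → V)}
    {B : ℝ≥0∞} (hS : ∀ ξ : Pt d, ξ ≠ 0 →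
      ∫⁻ A in S, ENNReal.ofReal (‖charFun ν (rowCombination A ξ)‖ ^ 2) ≤
        B * ENNReal.ofReal (min 1 (‖ξ‖ ^ (-s)))) :
    ∫⁻ A in S, ∫⁻ z, ENNReal.ofReal
        (Finsupp.linearCombination ℝ (gaussSmoothing (differenceLaw μ ν A)) c z ^ 2) ≤
      ENNReal.ofReal ((2 * Real.pi) ^ d * (K * C * τ ^ (s - d / 2))) * B := by
  have hc₀ : ∀ a ∈ c.support, 0 < a := fun a ha => hτ.trans_le (hc.le_of_mem_support a ha)
  have h_symbol : Measurable fun ξ : Pt d =>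
      ENNReal.ofReal (laplaceSum c (‖ξ‖ ^ 2) ^ 2 * ‖charFun μ ξ‖ ^ 2) := by
    simp_rw [laplaceSum, Finsupp.sum]
    fun_prop
  have h_meas : Measurable fun q : (Fin d → V) × Pt d =>
      ENNReal.ofReal (laplaceSum c (‖q.2‖ ^ 2) ^ 2 * ‖charFun μ q.2‖ ^ 2) *
        ENNReal.ofReal (‖charFun ν (rowCombination q.1 q.2)‖ ^ 2) :=
    (h_symbol.comp measurable_snd).mul ((measurable_charFun.comp
      continuous_rowCombination.measurable).norm.pow_const 2).ennreal_ofReal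
  calc ∫⁻ A in S, ∫⁻ z, ENNReal.ofReal
        (Finsupp.linearCombination ℝ (gaussSmoothing (differenceLaw μ ν A)) c z ^ 2)
      = ENNReal.ofReal ((2 * Real.pi) ^ d) * ∫⁻ A in S, ∫⁻ ξ,
          ENNReal.ofReal (laplaceSum c (‖ξ‖ ^ 2) ^ 2 * ‖charFun μ ξ‖ ^ 2) *
            ENNReal.ofReal (‖charFun ν (rowCombination A ξ)‖ ^ 2) := by
        simp_rw [lintegral_linearCombination_gaussSmoothing_sq _ hc₀, norm_charFun_differenceLaw,
          mul_pow, ← mul_assoc, ENNReal.ofReal_mul (mul_nonneg (sq_nonneg _) (sq_nonneg _)),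
          finrank_euclideanSpace_fin]
        rw [lintegral_const_mul' _ _ ENNReal.ofReal_ne_top]
    _ = ENNReal.ofReal ((2 * Real.pi) ^ d) * ∫⁻ ξ,
          ENNReal.ofReal (laplaceSum c (‖ξ‖ ^ 2) ^ 2 * ‖charFun μ ξ‖ ^ 2) *
            ∫⁻ A in S, ENNReal.ofReal (‖charFun ν (rowCombination A ξ)‖ ^ 2) := by
        rw [lintegral_lintegral_swap h_meas.aemeasurable]
        simp_rw [lintegral_const_mul' _ _ ENNReal.ofReal_ne_top]
    _ ≤ ENNReal.ofReal ((2 * Real.pi) ^ d) * ∫⁻ ξ,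
          B * (ENNReal.ofReal (laplaceSum c (‖ξ‖ ^ 2) ^ 2 * ‖charFun μ ξ‖ ^ 2) *
            ENNReal.ofReal (min 1 (‖ξ‖ ^ (-s)))) := by
        refine mul_le_mul_right (lintegral_mono_ae ?_) _
        filter_upwards [Measure.ae_ne volume (0 : Pt d)] with ξ hξ
        rw [mul_left_comm]
        gcongr
        exact hS ξ hξ
    _ ≤ _ := by
        rw [lintegral_const_mul _ (by fun_prop), ENNReal.ofReal_mul (by positivity), mul_assoc,
          mul_comm B]
        gcongr
        exact hc.lintegral_laplaceSum_mul_norm_charFun_le hτ hμ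

lemma IsLittlewoodPaleyPiece.lintegral_enorm_pow_le [NeZero d] (hC : 0 ≤ C) (hsd : s ≤ d)
    (hτ : 0 < τ) (hc : IsLittlewoodPaleyPiece s K τ c) (hμ : HasGaussianPotential μ s C)
    {S : Set (Fin d → V)} {B : ℝ≥0∞} (hS : ∀ ξ : Pt d, ξ ≠ 0 →
      ∫⁻ A in S, ENNReal.ofReal (‖charFun ν (rowCombination A ξ)‖ ^ 2) ≤
        B * ENNReal.ofReal (min 1 (‖ξ‖ ^ (-s)))) (n : ℕ) :
    ∫⁻ A in S, ∫⁻ z,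
        ‖Finsupp.linearCombination ℝ (gaussSmoothing (differenceLaw μ ν A)) c z‖ₑ ^ (n + 2) ≤
      ENNReal.ofReal ((2 * Real.pi) ^ d * (K * C) ^ (n + 1) *
        τ ^ ((s * (n + 2) - d * (n + 1)) / 2)) * B := by
  have hK := hc.nonneg
  have h_split : ∀ A z,
      ‖Finsupp.linearCombination ℝ (gaussSmoothing (differenceLaw μ ν A)) c z‖ₑ ^ (n + 2) ≤
        ENNReal.ofReal ((K * (C * τ ^ ((s - d) / 2))) ^ n) * ENNReal.ofReal
          (Finsupp.linearCombination ℝ (gaussSmoothing (differenceLaw μ ν A)) c z ^ 2) := by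
    intro A z
    rw [← ofReal_norm, Real.norm_eq_abs, pow_add,
      ← ENNReal.ofReal_pow (abs_nonneg _), ← ENNReal.ofReal_pow (abs_nonneg _), sq_abs]
    gcongr
    exact hc.abs_linearCombination_gaussSmoothing_le hC hsd hτ (hμ.differenceLaw ν A) z
  have h_pow : (τ ^ ((s - d) / 2)) ^ n * τ ^ (s - d / 2) =
      τ ^ ((s * (n + 2) - d * (n + 1)) / 2) := by
    rw [← Real.rpow_mul_natCast hτ.le, ← Real.rpow_add hτ]
    ring_nf
  calc _ ≤ ∫⁻ A in S, ∫⁻ z, ENNReal.ofReal ((K * (C * τ ^ ((s - d) / 2))) ^ n) * ENNReal.ofReal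
          (Finsupp.linearCombination ℝ (gaussSmoothing (differenceLaw μ ν A)) c z ^ 2) :=
        lintegral_mono fun A => lintegral_mono (h_split A)
    _ ≤ ENNReal.ofReal ((K * (C * τ ^ ((s - d) / 2))) ^ n) *
          (ENNReal.ofReal ((2 * Real.pi) ^ d * (K * C * τ ^ (s - d / 2))) * B) := by
        simp_rw [lintegral_const_mul' _ _ ENNReal.ofReal_ne_top]
        gcongr
        exact hc.lintegral_sq_le hτ hμ hS
    _ = _ := by
        rw [← mul_assoc, ← ENNReal.ofReal_mul (by positivity), ← h_pow]
        ring_nf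

/-- The factor by which the `L ^ p` norms of consecutive dyadic pieces are multiplied, when the
`p`-th powers of these norms are `O(τ ^ γ)` at scale `τ`. -/
def dyadicRatio (γ : ℝ) (p : ℕ) : ℝ≥0∞ := ENNReal.ofReal ((1 / 2) ^ (γ / p))

lemma dyadicRatio_lt_one {γ : ℝ} (hγ : 0 < γ) {p : ℕ} (hp : p ≠ 0) : dyadicRatio γ p < 1 :=
  ENNReal.ofReal_lt_one.2 (Real.rpow_lt_one (by norm_num) (by norm_num) (by positivity))

lemma dyadicRatio_pow_pow (γ : ℝ) {p : ℕ} (hp : p ≠ 0) (j : ℕ) :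
    (dyadicRatio γ p ^ j) ^ p = ENNReal.ofReal (((1 / 2) ^ j) ^ γ) := by
  rw [dyadicRatio, ← ENNReal.ofReal_pow (by positivity), ← ENNReal.ofReal_pow (by positivity),
    ← pow_mul, ← Real.rpow_mul_natCast (by norm_num), ← Real.rpow_natCast_mul (by norm_num)]
  congr 2
  push_cast
  field_simp

lemma lintegral_enorm_gaussSmoothing_differenceLaw_pow_le [NeZero d] (hC : 0 ≤ C) (hsd : s ≤ d)
    (hμ : HasGaussianPotential μ s C) {S : Set (Fin d → V)} {B : ℝ≥0∞}
    (hS : ∀ ξ : Pt d, ξ ≠ 0 →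
      ∫⁻ A in S, ENNReal.ofReal (‖charFun ν (rowCombination A ξ)‖ ^ 2) ≤
        B * ENNReal.ofReal (min 1 (‖ξ‖ ^ (-s)))) (n : ℕ) {J : ℕ} {c : ℕ → ℝ →₀ ℝ}
    (hc : ∀ j ≤ J, IsLittlewoodPaleyPiece s K ((1 / 2) ^ j) (c j))
    (h_sum : ∑ j ∈ Finset.range (J + 1), c j = .single ((1 / 2) ^ J) 1) :
    ∫⁻ A in S, ∫⁻ z, ‖gaussSmoothing (differenceLaw μ ν A) ((1 / 2) ^ J) z‖ₑ ^ (n + 2) ≤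
      ENNReal.ofReal ((2 * Real.pi) ^ d * (K * C) ^ (n + 1)) * B *
        (1 - dyadicRatio ((s * (n + 2) - d * (n + 1)) / 2) (n + 2))⁻¹ ^ (n + 2) := by
  have hK : 0 ≤ K := (hc 0 J.zero_le).nonneg
  set F : ℕ → (Fin d → V) × Pt d → ℝ := fun j q =>
    Finsupp.linearCombination ℝ (gaussSmoothing (differenceLaw μ ν q.1)) (c j) q.2
  have hF : ∀ j, Measurable (F j) := fun j =>
    measurable_linearCombination_gaussSmoothing_differenceLaw μ ν (c j)
  have h_total : ∀ q, gaussSmoothing (differenceLaw μ ν q.1) ((1 / 2) ^ J) q.2 =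
      ∑ j ∈ Finset.range (J + 1), F j q := fun q => by
    rw [← Finset.sum_apply q.2, ← map_sum, h_sum, Finsupp.linearCombination_single, one_smul]
  have h_minkowski := lintegral_enorm_sum_pow_le (p := n + 2) (n := J + 1)
    (r := dyadicRatio ((s * (n + 2) - d * (n + 1)) / 2) (n + 2))
    (B := ENNReal.ofReal ((2 * Real.pi) ^ d * (K * C) ^ (n + 1)) * B)
    (μ := (volume.restrict S).prod (volume : Measure (Pt d)))
    (Nat.succ_ne_zero _) (fun j _ => (hF j).aestronglyMeasurable) fun j hj => by
      rw [dyadicRatio_pow_pow _ (Nat.succ_ne_zero _), mul_right_comm,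
        ← ENNReal.ofReal_mul (by positivity),
        lintegral_prod _ ((hF j).enorm.pow_const _).aemeasurable]
      exact (hc j (Nat.le_of_lt_succ hj)).lintegral_enorm_pow_le hC hsd (by positivity) hμ hS n
  simp_rw [← h_total] at h_minkowski
  rwa [lintegral_prod _ ((measurable_gaussSmoothing_differenceLaw μ ν
    _).enorm.pow_const _).aemeasurable] at h_minkowski

-- Subcriticality `d * k < s * (k + 1)` is what makes the norms of the pieces decay geometrically.
lemma exists_lintegral_enorm_gaussSmoothing_differenceLaw_pow_le [NeZero d] {k : ℕ} (hk : 1 ≤ k)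
    (hsd : s ≤ d) (hks : d * k < s * (k + 1)) (hC : 0 ≤ C) (hμ : HasGaussianPotential μ s C)
    (hν : HasGaussianPotential ν s C) (hρ₀ : 0 < ρ₀) (ρ₁ : ℝ) :
    ∃ C' : ℝ≥0∞, C' ≠ ∞ ∧ ∀ ⦃δ : ℝ⦄, 2 * (d ^ 2 * δ) ≤ ρ₀ → ∀ J : ℕ,
      ∫⁻ A in nearConformal (Fin d) V ρ₀ ρ₁ δ, ∫⁻ z,
          ‖gaussSmoothing (differenceLaw μ ν A) ((1 / 2) ^ J) z‖ₑ ^ (k + 1) ≤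
        C' * ENNReal.ofReal δ ^ Fintype.card (PairIdx' d) := by
  obtain ⟨n, rfl⟩ := Nat.exists_eq_add_of_le' hk
  push_cast at hks
  have hs : 0 < s := pos_of_mul_pos_left (lt_of_le_of_lt (by positivity) hks) (by positivity)
  obtain ⟨C₁, hC₁, h_avg⟩ :=
    hν.exists_setLIntegral_norm_charFun_rowCombination_le (d := d) hC hρ₀ ρ₁
  obtain ⟨K, hK⟩ := exists_littlewoodPaley_decomposition hs
  have h_ratio := dyadicRatio_lt_one (γ := (s * (n + 2) - d * (n + 1)) / 2) (p := n + 2)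
    (half_pos (by linarith)) (Nat.succ_ne_zero _)
  have h_inv := ENNReal.inv_ne_top.2 (tsub_pos_of_lt h_ratio).ne'
  refine ⟨ENNReal.ofReal ((2 * Real.pi) ^ d * (K * C) ^ (n + 1)) * C₁ *
    (1 - dyadicRatio ((s * (n + 2) - d * (n + 1)) / 2) (n + 2))⁻¹ ^ (n + 2), by finiteness,
    fun δ hδ J => ?_⟩
  obtain ⟨c, hc, h_sum⟩ := hK J
  refine (lintegral_enorm_gaussSmoothing_differenceLaw_pow_le hC hsd hμ (fun ξ hξ => h_avg hδ hξ)
    n hc h_sum).trans_eq ?_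
  ring

end AveragedEstimates

section SimilarSimplices

open scoped Matrix Matrix.Norms.Frobenius

variable {d : ℕ}

lemma norm_toLp_row_le {m n : Type*} [Fintype m] [Fintype n] (X : Matrix m n ℝ) (i : m) :
    ‖WithLp.toLp 2 (X i)‖ ≤ ‖X‖ :=
  PiLp.norm_apply_le (WithLp.toLp 2 fun i => WithLp.toLp 2 (X i)) i

lemma abs_apply_le_frobenius_norm {m n : Type*} [Fintype m] [Fintype n] (X : Matrix m n ℝ) (i : m)
    (j : n) : |X i j| ≤ ‖X‖ :=
  (PiLp.norm_apply_le (WithLp.toLp 2 (X i)) j).trans (norm_toLp_row_le X i)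

lemma frobenius_norm_le_of_forall_abs_le {X : Matrix (Fin d) (Fin d) ℝ} {t : ℝ} (ht : 0 ≤ t)
    (h : ∀ i j, |X i j| ≤ t) : ‖X‖ ≤ d * t := by
  rw [Matrix.frobenius_norm_def, ← Real.sqrt_eq_rpow]
  refine Real.sqrt_le_iff.2 ⟨by positivity, ?_⟩
  calc ∑ i, ∑ j, ‖X i j‖ ^ (2 : ℝ) ≤ ∑ _i : Fin d, ∑ _j : Fin d, t ^ 2 := by
        gcongr with i _ j _
        rw [Real.rpow_two]
        exact pow_le_pow_left₀ (norm_nonneg _) (h i j) 2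
    _ = (d * t) ^ 2 := by
        simp only [Finset.sum_const, Finset.card_univ, Fintype.card_fin, nsmul_eq_mul]
        ring

/-- The matrix whose columns are the edges `x^{i+1} - x^1` of the simplex `x`. -/
def edgeMatrix (x : Fin (d + 1) → Pt d) : Matrix (Fin d) (Fin d) ℝ :=
  Matrix.of fun a i => (x i.succ - x 0) a

lemma continuous_edgeMatrix : Continuous (edgeMatrix (d := d)) := by
  refine continuous_matrix fun i j => ?_
  simp only [edgeMatrix, Matrix.of_apply]
  fun_prop

lemma nondeg_iff_det_edgeMatrix_ne_zero {x : Fin (d + 1) → Pt d} :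
    Nondeg d d x ↔ (edgeMatrix x).det ≠ 0 := by
  rw [← isUnit_iff_ne_zero, ← Matrix.isUnit_iff_isUnit_det,
    ← Matrix.linearIndependent_cols_iff_isUnit]
  exact ((WithLp.linearEquiv 2 ℝ (Fin d → ℝ)).toLinearMap.linearIndependent_iff
    (LinearEquiv.ker _)).symm

lemma Nondeg.dist_pos {k : ℕ} [NeZero k] {x : Fin (k + 1) → Pt d} (hx : Nondeg d k x) :
    0 < dist (x 0) (x 1) := by
  have h := LinearIndependent.ne_zero (0 : Fin k) hx
  rw [Fin.succ_zero_eq_one', sub_ne_zero] at h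
  exact _root_.dist_pos.2 h.symm

lemma continuousOn_inv_edgeMatrix {K : Set (Fin (d + 1) → Pt d)}
    (hK : ∀ x ∈ K, (edgeMatrix x).det ≠ 0) : ContinuousOn (fun x => (edgeMatrix x)⁻¹) K := by
  simp_rw [Matrix.inv_def, Ring.inverse_eq_inv']
  exact .smul (continuous_edgeMatrix.matrix_det.continuousOn.inv₀ hK)
    continuous_edgeMatrix.matrix_adjugate.continuousOn

lemma edgeMatrix_gram_apply (x : Fin (d + 1) → Pt d) (a b : Fin d) :
    ((edgeMatrix x)ᵀ * edgeMatrix x) a b =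
      (dist (x a.succ) (x 0) ^ 2 + dist (x b.succ) (x 0) ^ 2 -
        dist (x a.succ) (x b.succ) ^ 2) / 2 := by
  have h_inner : ((edgeMatrix x)ᵀ * edgeMatrix x) a b =
      inner ℝ (x a.succ - x 0) (x b.succ - x 0) := by
    rw [Matrix.mul_apply, PiLp.inner_apply]
    exact Finset.sum_congr rfl fun i _ => mul_comm _ _
  rw [h_inner, real_inner_eq_norm_mul_self_add_norm_mul_self_sub_norm_sub_mul_self_div_two,
    sub_sub_sub_cancel_right]
  simp only [dist_eq_norm, sq]

/-- A quantitatively nondegenerate simplex: `M` bounds its vertices, its edges, its edge matrix,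
and the inverses of the latter and of the length of its first edge. -/
structure IsFatSimplex (M : ℝ) (x : Fin (d + 1) → Pt d) : Prop where
  det_ne_zero : (edgeMatrix x).det ≠ 0
  norm_edgeMatrix_le : ‖edgeMatrix x‖ ≤ M
  norm_inv_edgeMatrix_le : ‖(edgeMatrix x)⁻¹‖ ≤ M
  norm_vertex_le : ∀ i, ‖x i‖ ≤ M
  dist_le : ∀ i j, dist (x i) (x j) ≤ M
  dist_pos : 0 < dist (x 0) (x 1)
  inv_dist_le : (dist (x 0) (x 1))⁻¹ ≤ M

lemma exists_forall_isFatSimplex [NeZero d] {K : Set (Fin (d + 1) → Pt d)} (hK : IsCompact K)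
    (hK' : ∀ x ∈ K, Nondeg d d x) : ∃ M : ℝ, 1 ≤ M ∧ ∀ x ∈ K, IsFatSimplex M x := by
  have h_det : ∀ x ∈ K, (edgeMatrix x).det ≠ 0 := fun x hx =>
    nondeg_iff_det_edgeMatrix_ne_zero.1 (hK' x hx)
  have h_pos : ∀ x ∈ K, 0 < dist (x 0) (x 1) := fun x hx => (hK' x hx).dist_pos
  obtain ⟨M, hM⟩ := hK.bddAbove_image (f := fun x => ‖edgeMatrix x‖ + ‖(edgeMatrix x)⁻¹‖ +
    2 * ‖x‖ + (dist (x 0) (x 1))⁻¹) <|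
      ((continuous_edgeMatrix.norm.continuousOn.add (continuousOn_inv_edgeMatrix h_det).norm).add
        (by fun_prop)).add (ContinuousOn.inv₀ (by fun_prop) fun x hx => (h_pos x hx).ne')
  refine ⟨max 1 M, le_max_left _ _, fun x hx => ?_⟩
  have h_sum := (hM (mem_image_of_mem _ hx)).trans (le_max_right 1 M)
  have h_edge := norm_nonneg (edgeMatrix x)
  have h_inv := norm_nonneg (edgeMatrix x)⁻¹
  have h_norm := norm_nonneg x
  have h_dist := inv_nonneg.2 (h_pos x hx).le
  refine ⟨h_det x hx, by linarith, by linarith, fun i => ?_, fun i j => ?_, h_pos x hx,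
    by linarith⟩
  · linarith [norm_le_pi_norm x i]
  · linarith [dist_le_norm_add_norm (x i) (x j), norm_le_pi_norm x i, norm_le_pi_norm x j]

/-- The ratio of the first edges of two simplices: the scale of a similarity between them. -/
def edgeRatio (x y : Fin (d + 1) → Pt d) : ℝ := dist (x 0) (x 1) / dist (y 0) (y 1)

variable {M ε : ℝ} {x y : Fin (d + 1) → Pt d}

lemma IsFatSimplex.edgeRatio_le (hx : IsFatSimplex M x) (hy : IsFatSimplex M y) :
    edgeRatio x y ≤ M ^ 2 := by
  rw [edgeRatio, div_eq_mul_inv, sq]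
  exact mul_le_mul (hx.dist_le 0 1) hy.inv_dist_le (inv_nonneg.2 dist_nonneg)
    (dist_nonneg.trans (hx.dist_le 0 1))

lemma IsFatSimplex.inv_edgeRatio_le (hx : IsFatSimplex M x) (hy : IsFatSimplex M y) :
    (edgeRatio x y)⁻¹ ≤ M ^ 2 := by
  rw [edgeRatio, inv_div]
  exact hy.edgeRatio_le hx

lemma IsFatSimplex.dist_div_dist_le (hx : IsFatSimplex M x) (i j : Fin (d + 1)) :
    dist (x i) (x j) / dist (x 0) (x 1) ≤ M ^ 2 := by
  rw [div_eq_mul_inv, sq]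
  exact mul_le_mul (hx.dist_le i j) hx.inv_dist_le (inv_nonneg.2 dist_nonneg)
    (dist_nonneg.trans (hx.dist_le i j))

lemma abs_dist_sq_sub_edgeRatio_mul_le (hx : IsFatSimplex M x) (hy : IsFatSimplex M y)
    (h : dist (simMap d d x) (simMap d d y) ≤ ε) (i j : Fin (d + 1)) :
    |dist (x i) (x j) ^ 2 - edgeRatio x y ^ 2 * dist (y i) (y j) ^ 2| ≤ 2 * M ^ 4 * ε := by
  have hx₀ := hx.dist_pos
  have hy₀ := hy.dist_pos
  have hε : 0 ≤ ε := dist_nonneg.trans h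
  wlog hij : i < j generalizing i j
  · obtain hij | rfl := (not_lt.1 hij).lt_or_eq
    · rw [dist_comm (x i), dist_comm (y i)]
      exact this j i hij
    · simp only [dist_self, ne_eq, OfNat.ofNat_ne_zero, not_false_eq_true, zero_pow, mul_zero,
        sub_zero, abs_zero]
      positivity
  by_cases h01 : (i, j) = (0, 1)
  · obtain ⟨rfl, rfl⟩ := Prod.mk.inj h01
    rw [edgeRatio, div_pow, div_mul_cancel₀ _ (by positivity), sub_self, abs_zero]
    positivity
  set α := dist (x i) (x j) / dist (x 0) (x 1) with hα
  set β := dist (y i) (y j) / dist (y 0) (y 1) with hβ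
  have h_close : |α - β| ≤ ε :=
    (dist_le_pi_dist (simMap d d x) (simMap d d y) ⟨(i, j), hij, h01⟩).trans h
  have h_factor : dist (x i) (x j) ^ 2 - edgeRatio x y ^ 2 * dist (y i) (y j) ^ 2 =
      dist (x 0) (x 1) ^ 2 * ((α - β) * (α + β)) := by
    rw [edgeRatio, hα, hβ]
    field_simp
    ring
  calc |dist (x i) (x j) ^ 2 - edgeRatio x y ^ 2 * dist (y i) (y j) ^ 2|
      = dist (x 0) (x 1) ^ 2 * (|α - β| * (α + β)) := by
        rw [h_factor, abs_mul, abs_mul, abs_sq, abs_of_nonneg (by positivity : 0 ≤ α + β)]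
    _ ≤ M ^ 2 * (ε * (M ^ 2 + M ^ 2)) := by
        gcongr
        exacts [hx.dist_le 0 1, hx.dist_div_dist_le i j, hy.dist_div_dist_le i j]
    _ = 2 * M ^ 4 * ε := by ring

lemma norm_gram_edgeMatrix_sub_le (hx : IsFatSimplex M x) (hy : IsFatSimplex M y)
    (h : dist (simMap d d x) (simMap d d y) ≤ ε) :
    ‖(edgeMatrix x)ᵀ * edgeMatrix x - edgeRatio x y ^ 2 • ((edgeMatrix y)ᵀ * edgeMatrix y)‖ ≤
      d * (3 * M ^ 4 * ε) := by
  have hε : 0 ≤ ε := dist_nonneg.trans h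
  refine frobenius_norm_le_of_forall_abs_le (by positivity) fun a b => ?_
  rw [Matrix.sub_apply, Matrix.smul_apply, edgeMatrix_gram_apply, edgeMatrix_gram_apply,
    smul_eq_mul, abs_le]
  have h_a := abs_le.1 (abs_dist_sq_sub_edgeRatio_mul_le hx hy h a.succ 0)
  have h_b := abs_le.1 (abs_dist_sq_sub_edgeRatio_mul_le hx hy h b.succ 0)
  have h_ab := abs_le.1 (abs_dist_sq_sub_edgeRatio_mul_le hx hy h a.succ b.succ)
  constructor <;> linarith [h_a.1, h_a.2, h_b.1, h_b.2, h_ab.1, h_ab.2]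

/-- The matrix sending the edges of the simplex `y` to those of `x`. -/
def edgeTransition (x y : Fin (d + 1) → Pt d) : Matrix (Fin d) (Fin d) ℝ :=
  edgeMatrix x * (edgeMatrix y)⁻¹

lemma IsFatSimplex.norm_edgeTransition_le (hx : IsFatSimplex M x) (hy : IsFatSimplex M y) :
    ‖edgeTransition x y‖ ≤ M ^ 2 := by
  rw [sq]
  exact (norm_mul_le _ _).trans (mul_le_mul hx.norm_edgeMatrix_le hy.norm_inv_edgeMatrix_le
    (norm_nonneg _) ((norm_nonneg _).trans hx.norm_edgeMatrix_le))

lemma edgeTransition_gram_sub_smul_one (hx : (edgeMatrix x).det ≠ 0)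
    (hy : (edgeMatrix y).det ≠ 0) (r : ℝ) :
    edgeTransition x y * (edgeTransition x y)ᵀ - r • 1 =
      edgeMatrix x * ((edgeMatrix y)⁻¹ * ((edgeMatrix y)⁻¹ᵀ *
        (((edgeMatrix x)ᵀ * edgeMatrix x - r • ((edgeMatrix y)ᵀ * edgeMatrix y)) *
          (edgeMatrix x)⁻¹))) := by
  unfold edgeTransition
  set X := edgeMatrix x
  set Y := edgeMatrix y
  have hX : X * X⁻¹ = 1 := X.mul_nonsing_inv (isUnit_iff_ne_zero.2 hx)
  have hY : Y * Y⁻¹ = 1 := Y.mul_nonsing_inv (isUnit_iff_ne_zero.2 hy)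
  have hY' : Y⁻¹ * Y = 1 := mul_eq_one_comm.1 hY
  have hYt : Y⁻¹ᵀ * Yᵀ = 1 := by rw [← Matrix.transpose_mul, hY, Matrix.transpose_one]
  calc X * Y⁻¹ * (X * Y⁻¹)ᵀ - r • 1
      = X * Y⁻¹ * Y⁻¹ᵀ * Xᵀ * (X * X⁻¹) - r • (X * (Y⁻¹ * (Y⁻¹ᵀ * Yᵀ) * Y) * X⁻¹) := by
        simp only [hX, hYt, hY', Matrix.mul_one, Matrix.transpose_mul, Matrix.mul_assoc]
    _ = X * (Y⁻¹ * (Y⁻¹ᵀ * ((Xᵀ * X - r • (Yᵀ * Y)) * X⁻¹))) := by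
        simp only [Matrix.mul_assoc, Matrix.mul_sub, Matrix.sub_mul, Matrix.smul_mul,
          Matrix.mul_smul]

lemma norm_gram_edgeTransition_sub_le (hx : IsFatSimplex M x) (hy : IsFatSimplex M y)
    (h : dist (simMap d d x) (simMap d d y) ≤ ε) :
    ‖edgeTransition x y * (edgeTransition x y)ᵀ - edgeRatio x y ^ 2 • 1‖ ≤ 3 * d * M ^ 8 * ε := by
  have hε : 0 ≤ ε := dist_nonneg.trans h
  have hM : 0 ≤ M := (norm_nonneg _).trans hx.norm_edgeMatrix_le
  rw [edgeTransition_gram_sub_smul_one hx.det_ne_zero hy.det_ne_zero]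
  set D := (edgeMatrix x)ᵀ * edgeMatrix x - edgeRatio x y ^ 2 • ((edgeMatrix y)ᵀ * edgeMatrix y)
  calc ‖edgeMatrix x * ((edgeMatrix y)⁻¹ * ((edgeMatrix y)⁻¹ᵀ * (D * (edgeMatrix x)⁻¹)))‖
      ≤ ‖edgeMatrix x‖ * (‖(edgeMatrix y)⁻¹‖ * (‖(edgeMatrix y)⁻¹ᵀ‖ *
          (‖D‖ * ‖(edgeMatrix x)⁻¹‖))) := by
        refine (norm_mul_le _ _).trans ?_
        gcongr
        refine (norm_mul_le _ _).trans ?_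
        gcongr
        refine (norm_mul_le _ _).trans ?_
        gcongr
        exact norm_mul_le _ _
    _ ≤ M * (M * (M * (d * (3 * M ^ 4 * ε) * M))) := by
        rw [Matrix.frobenius_norm_transpose]
        gcongr
        exacts [hx.norm_edgeMatrix_le, hy.norm_inv_edgeMatrix_le, hy.norm_inv_edgeMatrix_le,
          norm_gram_edgeMatrix_sub_le hx hy h, hx.norm_inv_edgeMatrix_le]
    _ = 3 * d * M ^ 8 * ε := by ring

/-- The rows of `edgeTransition x y`, as vectors of `ℝ^d`. -/
def transitionRows (x y : Fin (d + 1) → Pt d) (i : Fin d) : Pt d :=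
  WithLp.toLp 2 (edgeTransition x y i)

lemma IsFatSimplex.norm_transitionRows_le (hx : IsFatSimplex M x) (hy : IsFatSimplex M y)
    (i : Fin d) : ‖transitionRows x y i‖ ≤ M ^ 2 :=
  (norm_toLp_row_le _ i).trans (hx.norm_edgeTransition_le hy)

lemma abs_inner_transitionRows_sub_le (hx : IsFatSimplex M x) (hy : IsFatSimplex M y)
    (h : dist (simMap d d x) (simMap d d y) ≤ ε) (i j : Fin d) :
    |inner ℝ (transitionRows x y i) (transitionRows x y j) -
      if i = j then edgeRatio x y ^ 2 else 0| ≤ 3 * d * M ^ 8 * ε := by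
  have h_gram : inner ℝ (transitionRows x y i) (transitionRows x y j) =
      (edgeTransition x y * (edgeTransition x y)ᵀ) i j := by
    rw [Matrix.mul_apply, PiLp.inner_apply]
    exact Finset.sum_congr rfl fun l _ => mul_comm _ _
  have h_entry := (abs_apply_le_frobenius_norm _ i j).trans
    (norm_gram_edgeTransition_sub_le hx hy h)
  rwa [Matrix.sub_apply, Matrix.smul_apply, Matrix.one_apply, smul_eq_mul, mul_ite, mul_one,
    mul_zero, ← h_gram] at h_entry

lemma rowAction_transitionRows_vertex_sub (hy : (edgeMatrix y).det ≠ 0) (i : Fin (d + 1)) :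
    x i - rowAction (transitionRows x y) (y i) =
      x 0 - rowAction (transitionRows x y) (y 0) := by
  cases i using Fin.cases with
  | zero => rfl
  | succ i =>
    have h_cancel : edgeTransition x y * edgeMatrix y = edgeMatrix x := by
      rw [edgeTransition, Matrix.mul_assoc,
        Matrix.nonsing_inv_mul _ (isUnit_iff_ne_zero.2 hy), Matrix.mul_one]
    suffices h : rowAction (transitionRows x y) (y i.succ - y 0) = x i.succ - x 0 by
      rw [sub_eq_sub_iff_sub_eq_sub, ← h]
      ext a
      simp only [rowAction, inner_sub_right, PiLp.sub_apply]
    ext a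
    calc rowAction (transitionRows x y) (y i.succ - y 0) a
        = inner ℝ (transitionRows x y a) (y i.succ - y 0) := rfl
      _ = (edgeTransition x y * edgeMatrix y) a i := by
          rw [Matrix.mul_apply, PiLp.inner_apply]
          exact Finset.sum_congr rfl fun l _ => mul_comm _ _
      _ = (x i.succ - x 0) a := by rw [h_cancel]; rfl

end SimilarSimplices

section ApproximateSimilarities

lemma abs_inner_sub_inner_le {V : Type*} [NormedAddCommGroup V] [InnerProductSpace ℝ V]
    {a a' b b' : V} {R ε : ℝ} (ha' : ‖a'‖ ≤ R) (hb' : ‖b'‖ ≤ R) (ha : ‖a - a'‖ ≤ ε)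
    (hb : ‖b - b'‖ ≤ ε) : |inner ℝ a b - inner ℝ a' b'| ≤ (2 * R + ε) * ε := by
  have h_b : ‖b‖ ≤ ε + R := by
    simpa only [sub_add_cancel] using norm_add_le_of_le hb hb'
  calc |inner ℝ a b - inner ℝ a' b'| = |inner ℝ (a - a') b + inner ℝ a' (b - b')| := by
        rw [inner_sub_left, inner_sub_right, sub_add_sub_cancel]
    _ ≤ ‖a - a'‖ * ‖b‖ + ‖a'‖ * ‖b - b'‖ :=
        (abs_add_le _ _).trans
          (add_le_add (abs_real_inner_le_norm _ _) (abs_real_inner_le_norm _ _))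
    _ ≤ ε * (ε + R) + R * ε := by
        gcongr
        exacts [(norm_nonneg _).trans ha, (norm_nonneg _).trans ha']
    _ = (2 * R + ε) * ε := by ring

lemma mem_nearConformal_of_abs_inner_sub_le {ι V : Type*} [DecidableEq ι] [NormedAddCommGroup V]
    [InnerProductSpace ℝ V] {A : ι → V} {ρ₀ ρ₁ ρ η : ℝ}
    (hA : ∀ i j, |inner ℝ (A i) (A j) - if i = j then ρ else 0| ≤ η) (h₀ : ρ₀ + η ≤ ρ)
    (h₁ : ρ + η ≤ ρ₁) : A ∈ nearConformal ι V ρ₀ ρ₁ (2 * η) := by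
  have h_diag : ∀ i, |‖A i‖ ^ 2 - ρ| ≤ η := fun i => by
    simpa only [if_true, real_inner_self_eq_norm_sq] using hA i i
  refine ⟨fun i j hij => ?_, fun i j => ?_, fun i => ?_⟩
  · have h_off := hA i j
    rw [if_neg hij, sub_zero] at h_off
    linarith [abs_nonneg (inner ℝ (A i) (A j))]
  · rw [two_mul]
    refine (abs_sub_le _ ρ _).trans (add_le_add (h_diag i) ?_)
    rw [abs_sub_comm]
    exact h_diag j
  · have h := abs_le.1 (h_diag i)
    constructor <;> linarith [h.1, h.2]

lemma nearConformal_mono {ι V : Type*} [NormedAddCommGroup V] [InnerProductSpace ℝ V]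
    {ρ₀ ρ₁ δ δ' : ℝ} (h : δ ≤ δ') :
    nearConformal ι V ρ₀ ρ₁ δ ⊆ nearConformal ι V ρ₀ ρ₁ δ' := fun _ hA =>
  ⟨fun i j hij => (hA.1 i j hij).trans h, fun i j => (hA.2.1 i j).trans h, hA.2.2⟩

variable {d : ℕ}

lemma norm_rowAction_le {V : Type*} [NormedAddCommGroup V] [InnerProductSpace ℝ V]
    (A : Fin d → V) (v : V) : ‖rowAction A v‖ ≤ d * (‖A‖ * ‖v‖) :=
  norm_le_mul_of_forall_abs_le fun i =>
    (abs_real_inner_le_norm _ _).trans (by gcongr; exact norm_le_pi_norm A i)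

variable {M ε : ℝ} {x y : Fin (d + 1) → Pt d} {A : Fin d → Pt d}

lemma IsFatSimplex.mem_nearConformal (hM : 1 ≤ M) (hx : IsFatSimplex M x) (hy : IsFatSimplex M y)
    (h : dist (simMap d d x) (simMap d d y) ≤ ε) (hε : ε ≤ 1)
    (hε' : (3 * d * M ^ 8 + 3 * M ^ 2) * ε ≤ (2 * M ^ 4)⁻¹)
    (hA : A ∈ closedBall (transitionRows x y) ε) :
    A ∈ nearConformal (Fin d) (Pt d) (2 * M ^ 4)⁻¹ (M ^ 4 + 1)
      (2 * ((3 * d * M ^ 8 + 3 * M ^ 2) * ε)) := by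
  have hε₀ : 0 ≤ ε := dist_nonneg.trans h
  have h_rows : ∀ i, ‖A i - transitionRows x y i‖ ≤ ε := fun i => by
    rw [← dist_eq_norm]
    exact (dist_le_pi_dist _ _ i).trans hA
  have h_pert : (2 * M ^ 2 + ε) * ε ≤ 3 * M ^ 2 * ε := by
    gcongr
    linarith [one_le_pow₀ (n := 2) hM]
  have h_ratio_pos : 0 < edgeRatio x y := div_pos hx.dist_pos hy.dist_pos
  have h_inv : (M ^ 4)⁻¹ ≤ edgeRatio x y ^ 2 := by
    rw [show M ^ 4 = (M ^ 2) ^ 2 by ring, ← inv_pow]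
    gcongr
    exact inv_le_of_inv_le₀ h_ratio_pos (hx.inv_edgeRatio_le hy)
  have h_half : (M ^ 4)⁻¹ = (2 * M ^ 4)⁻¹ + (2 * M ^ 4)⁻¹ := by
    field_simp
    norm_num
  have h_le_one : (2 * M ^ 4)⁻¹ ≤ 1 :=
    inv_le_one_of_one_le₀ (by linarith [one_le_pow₀ (n := 4) hM])
  refine mem_nearConformal_of_abs_inner_sub_le (ρ := edgeRatio x y ^ 2) (fun i j => ?_)
    (by linarith) (add_le_add ?_ (hε'.trans h_le_one))
  · refine (abs_sub_le _ (inner ℝ (transitionRows x y i) (transitionRows x y j)) _).trans ?_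
    linarith [abs_inner_transitionRows_sub_le hx hy h i j, abs_inner_sub_inner_le
      (hx.norm_transitionRows_le hy i) (hx.norm_transitionRows_le hy j) (h_rows i) (h_rows j)]
  · calc edgeRatio x y ^ 2 ≤ (M ^ 2) ^ 2 := by
          gcongr
          exact hx.edgeRatio_le hy
      _ = M ^ 4 := by ring

lemma IsFatSimplex.norm_sub_rowAction_sub_le (hy : IsFatSimplex M y)
    (hA : A ∈ closedBall (transitionRows x y) ε) {z : Pt d}
    (hz : z ∈ closedBall (x 0 - rowAction (transitionRows x y) (y 0)) ε) (i : Fin (d + 1)) :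
    ‖x i - rowAction A (y i) - z‖ ≤ (d * M + 1) * ε := by
  rw [← rowAction_transitionRows_vertex_sub hy.det_ne_zero i, mem_closedBall'] at hz
  have h_split : x i - rowAction A (y i) - z = rowAction (transitionRows x y - A) (y i) +
      (x i - rowAction (transitionRows x y) (y i) - z) := by
    ext a
    simp only [rowAction, Pi.sub_apply, inner_sub_left, PiLp.sub_apply, PiLp.add_apply]
    ring
  calc ‖x i - rowAction A (y i) - z‖
      ≤ d * (‖transitionRows x y - A‖ * ‖y i‖) +
          ‖x i - rowAction (transitionRows x y) (y i) - z‖ := by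
        rw [h_split]
        exact norm_add_le_of_le (norm_rowAction_le _ _) le_rfl
    _ ≤ d * (ε * M) + ε := by
        rw [← dist_eq_norm, ← dist_eq_norm]
        gcongr
        exacts [dist_nonneg.trans (mem_closedBall'.1 hA), mem_closedBall'.1 hA, hy.norm_vertex_le i]
    _ = (d * M + 1) * ε := by ring

lemma exists_closedBall_subset_approxSimilarities [NeZero d] {K : Set (Fin (d + 1) → Pt d)}
    (hK : IsCompact K) (hK' : ∀ x ∈ K, Nondeg d d x) :
    ∃ ρ₀ ρ₁ C ε₀ : ℝ, 0 < ρ₀ ∧ 0 < C ∧ 0 < ε₀ ∧ ∀ x ∈ K, ∀ y ∈ K, ∀ ε ≤ ε₀,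
      dist (simMap d d x) (simMap d d y) ≤ ε →
        ∃ A₀ z₀, ∀ A ∈ closedBall A₀ ε, ∀ z ∈ closedBall z₀ ε,
          A ∈ nearConformal (Fin d) (Pt d) ρ₀ ρ₁ (C * ε) ∧
            ∀ i, ‖x i - rowAction A (y i) - z‖ ≤ C * ε := by
  obtain ⟨M, hM, hMK⟩ := exists_forall_isFatSimplex hK hK'
  set c : ℝ := 3 * d * M ^ 8 + 3 * M ^ 2
  have hc : 0 < c := by positivity
  refine ⟨(2 * M ^ 4)⁻¹, M ^ 4 + 1, 2 * c + (d * M + 1), min 1 ((2 * M ^ 4)⁻¹ / c), by positivity,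
    by positivity, by positivity, fun x hx y hy ε hε h => ?_⟩
  have hε₀ : 0 ≤ ε := dist_nonneg.trans h
  have hcε : c * ε ≤ (2 * M ^ 4)⁻¹ :=
    (le_div_iff₀' hc).1 (hε.trans (min_le_right _ _))
  refine ⟨transitionRows x y, x 0 - rowAction (transitionRows x y) (y 0), fun A hA z hz =>
    ⟨nearConformal_mono ?_ ((hMK x hx).mem_nearConformal hM (hMK y hy) h
      (hε.trans (min_le_left _ _)) hcε hA), fun i => ?_⟩⟩
  · nlinarith [mul_nonneg (by positivity : 0 ≤ d * M + 1) hε₀]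
  · refine ((hMK y hy).norm_sub_rowAction_sub_le hA hz i).trans ?_
    exact mul_le_mul_of_nonneg_right (by linarith) hε₀

end ApproximateSimilarities

section PositiveVolume

lemma sq_lintegral_le_lintegral_sq_mul_measure {X : Type*} [MeasurableSpace X] {μ : Measure X}
    {f : X → ℝ≥0∞} (hf : AEMeasurable f μ) {S : Set X} (hS : MeasurableSet S)
    (hfS : ∀ x ∉ S, f x = 0) : (∫⁻ x, f x ∂μ) ^ 2 ≤ (∫⁻ x, f x ^ 2 ∂μ) * μ S := by
  have h_holder := ENNReal.lintegral_mul_le_Lp_mul_Lq μ Real.HolderConjugate.two_two hf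
    (measurable_one.indicator hS).aemeasurable
  have h_mul : ∀ x, (f * S.indicator (1 : X → ℝ≥0∞)) x = f x := fun x => by
    by_cases hx : x ∈ S
    · rw [Pi.mul_apply, indicator_of_mem hx, Pi.one_apply, mul_one]
    · rw [Pi.mul_apply, hfS x hx, zero_mul]
  have h_sq : ∀ x, S.indicator (1 : X → ℝ≥0∞) x ^ (2 : ℝ) = S.indicator 1 x := fun x => by
    by_cases hx : x ∈ S <;> simp [hx]
  simp only [h_mul, h_sq, lintegral_indicator_one hS, ENNReal.rpow_two] at h_holder
  calc (∫⁻ x, f x ∂μ) ^ 2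
      ≤ ((∫⁻ x, f x ^ 2 ∂μ) ^ (1 / 2 : ℝ) * μ S ^ (1 / 2 : ℝ)) ^ 2 := by gcongr
    _ = (∫⁻ x, f x ^ 2 ∂μ) * μ S := by
        rw [mul_pow, ← ENNReal.rpow_mul_natCast, ← ENNReal.rpow_mul_natCast]
        norm_num

variable {ι : Type*} [Fintype ι] (ν : Measure (ι → ℝ)) [SFinite ν]

lemma lintegral_measure_closedBall {δ : ℝ} (hδ : 0 ≤ δ) :
    ∫⁻ τ, ν (closedBall τ δ) = ENNReal.ofReal ((2 * δ) ^ Fintype.card ι) * ν univ := by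
  have h_meas : MeasurableSet {p : (ι → ℝ) × (ι → ℝ) | dist p.2 p.1 ≤ δ} :=
    (isClosed_le (by fun_prop) (by fun_prop)).measurableSet
  calc ∫⁻ τ, ν (closedBall τ δ) = (volume.prod ν) {p | dist p.2 p.1 ≤ δ} :=
        (Measure.prod_apply h_meas).symm
    _ = ∫⁻ ω, volume (closedBall ω δ) ∂ν := by
        rw [Measure.prod_apply_symm h_meas]
        exact lintegral_congr fun ω => congrArg volume (ext fun τ => mem_closedBall'.symm)
    _ = ENNReal.ofReal ((2 * δ) ^ Fintype.card ι) * ν univ := by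
        simp_rw [Real.volume_pi_closedBall _ hδ, lintegral_const]

lemma lintegral_measure_closedBall_sq_le {δ : ℝ} (hδ : 0 ≤ δ) :
    ∫⁻ τ, ν (closedBall τ δ) ^ 2 ≤
      ENNReal.ofReal ((2 * δ) ^ Fintype.card ι) * (ν.prod ν) {p | dist p.1 p.2 ≤ 2 * δ} := by
  have h_meas : MeasurableSet
      {q : (ι → ℝ) × (ι → ℝ) × (ι → ℝ) | q.2 ∈ closedBall q.1 δ ×ˢ closedBall q.1 δ} := by
    simp only [mem_prod, mem_closedBall, ofPred_and]
    exact ((isClosed_le (by fun_prop) (by fun_prop)).inter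
      (isClosed_le (by fun_prop) (by fun_prop))).measurableSet
  have h_near : MeasurableSet {p : (ι → ℝ) × (ι → ℝ) | dist p.1 p.2 ≤ 2 * δ} :=
    (isClosed_le (by fun_prop) (by fun_prop)).measurableSet
  calc ∫⁻ τ, ν (closedBall τ δ) ^ 2 = ∫⁻ τ, (ν.prod ν) (closedBall τ δ ×ˢ closedBall τ δ) := by
        simp_rw [Measure.prod_prod, sq]
    _ = ∫⁻ p, volume {τ | p ∈ closedBall τ δ ×ˢ closedBall τ δ} ∂ν.prod ν :=
        (Measure.prod_apply h_meas).symm.trans (Measure.prod_apply_symm h_meas)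
    _ ≤ ∫⁻ p, {p : (ι → ℝ) × (ι → ℝ) | dist p.1 p.2 ≤ 2 * δ}.indicator
          (fun _ => ENNReal.ofReal ((2 * δ) ^ Fintype.card ι)) p ∂ν.prod ν := by
        refine lintegral_mono fun p => ?_
        by_cases hp : dist p.1 p.2 ≤ 2 * δ
        · rw [indicator_of_mem (by exact hp), ← Real.volume_pi_closedBall p.1 hδ]
          exact measure_mono fun τ hτ => mem_closedBall'.2 hτ.1
        · refine (measure_mono_null (fun τ hτ => hp ?_) measure_empty).trans_le zero_le
          linarith [dist_triangle_right p.1 p.2 τ, mem_closedBall.1 hτ.1, mem_closedBall.1 hτ.2]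
    _ = _ := lintegral_indicator_const h_near _

variable {ν} in
lemma sq_measure_univ_le_mul_volume_cthickening {Z : Set (ι → ℝ)} (hνZ : ν Zᶜ = 0) {δ : ℝ}
    (hδ : 0 < δ) {C : ℝ≥0∞}
    (h : (ν.prod ν) {p | dist p.1 p.2 ≤ 2 * δ} ≤ C * ENNReal.ofReal ((2 * δ) ^ Fintype.card ι)) :
    ν univ ^ 2 ≤ C * volume (cthickening δ Z) := by
  set b := ENNReal.ofReal ((2 * δ) ^ Fintype.card ι)
  have h_meas : MeasurableSet {p : (ι → ℝ) × (ι → ℝ) | dist p.2 p.1 ≤ δ} :=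
    (isClosed_le (by fun_prop) (by fun_prop)).measurableSet
  have h_support : ∀ τ ∉ cthickening δ Z, ν (closedBall τ δ) = 0 := fun τ hτ =>
    measure_mono_null (fun ω hω hωZ => hτ
      (mem_cthickening_of_dist_le τ ω δ Z hωZ (mem_closedBall'.1 hω))) hνZ
  have h_scaled : b ^ 2 * ν univ ^ 2 ≤ b ^ 2 * (C * volume (cthickening δ Z)) :=
    calc b ^ 2 * ν univ ^ 2 = (∫⁻ τ, ν (closedBall τ δ)) ^ 2 := by
          rw [lintegral_measure_closedBall ν hδ.le, mul_pow]
      _ ≤ (∫⁻ τ, ν (closedBall τ δ) ^ 2) * volume (cthickening δ Z) :=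
          sq_lintegral_le_lintegral_sq_mul_measure
            (measurable_measure_prodMk_left h_meas).aemeasurable
            isClosed_cthickening.measurableSet h_support
      _ ≤ b * (C * b) * volume (cthickening δ Z) := by
          gcongr
          exact (lintegral_measure_closedBall_sq_le ν hδ.le).trans (by gcongr)
      _ = b ^ 2 * (C * volume (cthickening δ Z)) := by ring
  have hb : b ^ 2 ≠ 0 := pow_ne_zero _ (ENNReal.ofReal_pos.2 (by positivity)).ne'
  exact (ENNReal.mul_le_mul_iff_right hb (by finiteness)).1 h_scaled

variable {ν} in
lemma volume_pos_of_eventually_measure_dist_le {Z : Set (ι → ℝ)} (hZ : IsCompact Z)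
    (hνZ : ν Zᶜ = 0) (hν : ν ≠ 0) {C : ℝ≥0∞} (hC : C ≠ ∞) {δ : ℕ → ℝ} (hδ : ∀ j, 0 < δ j)
    (hδ_lim : Filter.Tendsto δ Filter.atTop (𝓝 0))
    (h : ∀ᶠ j in Filter.atTop, (ν.prod ν) {p | dist p.1 p.2 ≤ 2 * δ j} ≤
      C * ENNReal.ofReal ((2 * δ j) ^ Fintype.card ι)) :
    0 < volume Z := by
  have h_lim : Filter.Tendsto (fun j => C * volume (cthickening (δ j) Z)) Filter.atTop
      (𝓝 (C * volume Z)) :=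
    ENNReal.Tendsto.const_mul
      ((tendsto_measure_cthickening_of_isCompact hZ).comp hδ_lim) (.inr hC)
  have h_le : ν univ ^ 2 ≤ C * volume Z := ge_of_tendsto h_lim <|
    h.mono fun j hj => sq_measure_univ_le_mul_volume_cthickening hνZ (hδ j) hj
  refine pos_iff_ne_zero.2 fun h_zero => hν ?_
  rw [h_zero, mul_zero, nonpos_iff_eq_zero, pow_eq_zero_iff two_ne_zero] at h_le
  exact Measure.measure_univ_eq_zero.1 h_le

end PositiveVolume

section Counting

lemma one_le_mul_gaussKernel {V : Type*} [NormedAddCommGroup V] [InnerProductSpace ℝ V]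
    {ε r : ℝ} (hε : 0 < ε) {w : V} (hw : ‖w‖ ≤ r * ε) :
    1 ≤ Real.exp (r ^ 2 / 4) / Real.pi ^ (Module.finrank ℝ V / 2 : ℝ) *
      ε ^ Module.finrank ℝ V * gaussKernel (ε ^ 2) w := by
  have h_const : (Real.pi / ε ^ 2) ^ (Module.finrank ℝ V / 2 : ℝ) =
      Real.pi ^ (Module.finrank ℝ V / 2 : ℝ) / ε ^ Module.finrank ℝ V := by
    rw [Real.div_rpow Real.pi_pos.le (by positivity), ← Real.rpow_natCast_mul hε.le,
      Nat.cast_ofNat, mul_div_cancel₀ _ (two_ne_zero' ℝ), Real.rpow_natCast]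
  calc 1 ≤ Real.exp (r ^ 2 / 4 - ‖w‖ ^ 2 / (4 * ε ^ 2)) := by
        refine Real.one_le_exp ?_
        rw [sub_nonneg, div_le_div_iff₀ (by positivity) (by norm_num)]
        linarith [pow_le_pow_left₀ (norm_nonneg w) hw 2, mul_pow r ε 2]
    _ = _ := by
        have hπ := (Real.rpow_pos_of_pos Real.pi_pos (Module.finrank ℝ V / 2 : ℝ)).ne'
        rw [gaussKernel, h_const, sub_eq_add_neg, Real.exp_add]
        field_simp

lemma lintegral_prod_pi_prod {n : ℕ} {X : Fin n → Type*} [∀ i, MeasurableSpace (X i)]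
    (μ : ∀ i, Measure (X i)) [∀ i, SigmaFinite (μ i)] {f : ∀ i, X i × X i → ℝ≥0∞}
    (hf : ∀ i, Measurable (f i)) :
    ∫⁻ p, ∏ i, f i (p.1 i, p.2 i) ∂(Measure.pi μ).prod (Measure.pi μ) =
      ∏ i, ∫⁻ p, f i p ∂(μ i).prod (μ i) := by
  rw [lintegral_prod _ (by fun_prop)]
  have h_inner := fun x : ∀ i, X i =>
    lintegral_pi_prod μ (f := fun i y => f i (x i, y)) (by fun_prop)
  simp_rw [h_inner]
  rw [lintegral_pi_prod μ (f := fun i x => ∫⁻ y, f i (x, y) ∂μ i)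
    fun i => (hf i).lintegral_prod_right']
  exact Finset.prod_congr rfl fun i _ => (lintegral_prod _ (hf i).aemeasurable).symm

section MatchIndicator

variable {ι V : Type*} [NormedAddCommGroup V] [InnerProductSpace ℝ V]

/-- The indicator function of the event that the affine map `y ↦ A y + z`, where `A` is the matrix
with rows `A i`, sends `p.2` to within distance `r` of `p.1`. -/
def matchIndicator [Fintype ι] (r : ℝ) (A : ι → V) (z : EuclideanSpace ℝ ι)
    (p : EuclideanSpace ℝ ι × V) : ℝ≥0∞ :=
  (closedBall z r).indicator 1 (p.1 - rowAction A p.2)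

variable [Fintype ι] {r : ℝ} {A : ι → V} {z : EuclideanSpace ℝ ι} {p : EuclideanSpace ℝ ι × V}

lemma matchIndicator_of_norm_le (h : ‖p.1 - rowAction A p.2 - z‖ ≤ r) :
    matchIndicator r A z p = 1 :=
  indicator_of_mem (mem_closedBall_iff_norm.2 h) _

lemma matchIndicator_of_lt_norm (h : r < ‖p.1 - rowAction A p.2 - z‖) :
    matchIndicator r A z p = 0 :=
  indicator_of_notMem (fun h' => h.not_ge (mem_closedBall_iff_norm.1 h')) _

variable [MeasurableSpace V] [BorelSpace V] [FiniteDimensional ℝ V]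

@[fun_prop]
lemma measurable_matchIndicator {X : Type*} [MeasurableSpace X] (r : ℝ) {A : X → ι → V}
    {z : X → EuclideanSpace ℝ ι} {p : X → EuclideanSpace ℝ ι × V} (hA : Measurable A)
    (hz : Measurable z) (hp : Measurable p) :
    Measurable fun x => matchIndicator r (A x) (z x) (p x) := by
  have h_action : Measurable fun x => rowAction (A x) (p x).2 :=
    continuous_rowAction.measurable.comp (hA.prodMk hp.snd)
  exact measurable_one.indicator
    (measurableSet_le ((hp.fst.sub h_action).dist hz) measurable_const)

lemma lintegral_matchIndicator_le_gaussSmoothing {μ m : Measure (EuclideanSpace ℝ ι)}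
    {ν n : Measure V} [IsFiniteMeasure μ] [IsFiniteMeasure ν] (hm : m ≤ μ) (hn : n ≤ ν)
    {ε : ℝ} (hε : 0 < ε) (r : ℝ) (A : ι → V) (z : EuclideanSpace ℝ ι) :
    ∫⁻ p, matchIndicator (r * ε) A z p ∂m.prod n ≤
      ENNReal.ofReal (Real.exp (r ^ 2 / 4) / Real.pi ^ (Fintype.card ι / 2 : ℝ)) *
        ENNReal.ofReal (ε ^ Fintype.card ι) *
          ‖gaussSmoothing (differenceLaw μ ν A) (ε ^ 2) z‖ₑ := by
  have hε2 : 0 < ε ^ 2 := by positivity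
  have h_smoothing : ‖gaussSmoothing (differenceLaw μ ν A) (ε ^ 2) z‖ₑ =
      ∫⁻ p, ENNReal.ofReal (gaussKernel (ε ^ 2) (p.1 - rowAction A p.2 - z)) ∂μ.prod ν := by
    have h_nonneg : 0 ≤ gaussSmoothing (differenceLaw μ ν A) (ε ^ 2) z :=
      integral_nonneg fun _ => gaussKernel_nonneg hε2 _
    rw [Real.enorm_eq_ofReal h_nonneg, gaussSmoothing,
      integral_differenceLaw μ ν A (f := fun w => gaussKernel (ε ^ 2) (w - z)) (by fun_prop)]
    exact ofReal_integral_eq_lintegral_ofReal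
      (integrable_gaussKernel_comp hε2 ((measurable_sub_rowAction A).sub_const z))
      (.of_forall fun _ => gaussKernel_nonneg hε2 _)
  rw [h_smoothing, ← ENNReal.ofReal_mul (by positivity),
    ← lintegral_const_mul' _ _ ENNReal.ofReal_ne_top]
  refine (lintegral_mono' (Measure.prod_mono hm hn) le_rfl).trans (lintegral_mono fun p => ?_)
  rcases le_or_gt ‖p.1 - rowAction A p.2 - z‖ (r * ε) with h | h
  · rw [matchIndicator_of_norm_le h, ← ENNReal.ofReal_mul (by positivity), ENNReal.one_le_ofReal]
    simpa only [finrank_euclideanSpace] using one_le_mul_gaussKernel hε h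
  · rw [matchIndicator_of_lt_norm h]
    exact zero_le

lemma lintegral_matchIndicator_le_volume {m : Measure (EuclideanSpace ℝ ι)} {n : Measure V}
    [SFinite m] [SFinite n] (hm : m ≤ volume) (hr : 0 ≤ r) (A : ι → V)
    (z : EuclideanSpace ℝ ι) :
    ∫⁻ p, matchIndicator r A z p ∂m.prod n ≤
      ENNReal.ofReal (r ^ Fintype.card ι) * volume (closedBall (0 : EuclideanSpace ℝ ι) 1) *
        n univ := by
  rw [lintegral_prod_symm' _ (by fun_prop), ← lintegral_const]
  refine lintegral_mono fun y => ?_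
  calc ∫⁻ x, matchIndicator r A z (x, y) ∂m
      ≤ ∫⁻ x, (closedBall (z + rowAction A y) r).indicator 1 x := by
        refine lintegral_mono' hm fun x => ?_
        simp only [matchIndicator, indicator, mem_closedBall_iff_norm, sub_sub, add_comm z]
        exact le_rfl
    _ = _ := by
        rw [lintegral_indicator_one isClosed_closedBall.measurableSet,
          Measure.addHaar_closedBall' _ _ hr, finrank_euclideanSpace]

lemma le_lintegral_prod_matchIndicator {n : ℕ} {x : Fin n → EuclideanSpace ℝ ι} {y : Fin n → V}
    {N : Set (ι → V)} {A₀ : ι → V} {z₀ : EuclideanSpace ℝ ι} {ε : ℝ}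
    (h : ∀ A ∈ closedBall A₀ ε, ∀ z ∈ closedBall z₀ ε,
      A ∈ N ∧ ∀ i, ‖x i - rowAction A (y i) - z‖ ≤ r) :
    volume (closedBall A₀ ε) * volume (closedBall z₀ ε) ≤
      ∫⁻ q, ∏ i, matchIndicator r q.1 q.2 (x i, y i) ∂(volume.restrict N).prod volume := by
  rcases lt_or_ge ε 0 with hε | hε
  · simp [closedBall_eq_empty.2 hε]
  have hN : closedBall A₀ ε ⊆ N := fun A hA => (h A hA z₀ (mem_closedBall_self hε)).1
  have h_meas : MeasurableSet (closedBall A₀ ε) := isClosed_closedBall.measurableSet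
  have h_vol : volume (closedBall A₀ ε) = volume.restrict N (closedBall A₀ ε) := by
    rw [Measure.restrict_apply h_meas, inter_eq_left.2 hN]
  rw [h_vol, ← Measure.prod_prod,
    ← lintegral_indicator_one (h_meas.prod isClosed_closedBall.measurableSet)]
  refine lintegral_mono fun q => ?_
  by_cases hq : q ∈ closedBall A₀ ε ×ˢ closedBall z₀ ε
  · have h_one : ∀ i, matchIndicator r q.1 q.2 (x i, y i) = 1 := fun i =>
      matchIndicator_of_norm_le ((h _ hq.1 _ hq.2).2 i)
    simp [h_one, hq]
  · rw [indicator_of_notMem hq]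
    exact zero_le

end MatchIndicator

variable {d : ℕ} {μ : Measure (Pt d)} [IsProbabilityMeasure μ]

lemma exists_lintegral_prod_matchIndicator_le {n : ℕ} {S : Finset (Fin n)}
    {m : Fin n → Measure (Pt d)} [∀ i, IsFiniteMeasure (m i)] (hμ : ∀ i ∈ S, m i ≤ μ)
    (hvol : ∀ i ∉ S, m i ≤ volume) {r : ℝ} (hr : 0 ≤ r) :
    ∃ c : ℝ≥0∞, c ≠ ∞ ∧ ∀ ε > 0, ∀ (A : Fin d → Pt d) (z : Pt d),
      ∫⁻ p, ∏ i, matchIndicator (r * ε) A z (p.1 i, p.2 i)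
          ∂(Measure.pi m).prod (Measure.pi m) ≤
        c * ENNReal.ofReal (ε ^ d) ^ n *
          ‖gaussSmoothing (differenceLaw μ μ A) (ε ^ 2) z‖ₑ ^ S.card := by
  classical
  have h_factor : ∀ i, ∃ c : ℝ≥0∞, c ≠ ∞ ∧ ∀ ε > 0, ∀ (A : Fin d → Pt d) (z : Pt d),
      ∫⁻ p, matchIndicator (r * ε) A z p ∂(m i).prod (m i) ≤ c * ENNReal.ofReal (ε ^ d) *
        if i ∈ S then ‖gaussSmoothing (differenceLaw μ μ A) (ε ^ 2) z‖ₑ else 1 := fun i => by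
    by_cases hi : i ∈ S
    · refine ⟨ENNReal.ofReal (Real.exp (r ^ 2 / 4) / Real.pi ^ (d / 2 : ℝ)),
        ENNReal.ofReal_ne_top, fun ε hε A z => ?_⟩
      rw [if_pos hi]
      simpa only [Fintype.card_fin] using
        lintegral_matchIndicator_le_gaussSmoothing (hμ i hi) (hμ i hi) hε r A z
    · refine ⟨ENNReal.ofReal (r ^ d) * volume (closedBall (0 : Pt d) 1) * m i univ,
        ENNReal.mul_ne_top (ENNReal.mul_ne_top ENNReal.ofReal_ne_top
          measure_closedBall_lt_top.ne) (measure_ne_top _ _), fun ε hε A z => ?_⟩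
      refine (lintegral_matchIndicator_le_volume (hvol i hi) (by positivity) A z).trans_eq ?_
      rw [if_neg hi, Fintype.card_fin, mul_pow, ENNReal.ofReal_mul (by positivity)]
      ring
  choose c hc h_le using h_factor
  refine ⟨∏ i, c i, ENNReal.prod_ne_top fun i _ => hc i, fun ε hε A z => ?_⟩
  rw [lintegral_prod_pi_prod m fun _ => by fun_prop]
  refine (Finset.prod_le_prod' fun i _ => h_le i ε hε A z).trans_eq ?_
  simp only [Finset.prod_mul_distrib, Finset.prod_const, Finset.card_univ, Fintype.card_fin,
    Finset.prod_ite_mem, Finset.univ_inter]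

end Counting

section SimilarPairs

lemma mul_measure_le_lintegral_lintegral {X Y : Type*} [MeasurableSpace X] [MeasurableSpace Y]
    {μ : Measure X} {ν : Measure Y} [SFinite μ] [SFinite ν] {F : X → Y → ℝ≥0∞}
    (hF : Measurable (Function.uncurry F)) {G : Set X} {a : ℝ≥0∞}
    (h : ∀ x ∈ G, a ≤ ∫⁻ y, F x y ∂ν) : a * μ G ≤ ∫⁻ y, ∫⁻ x, F x y ∂μ ∂ν :=
  calc a * μ G ≤ a * μ {x | a ≤ ∫⁻ y, F x y ∂ν} := by
        gcongr
        exact h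
    _ ≤ ∫⁻ x, ∫⁻ y, F x y ∂ν ∂μ :=
        mul_meas_ge_le_lintegral₀ hF.lintegral_prod_right'.aemeasurable _
    _ = ∫⁻ y, ∫⁻ x, F x y ∂μ ∂ν := lintegral_lintegral_swap hF.aemeasurable

variable {d k : ℕ} {μ : Measure (Pt d)} [IsProbabilityMeasure μ] {s C : ℝ}
  {S : Finset (Fin (d + 1))}

lemma volume_closedBall_pi_mul_volume_closedBall (A : Fin d → Pt d) (z : Pt d) {ε : ℝ}
    (hε : 0 ≤ ε) : volume (closedBall A ε) * volume (closedBall z ε) =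
      ENNReal.ofReal (ε ^ d) ^ (d + 1) * volume (closedBall (0 : Pt d) 1) ^ (d + 1) := by
  rw [volume_pi_closedBall A hε]
  simp only [Measure.addHaar_closedBall' _ _ hε, finrank_euclideanSpace, Fintype.card_fin,
    Finset.prod_const, Finset.card_univ]
  rw [← pow_succ, mul_pow]

variable {m : Fin (d + 1) → Measure (Pt d)} [∀ i, IsFiniteMeasure (m i)]
  {K : Set (Fin (d + 1) → Pt d)}

lemma volume_mul_measure_le_lintegral_prod_matchIndicator
    {G : Set ((Fin (d + 1) → Pt d) × (Fin (d + 1) → Pt d))} {N : Set (Fin d → Pt d)} {r ε : ℝ}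
    (hε : 0 ≤ ε) (h : ∀ p ∈ G, ∃ A₀ z₀, ∀ A ∈ closedBall A₀ ε, ∀ z ∈ closedBall z₀ ε,
      A ∈ N ∧ ∀ i, ‖p.1 i - rowAction A (p.2 i) - z‖ ≤ r) :
    ENNReal.ofReal (ε ^ d) ^ (d + 1) * volume (closedBall (0 : Pt d) 1) ^ (d + 1) *
        ((Measure.pi m).prod (Measure.pi m)) G ≤
      ∫⁻ q, ∫⁻ p, ∏ i, matchIndicator r q.1 q.2 (p.1 i, p.2 i)
        ∂(Measure.pi m).prod (Measure.pi m) ∂(volume.restrict N).prod volume := by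
  refine mul_measure_le_lintegral_lintegral (by fun_prop) fun p hp => ?_
  obtain ⟨A₀, z₀, h⟩ := h p hp
  rw [← volume_closedBall_pi_mul_volume_closedBall A₀ z₀ hε]
  exact le_lintegral_prod_matchIndicator h

lemma exists_measure_dist_simMap_le [NeZero d] (hk : 1 ≤ k) (hsd : s ≤ d)
    (hks : d * k < s * (k + 1)) (hC : 0 ≤ C) (hμ : HasGaussianPotential μ s C)
    (hS : S.card = k + 1) (hmμ : ∀ i ∈ S, m i ≤ μ) (hm : ∀ i ∉ S, m i ≤ volume)
    (hK : IsCompact K) (hK' : ∀ x ∈ K, Nondeg d d x) :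
    ∃ C' : ℝ≥0∞, C' ≠ ∞ ∧ ∀ᶠ j : ℕ in Filter.atTop, ((Measure.pi m).prod (Measure.pi m))
      ({p | dist (simMap d d p.1) (simMap d d p.2) ≤ (1 / 2) ^ j} ∩ K ×ˢ K) ≤
        C' * ENNReal.ofReal (((1 / 2) ^ j) ^ Fintype.card (PairIdx' d)) := by
  obtain ⟨ρ₀, ρ₁, r, ε₀, hρ₀, hr, hε₀, h_geom⟩ := exists_closedBall_subset_approxSimilarities hK hK'
  obtain ⟨B, hB, h_smooth⟩ := exists_lintegral_enorm_gaussSmoothing_differenceLaw_pow_le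
    hk hsd hks hC hμ hμ hρ₀ ρ₁
  obtain ⟨c, hc, h_match⟩ := exists_lintegral_prod_matchIndicator_le hmμ hm hr.le
  set D := Fintype.card (PairIdx' d)
  set v := volume (closedBall (0 : Pt d) 1)
  have hv : v ^ (d + 1) ≠ 0 := pow_ne_zero _ (measure_closedBall_pos _ _ one_pos).ne'
  have hv' : v ^ (d + 1) ≠ ∞ := ENNReal.pow_ne_top measure_closedBall_lt_top.ne
  refine ⟨c * B * ENNReal.ofReal (r ^ D) / v ^ (d + 1), by finiteness, ?_⟩
  have h_lim := tendsto_pow_atTop_nhds_zero_of_lt_one (r := (1 / 2 : ℝ)) (by norm_num) (by norm_num)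
  have h_lim' : Filter.Tendsto (fun j : ℕ => 2 * (d ^ 2 * (r * (1 / 2 : ℝ) ^ j))) Filter.atTop
      (𝓝 0) := by simpa using ((h_lim.const_mul r).const_mul (d ^ 2 : ℝ)).const_mul 2
  filter_upwards [h_lim.eventually_le_const hε₀, h_lim'.eventually_le_const hρ₀] with j hj hj'
  set ε : ℝ := (1 / 2) ^ j
  have hε : 0 < ε := by positivity
  have hε_sq : ε ^ 2 = (1 / 2) ^ (2 * j) := by rw [mul_comm, pow_mul]
  set N := nearConformal (Fin d) (Pt d) ρ₀ ρ₁ (r * ε)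
  set e := ENNReal.ofReal (ε ^ d) ^ (d + 1)
  have he : e ≠ 0 := pow_ne_zero _ (ENNReal.ofReal_pos.2 (by positivity)).ne'
  have h_scaled : e * v ^ (d + 1) * ((Measure.pi m).prod (Measure.pi m))
      ({p | dist (simMap d d p.1) (simMap d d p.2) ≤ ε} ∩ K ×ˢ K) ≤
        c * e * (B * ENNReal.ofReal (r * ε) ^ D) := by
    calc _ ≤ ∫⁻ q, ∫⁻ p, ∏ i, matchIndicator (r * ε) q.1 q.2 (p.1 i, p.2 i)
          ∂(Measure.pi m).prod (Measure.pi m) ∂(volume.restrict N).prod volume := by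
          exact volume_mul_measure_le_lintegral_prod_matchIndicator hε.le fun p hp =>
            h_geom p.1 hp.2.1 p.2 hp.2.2 ε hj hp.1
      _ ≤ ∫⁻ q, c * e * ‖gaussSmoothing (differenceLaw μ μ q.1) (ε ^ 2) q.2‖ₑ ^ (k + 1)
          ∂(volume.restrict N).prod volume := lintegral_mono fun q => hS ▸ h_match ε hε q.1 q.2
      _ = c * e * ∫⁻ A in N, ∫⁻ z, ‖gaussSmoothing (differenceLaw μ μ A) (ε ^ 2) z‖ₑ ^ (k + 1) := by
          rw [lintegral_const_mul' _ _ (by finiteness), lintegral_prod _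
            ((measurable_gaussSmoothing_differenceLaw μ μ _).enorm.pow_const _).aemeasurable]
      _ ≤ c * e * (B * ENNReal.ofReal (r * ε) ^ D) := by
          rw [hε_sq]
          gcongr
          exact h_smooth hj' _
  refine (ENNReal.mul_le_mul_iff_right (mul_ne_zero he hv) (by finiteness)).1
    (h_scaled.trans_eq ?_)
  rw [← ENNReal.ofReal_pow (by positivity), mul_pow, ENNReal.ofReal_mul (by positivity)]
  calc _ = e * (c * B * ENNReal.ofReal (r ^ D)) * ENNReal.ofReal (ε ^ D) := by ring
    _ = e * (v ^ (d + 1) * (c * B * ENNReal.ofReal (r ^ D) / v ^ (d + 1))) *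
          ENNReal.ofReal (ε ^ D) := by rw [ENNReal.mul_div_cancel hv hv']
    _ = _ := by ring

lemma measurable_simMap (d k : ℕ) : Measurable (simMap d k) :=
  measurable_pi_lambda _ fun _ => Measurable.div (by fun_prop) (by fun_prop)

lemma continuousOn_simMap [NeZero k] : ContinuousOn (simMap d k) {x | Nondeg d k x} :=
  continuousOn_pi.2 fun _ => ContinuousOn.div (by fun_prop) (by fun_prop) fun _ hx =>
    (Nondeg.dist_pos hx).ne'

lemma volume_simMap_image_pos [NeZero d] (hk : 1 ≤ k) (hsd : s ≤ d)
    (hks : d * k < s * (k + 1)) (hC : 0 ≤ C) (hμ : HasGaussianPotential μ s C)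
    (hS : S.card = k + 1) (hmμ : ∀ i ∈ S, m i ≤ μ) (hm : ∀ i ∉ S, m i ≤ volume)
    (hK : IsCompact K) (hK' : ∀ x ∈ K, Nondeg d d x) (hmK : Measure.pi m Kᶜ = 0)
    (hm₀ : Measure.pi m ≠ 0) : 0 < volume (simMap d d '' K) := by
  obtain ⟨C', hC', h_le⟩ := exists_measure_dist_simMap_le hk hsd hks hC hμ hS hmμ hm hK hK'
  have h_meas := measurable_simMap d d
  have h_compact := hK.image_of_continuousOn (continuousOn_simMap.mono hK')
  have h_null : ((Measure.pi m).prod (Measure.pi m)) (K ×ˢ K)ᶜ = 0 := by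
    rw [compl_prod_eq_union]
    exact measure_union_null (by simp [hmK]) (by simp [hmK])
  have h_scale : ∀ j : ℕ, 2 * (1 / 2 : ℝ) ^ (j + 1) = (1 / 2) ^ j := fun j => by ring
  refine volume_pos_of_eventually_measure_dist_le h_compact
    (ν := (Measure.pi m).map (simMap d d)) ?_ ?_ hC' (δ := fun j => (1 / 2) ^ (j + 1))
    (fun j => by positivity) ?_ ?_
  · rw [Measure.map_apply h_meas h_compact.measurableSet.compl]
    exact measure_mono_null (fun x hx hxK => hx (mem_image_of_mem _ hxK)) hmK
  · exact (Measure.map_ne_zero_iff h_meas.aemeasurable).2 hm₀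
  · exact (Filter.tendsto_add_atTop_iff_nat 1).2
      (tendsto_pow_atTop_nhds_zero_of_lt_one (by norm_num) (by norm_num))
  · filter_upwards [h_le] with j hj
    rw [h_scale, Measure.map_prod_map _ _ h_meas h_meas, Measure.map_apply
      (h_meas.prodMap h_meas) (isClosed_le (by fun_prop) (by fun_prop)).measurableSet,
      ← measure_inter_conull h_null]
    exact hj

lemma volume_simMap_image_pi_pos [NeZero d] (hk : 1 ≤ k) (hsd : s ≤ d)
    (hks : d * k < s * (k + 1)) (hC : 0 ≤ C) (hμ : HasGaussianPotential μ s C)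
    (hS : S.card = k + 1) {L : Fin (d + 1) → Set (Pt d)} (hL : ∀ i, IsCompact (L i))
    (hL' : ∀ x ∈ univ.pi L, Nondeg d d x) (hμL : ∀ i ∈ S, μ (L i) ≠ 0)
    (hvolL : ∀ i ∉ S, volume (L i) ≠ 0) : 0 < volume (simMap d d '' univ.pi L) := by
  classical
  set base : Fin (d + 1) → Measure (Pt d) := fun i => if i ∈ S then μ else volume
  have h_base : ∀ i, base i (L i) ≠ 0 ∧ base i (L i) < ∞ := fun i => by
    simp only [base]
    split_ifs with hi
    · exact ⟨hμL i hi, measure_lt_top _ _⟩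
    · exact ⟨hvolL i hi, (hL i).measure_lt_top⟩
  have : ∀ i, IsFiniteMeasure ((base i).restrict (L i)) := fun i =>
    isFiniteMeasure_restrict.2 (h_base i).2.ne
  refine volume_simMap_image_pos hk hsd hks hC hμ hS (m := fun i => (base i).restrict (L i))
    (fun i hi => ?_) (fun i hi => ?_) (isCompact_univ_pi hL) hL' ?_ ?_
  · simpa only [base, if_pos hi] using Measure.restrict_le_self
  · simpa only [base, if_neg hi] using Measure.restrict_le_self
  · rw [measure_compl (isCompact_univ_pi hL).measurableSet (measure_ne_top _ _), Measure.pi_pi,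
      Measure.pi_univ]
    simp only [Measure.restrict_apply_self, Measure.restrict_apply_univ, tsub_self]
  · rw [← Measure.measure_univ_ne_zero, Measure.pi_univ]
    exact Finset.prod_ne_zero_iff.2 fun i _ => by simpa using (h_base i).1

end SimilarPairs

section Selection

lemma IsFrostman.measure_le_ofReal_ediam_rpow {X : Type*} [PseudoMetricSpace X]
    [MeasurableSpace X] {μ : Measure X} {s C : ℝ} (hs : 0 < s) (hμ : IsFrostman μ s C) {T : Set X}
    (hT : ediam T ≠ ∞) : μ T ≤ ENNReal.ofReal (C * (ediam T).toReal ^ s) := by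
  rcases T.eq_empty_or_nonempty with rfl | ⟨x, hx⟩
  · simp
  have h_cont : Continuous fun r : ℝ => ENNReal.ofReal (C * r ^ s) :=
    ENNReal.continuous_ofReal.comp (continuous_const.mul (Real.continuous_rpow_const hs.le))
  refine ge_of_tendsto (h_cont.continuousAt.tendsto.mono_left nhdsWithin_le_nhds)
    (Filter.eventually_of_mem (self_mem_nhdsWithin (s := Ioi (ediam T).toReal)) fun r hr => ?_)
  refine (measure_mono fun y hy => ?_).trans (hμ x r (ENNReal.toReal_nonneg.trans_lt hr))
  rw [mem_ball, dist_edist]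
  exact (ENNReal.toReal_mono hT (edist_le_ediam_of_mem hy hx)).trans_lt hr

lemma IsFrostman.measure_eq_zero_of_dimH_lt {X : Type*} [MetricSpace X] [MeasurableSpace X]
    [BorelSpace X] {μ : Measure X} {s C : ℝ} (hs : 0 < s) (hC : 0 < C) (hμ : IsFrostman μ s C)
    {T : Set X} (hT : dimH T < ENNReal.ofReal s) : μ T = 0 := by
  have h_le : ENNReal.ofReal C⁻¹ • μ ≤ Measure.hausdorffMeasure s := by
    refine Measure.le_hausdorffMeasure s _ 1 one_pos fun T hT => ?_
    have hT' : ediam T ≠ ∞ := (hT.trans_lt ENNReal.one_lt_top).ne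
    calc ENNReal.ofReal C⁻¹ * μ T
        ≤ ENNReal.ofReal C⁻¹ * ENNReal.ofReal (C * (ediam T).toReal ^ s) := by
          gcongr
          exact hμ.measure_le_ofReal_ediam_rpow hs hT'
      _ = ediam T ^ s := by
          rw [← ENNReal.ofReal_mul (by positivity), inv_mul_cancel_left₀ hC.ne',
            ← ENNReal.ofReal_rpow_of_nonneg ENNReal.toReal_nonneg hs.le, ENNReal.ofReal_toReal hT']
  have h_zero : Measure.hausdorffMeasure s T = 0 := by
    simpa only [Real.coe_toNNReal s hs.le] using hausdorffMeasure_of_dimH_lt (d := s.toNNReal) hT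
  have h := nonpos_iff_eq_zero.1 ((h_le T).trans_eq h_zero)
  rw [Measure.smul_apply, smul_eq_mul, mul_eq_zero] at h
  exact h.resolve_left (ENNReal.ofReal_pos.2 (inv_pos.2 hC)).ne'

lemma dimH_setOf_sub_mem_le {V : Type*} [NormedAddCommGroup V] [NormedSpace ℝ V]
    (W : Submodule ℝ V) [FiniteDimensional ℝ W] (x : V) :
    dimH {y | y - x ∈ W} ≤ Module.finrank ℝ W :=
  calc dimH {y | y - x ∈ W} ≤ dimH (range fun w : W => (w : V) + x) :=
        dimH_mono fun y hy => ⟨⟨y - x, hy⟩, sub_add_cancel y x⟩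
    _ ≤ Module.finrank ℝ W := (W.subtypeL.contDiff.add contDiff_const).dimH_range_le

lemma exists_linearIndependent_sub {K V : Type*} [DivisionRing K] [AddCommGroup V] [Module K V]
    {T : ℕ → Set V} (n : ℕ) (hT₀ : (T 0).Nonempty)
    (hT : ∀ j < n, ∀ (x : V) (W : Submodule K V), Module.finrank K W = j →
      ∃ y ∈ T (j + 1), y - x ∉ W) :
    ∃ x : Fin (n + 1) → V, LinearIndependent K (fun i : Fin n => x i.succ - x 0) ∧
      ∀ i : Fin (n + 1), x i ∈ T i := by
  induction n with
  | zero =>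
    obtain ⟨x, hx⟩ := hT₀
    exact ⟨fun _ => x, linearIndependent_empty_type, fun i => by rwa [Fin.val_eq_zero]⟩
  | succ n ih =>
    obtain ⟨x, hx, hxT⟩ := ih fun j hj => hT j (hj.trans n.lt_succ_self)
    obtain ⟨y, hyT, hy⟩ := hT n n.lt_succ_self (x 0) _
      ((finrank_span_eq_card hx).trans (Fintype.card_fin n))
    refine ⟨Fin.snoc (α := fun _ => V) x y, ?_, Fin.lastCases ?_ fun i => ?_⟩
    · convert linearIndependent_finSnoc.2 ⟨hx, hy⟩ with i
      rw [show (0 : Fin (n + 2)) = Fin.castSucc 0 from rfl]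
      cases i using Fin.lastCases with
      | last => simp only [Fin.succ_last, Fin.snoc_last, Fin.snoc_castSucc]
      | cast i => simp only [Fin.succ_castSucc, Fin.snoc_castSucc]
    · rwa [Fin.snoc_last, Fin.val_last]
    · rw [Fin.snoc_castSucc, Fin.val_castSucc]
      exact hxT i

variable {d k : ℕ} {μ : Measure (Pt d)} {s C : ℝ}

lemma IsFrostman.exists_nondeg_forall_mem_support [NeZero μ] (hs : 0 < s) (hC : 0 < C)
    (hμ : IsFrostman μ s C) (hks : (k : ℝ) < s + 1) :
    ∃ x : Fin (d + 1) → Pt d, Nondeg d d x ∧ ∀ i : Fin (d + 1), i.val ≤ k → x i ∈ μ.support := by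
  suffices h_step : ∀ j < d, ∀ (x : Pt d) (W : Submodule ℝ (Pt d)), Module.finrank ℝ W = j →
      ∃ y ∈ if j + 1 ≤ k then μ.support else univ, y - x ∉ W by
    obtain ⟨x, hx, hxT⟩ := exists_linearIndependent_sub
      (T := fun i => if i ≤ k then μ.support else univ) d
      (by simpa using Measure.nonempty_support (NeZero.ne μ)) h_step
    exact ⟨x, hx, fun i hi => by simpa only [if_pos hi] using hxT i⟩
  intro j hj x W hW
  split_ifs with hjk
  · have hjs : (j : ℝ) < s := by
      have : (j + 1 : ℝ) ≤ k := by exact_mod_cast hjk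
      linarith
    have h_null : μ {y | y - x ∈ W} = 0 := by
      refine hμ.measure_eq_zero_of_dimH_lt hs hC ((dimH_setOf_sub_mem_le W x).trans_lt ?_)
      rwa [hW, ← ENNReal.ofReal_natCast, ENNReal.ofReal_lt_ofReal_iff hs]
    have h_pos : 0 < μ {y | y - x ∈ W}ᶜ := by
      rw [measure_compl₀ (NullMeasurableSet.of_null h_null) (by simp [h_null]), h_null, tsub_zero]
      exact Measure.measure_univ_pos.2 (NeZero.ne μ)
    obtain ⟨y, hy, hyμ⟩ := Measure.nonempty_inter_support_of_pos h_pos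
    exact ⟨y, hyμ, hy⟩
  · have hW' : W ≠ ⊤ := fun h => by
      rw [h, finrank_top, finrank_euclideanSpace_fin] at hW
      exact hj.ne' hW
    obtain ⟨w, hw⟩ := not_forall.1 (mt Submodule.eq_top_iff'.2 hW')
    exact ⟨x + w, mem_univ _, by rwa [add_sub_cancel_left]⟩

lemma Nondeg.exists_closedBall_pi {x : Fin (d + 1) → Pt d} (hx : Nondeg d d x) :
    ∃ η > 0, ∀ y ∈ univ.pi fun i => closedBall (x i) η, Nondeg d d y := by
  have h_open : IsOpen {y : Fin (d + 1) → Pt d | Nondeg d d y} := by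
    simp only [nondeg_iff_det_edgeMatrix_ne_zero]
    exact isOpen_ne_fun continuous_edgeMatrix.matrix_det continuous_const
  obtain ⟨η, hη, h⟩ := nhds_basis_closedBall.mem_iff.1 (h_open.mem_nhds hx)
  rw [closedBall_pi x hη.le] at h
  exact ⟨η, hη, h⟩

end Selection

section Projection

lemma volume_image_comp_pos {ι κ : Type*} [Fintype ι] [Fintype κ] {f : κ → ι}
    (hf : Function.Injective f) {Z : Set (ι → ℝ)} (hZ : 0 < volume Z) :
    0 < volume ((· ∘ f) '' Z) := by
  set L := LinearMap.funLeft ℝ ℝ f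
  obtain ⟨c, -, hc⟩ := L.exists_map_addHaar_eq_smul_addHaar volume volume
    (LinearMap.funLeft_surjective_of_injective _ _ _ hf)
  refine pos_iff_ne_zero.2 fun h => hZ.ne' ?_
  have h_null : volume.map L (L '' Z) = 0 := by
    rw [hc, Measure.smul_apply]
    exact (congrArg _ h).trans (smul_zero c)
  exact measure_mono_null (subset_preimage_image L Z) (Measure.preimage_null_of_map_null
    L.continuous_of_finiteDimensional.aemeasurable h_null)

variable {d k : ℕ}

/-- The pair of indices `i < j` of a `(k+1)`-tuple, seen as a pair of indices of a `(d+1)`-tuple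
whose first `k+1` entries are that tuple. -/
def pairIdxCastLE (h : k ≤ d) (p : PairIdx' k) : PairIdx' d :=
  ⟨(p.1.1.castLE (by omega), p.1.2.castLE (by omega)), p.2.1, fun hp => p.2.2 <| by
    have : p.1.1.val < p.1.2.val := p.2.1
    simp only [Prod.ext_iff, Fin.ext_iff, Fin.val_castLE, Fin.val_zero, Fin.val_one'] at hp ⊢
    rwa [Nat.mod_eq_of_lt (by omega)] at hp ⊢⟩

lemma pairIdxCastLE_injective (h : k ≤ d) : Function.Injective (pairIdxCastLE h) := by
  intro p q hpq
  simp only [pairIdxCastLE, Subtype.ext_iff, Prod.ext_iff, Fin.castLE_inj] at hpq ⊢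
  exact hpq

lemma simMap_comp_pairIdxCastLE_mem_Sconf (hk : 1 ≤ k) (hkd : k ≤ d) {E : Set (Pt d)}
    {x : Fin (d + 1) → Pt d} (hx : Nondeg d d x) (hxE : ∀ i : Fin (d + 1), i.val ≤ k → x i ∈ E) :
    simMap d d x ∘ pairIdxCastLE hkd ∈ Sconf d k E := by
  have h_one : Fin.castLE (Nat.succ_le_succ hkd) 1 = 1 := by
    rw [Fin.ext_iff, Fin.val_castLE, Fin.val_one', Fin.val_one', Nat.mod_eq_of_lt (by omega),
      Nat.mod_eq_of_lt (by omega)]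
  refine ⟨x ∘ Fin.castLE (Nat.succ_le_succ hkd), ⟨fun i => hxE _ (Nat.lt_succ_iff.1 i.2),
    LinearIndependent.comp hx (Fin.castLE hkd) (Fin.castLE_injective hkd)⟩, funext fun p => ?_⟩
  simp only [simMap, Function.comp_apply, h_one]
  rfl

end Projection

section MainTheorem

variable {d k : ℕ} {E : Set (Pt d)} {μ : Measure (Pt d)} [IsProbabilityMeasure μ] {s C : ℝ}

lemma volume_Sconf_pos_of_isFrostman (hk : 1 ≤ k) (hkd : k ≤ d) (hE : IsCompact E)
    (hμE : μ Eᶜ = 0) (hC : 0 < C) (hμ : IsFrostman μ s C) (hsd : s ≤ d)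
    (hks : d * k < s * (k + 1)) : 0 < volume (Sconf d k E) := by
  have : NeZero d := ⟨by omega⟩
  have hkd' : (k : ℝ) ≤ d := Nat.cast_le.2 hkd
  have hs : 0 < s := pos_of_mul_pos_left (lt_of_le_of_lt (by positivity) hks) (by positivity)
  obtain ⟨x, hx, hxμ⟩ := hμ.exists_nondeg_forall_mem_support (k := k) hs hC (by nlinarith)
  obtain ⟨η, hη, hη'⟩ := hx.exists_closedBall_pi
  set L : Fin (d + 1) → Set (Pt d) := fun i =>
    closedBall (x i) η ∩ if i.val ≤ k then E else univ
  have hL : ∀ y ∈ univ.pi L, Nondeg d d y := fun y hy => hη' y fun i hi => (hy i hi).1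
  have hL' : ∀ i, IsCompact (L i) := fun i => (isCompact_closedBall _ _).inter_right <| by
    split_ifs
    exacts [hE.isClosed, isClosed_univ]
  have h_card : ({i : Fin (d + 1) | i.val ≤ k} : Finset _).card = k + 1 := by
    simp only [← Nat.lt_succ_iff, Fin.card_filter_val_lt]
    omega
  have h_pos : 0 < volume (simMap d d '' univ.pi L) := by
    refine volume_simMap_image_pi_pos hk hsd hks (by positivity) (hμ.hasGaussianPotential hs hC.le)
      h_card hL' hL (fun i hi => ?_) fun i hi => ?_
    · have hi : i.val ≤ k := by simpa using hi
      simp only [L, if_pos hi, measure_inter_conull hμE]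
      exact ((Measure.mem_support_iff_forall _).1 (hxμ i hi) _ (closedBall_mem_nhds _ hη)).ne'
    · have hi : ¬i.val ≤ k := by simpa using hi
      simp only [L, if_neg hi, inter_univ]
      exact (measure_closedBall_pos _ _ hη).ne'
  refine (volume_image_comp_pos (pairIdxCastLE_injective hkd) h_pos).trans_le (measure_mono ?_)
  rintro _ ⟨_, ⟨y, hy, rfl⟩, rfl⟩
  refine simMap_comp_pairIdxCastLE_mem_Sconf hk hkd (hL y hy) fun i hi => ?_
  simpa only [if_pos hi] using (hy i (mem_univ i)).2

lemma le_finrank_of_ofReal_lt_dimH {V : Type*} [NormedAddCommGroup V] [NormedSpace ℝ V]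
    [FiniteDimensional ℝ V] {E : Set V} (h : ENNReal.ofReal s < dimH E) :
    s ≤ Module.finrank ℝ V := by
  have h' := h.le.trans ((dimH_mono (subset_univ E)).trans_eq (Real.dimH_univ_eq_finrank V))
  rwa [← ENNReal.ofReal_natCast, ENNReal.ofReal_le_ofReal_iff (Nat.cast_nonneg _)] at h'

lemma natCast_div_lt_ofReal_iff {m n : ℕ} (hn : n ≠ 0) (hs : 0 ≤ s) :
    (m : ℝ≥0∞) / n < ENNReal.ofReal s ↔ (m : ℝ) < s * n := by
  rw [ENNReal.div_lt_iff (.inl (Nat.cast_ne_zero.2 hn)) (.inl (ENNReal.natCast_ne_top n)),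
    ← ENNReal.ofReal_natCast, ← ENNReal.ofReal_natCast, ← ENNReal.ofReal_mul hs,
    ENNReal.ofReal_lt_ofReal_iff_of_nonneg (Nat.cast_nonneg m)]

end MainTheorem

theorem stmt4 (d k : ℕ) (hd : 2 ≤ d) (hk : 2 ≤ k) (hkd : k ≤ d)
    (E : Set (Pt d)) (hE : IsCompact E)
    (hdim : ((d * k : ℕ) : ℝ≥0∞) / ((k + 1 : ℕ) : ℝ≥0∞) < dimH E) :
    0 < volume (Sconf d k E) := by
  obtain ⟨s, hs, hks, hsE⟩ := ENNReal.lt_iff_exists_real_btwn.1 hdim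
  rw [natCast_div_lt_ofReal_iff k.succ_ne_zero hs] at hks
  push_cast at hks
  have hs_pos : 0 < s := pos_of_mul_pos_left (lt_of_le_of_lt (by positivity) hks) (by positivity)
  have hsd : s ≤ d := by simpa using le_finrank_of_ofReal_lt_dimH hsE
  obtain ⟨μ, C, _, hμE, hC, hμ⟩ := exists_isFrostman hE hs_pos hsE
  exact volume_Sconf_pos_of_isFrostman (by omega) hkd hE hμE hC hμ hsd hks
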